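/- Fix i with μ_i > γ^{-1/2} and suppose μ_i ≠ μ_j for all j ≠ i. Let (z_{n,i}, x_{n,i}) be random sequences with T_n(z_{n,i})·x_{n,i} = 0, ‖x_{n,i}‖₂ = 1, max_j (x_{n,i})_j = max_j |(x_{n,i})_j|, and z_{n,i} → μ̄_i almost surely. Then x_{n,i} → e_i almost surely, where e_i is the i-th standard basis vector of ℝ^k. -/

import Mathlib

/-!
Put `A = D + n^{-1/2} E₁₁`. Woodbury's identity applied to `S₂₂ - z = Λ - z + n⁻¹ E₁₂ᵀ E₁₂` gives
`T(z) = (A - Q₃)ᵀ (1 + Q₁)⁻¹ (A - Q₃) + n⁻¹ E₃₁ᵀ E₃₁ - z - z Q₂`, where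
`Q₁ = n⁻¹ E₁₂ (Λ - z)⁻¹ E₁₂ᵀ`, `Q₂ = n⁻¹ E₂₁ᵀ (Λ - z)⁻¹ E₂₁` and
`Q₃ = n⁻¹ E₁₂ (Λ - z)⁻¹ Λ^{1/2} E₂₁` are `k × k` blocks of weighted Gram matrices of the rows of
`E₁₂` and the columns of `E₂₁`. Write `m = m(μ̄)`. Almost surely, for `z = z_n → μ̄`, one has
`Q₁, Q₂ → γ⁻¹ m`, `Q₃ → 0`, `n⁻¹ E₃₁ᵀ E₃₁ → 1 - γ⁻¹` and `A → D`. The Marchenko–Pastur equation for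
`m` and `m = -(μ_i + γ⁻¹)⁻¹` turn the limit of `T_n(z_n)` into the diagonal matrix with entries
`(μ_i + γ⁻¹) (μ_j / μ_i - 1)`, which vanish only for `j = i`; unit vectors in the kernel of
`T_n(z_n)`, with the given choice of sign, therefore converge to `e_i`.

The limits of the Gram matrices rest on two facts about the Wishart eigenvalues `λ_α`, both obtained
from exponential tail bounds and the Borel–Cantelli lemma.

* For every `B > b_γ`, eventually all `λ_α` are at most `B`. Following Silverstein, a Gaussian
  matrix is bidiagonalised by rotations that peel off one row or column at a time; each peeled
  vector is again Gaussian, so only chi-square tails are needed.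
* Averages of continuous functions of the `λ_α` converge to Marchenko–Pastur integrals. A
  leave-one-out argument shows that the resolvent trace at `-t < 0` satisfies the quadratic
  Marchenko–Pastur equation up to a small error; the Stieltjes transform of the density solves the
  same equation, which has a single nonnegative root; and the resolvent functions span a dense
  subspace of `C[0, B]`.

Given the `λ_α`, which are independent of the `E`-blocks, the entries of the Gram matrices are
weighted sums of iid sub-exponential variables with bounded weights, and concentrate.
-/

open MeasureTheory ProbabilityTheory Filter Matrix Topology

noncomputable section

instance matrixMeasurableSpace {m n : Type*} : MeasurableSpace (Matrix m n ℝ) :=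
  MeasurableSpace.pi

/-- Convergence in distribution (weak convergence of laws) of a sequence of random elements. -/
def TendstoInDist {Ω E : Type*} [MeasurableSpace Ω] [MeasurableSpace E] [TopologicalSpace E]
    (P : Measure Ω) (X : ℕ → Ω → E) (ν : Measure E) : Prop :=
  ∀ f : BoundedContinuousFunction E ℝ,
    Tendsto (fun n => ∫ ω, f (X n ω) ∂P) atTop (𝓝 (∫ x, f x ∂ν))

/-- Convergence to zero in probability. -/
def TendstoInProbZero {Ω : Type*} [MeasurableSpace Ω] (P : Measure Ω) (X : ℕ → Ω → ℝ) : Prop :=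
  ∀ ε : ℝ, 0 < ε → Tendsto (fun n => P {ω | ε ≤ |X n ω|}) atTop (𝓝 0)

/-- `ν` is a centered multivariate Gaussian measure with covariance function `C`
(characterized through one-dimensional projections). -/
def IsCenteredGaussianCov {ι : Type*} [Fintype ι] (ν : Measure (ι → ℝ)) (C : ι → ι → ℝ) : Prop :=
  ∀ a : ι → ℝ,
    Measure.map (fun x => ∑ i, a i * x i) ν
      = gaussianReal 0 (Real.toNNReal (∑ i, ∑ j, a i * C i j * a j))

/-- The coordinates of `X` are iid `N(0, v)` random variables. -/
def IIDGaussian {Ω ι : Type*} [MeasurableSpace Ω] [Fintype ι] (P : Measure Ω)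
    (X : Ω → ι → ℝ) (v : NNReal) : Prop :=
  Measure.map X P = Measure.pi fun _ : ι => gaussianReal 0 v

/-- Entries of a matrix, as a function on pairs of indices. -/
def matEntries {m n : Type*} (A : Matrix m n ℝ) : m × n → ℝ := fun q => A q.1 q.2

/-- The eigenvalues of a (Hermitian) real matrix, sorted in decreasing order. -/
def eigsDesc {p : ℕ} (A : Matrix (Fin p) (Fin p) ℝ) : List ℝ :=
  if h : A.IsHermitian then (List.ofFn h.eigenvalues).insertionSort (· ≥ ·) else []

/-- The `i`-th largest eigenvalue of a (Hermitian) real matrix (`i` is 0-based). -/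
def ithEigDesc {p : ℕ} (A : Matrix (Fin p) (Fin p) ℝ) (i : ℕ) : ℝ :=
  (eigsDesc A).getD i 0

/-- Lower edge `a_γ = (1 - γ^{-1/2})²` of the Marchenko–Pastur law. -/
def aGamma (γ : ℝ) : ℝ := (1 - 1 / Real.sqrt γ) ^ 2

/-- Upper edge `b_γ = (1 + γ^{-1/2})²` of the Marchenko–Pastur law. -/
def bGamma (γ : ℝ) : ℝ := (1 + 1 / Real.sqrt γ) ^ 2

/-- Density of the Marchenko–Pastur law with aspect ratio `γ`. -/
def mpDensity (γ t : ℝ) : ℝ :=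
  if t ∈ Set.Icc (aGamma γ) (bGamma γ) then
    γ * Real.sqrt ((bGamma γ - t) * (t - aGamma γ)) / (2 * Real.pi * t)
  else 0

/-- The Marchenko–Pastur law with aspect ratio `γ`. -/
def mpMeasure (γ : ℝ) : Measure ℝ :=
  volume.withDensity fun t => ENNReal.ofReal (mpDensity γ t)

/-- Stieltjes transform `m(z) = ∫ (t - z)⁻¹ dFMP_γ(t)` of the Marchenko–Pastur law. -/
def mpStieltjes (γ z : ℝ) : ℝ := ∫ t, (t - z)⁻¹ ∂(mpMeasure γ)

/-- The spiked low-rank-plus-noise model `X_n = √n U_n D_n V_nᵀ + E_n`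
(Assumptions A1–A3, with `s = σ²` the noise variance and without the CLT
assumption on the factor strengths, which is stated separately when needed). -/
structure SpikedModel (k : ℕ) (γ s : ℝ) (p : ℕ → ℕ) (Ω : Type*) [MeasurableSpace Ω]
    (P : Measure Ω) (μ : Fin k → ℝ) where
  U : ∀ n : ℕ, Ω → Matrix (Fin n) (Fin k) ℝ
  V : ∀ n : ℕ, Ω → Matrix (Fin (p n)) (Fin k) ℝ
  d : ∀ n : ℕ, Ω → Fin k → ℝ
  E : ∀ n : ℕ, Ω → Matrix (Fin n) (Fin (p n)) ℝ
  /- A1 -/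
  orthU : ∀ n ω, (U n ω)ᵀ * U n ω = 1
  orthV : ∀ n ω, (V n ω)ᵀ * V n ω = 1
  aspect : Tendsto (fun n : ℕ => Real.sqrt n * ((n : ℝ) / (p n) - γ)) atTop (𝓝 0)
  /- A2 (except for the CLT on the factor strengths) -/
  dpos : ∀ n ω i, 0 < d n ω i
  dstrictanti : ∀ n ω, StrictAnti (d n ω)
  dconv : ∀ᵐ ω ∂P, ∀ i, Tendsto (fun n => d n ω i) atTop (𝓝 (Real.sqrt (μ i)))
  /- A3 -/
  Egauss : ∀ n, IIDGaussian P (fun ω => matEntries (E n ω)) (Real.toNNReal s)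
  Eindep : ∀ n, IndepFun (E n) (fun ω => (U n ω, d n ω, V n ω)) P

/-- The observed data matrix `X_n = √n U_n D_n V_nᵀ + E_n`. -/
def SpikedModel.X {k : ℕ} {γ s : ℝ} {p : ℕ → ℕ} {Ω : Type*} [MeasurableSpace Ω]
    {P : Measure Ω} {μ : Fin k → ℝ} (M : SpikedModel k γ s p Ω P μ) (n : ℕ) (ω : Ω) :
    Matrix (Fin n) (Fin (p n)) ℝ :=
  Real.sqrt n • (M.U n ω * Matrix.diagonal (M.d n ω) * (M.V n ω)ᵀ) + M.E n ω

/-- `√n Uh (diagonal √μh) Vhᵀ` is the SVD of `X` truncated to the `k` largest terms: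
the `μh i` are the `k` largest eigenvalues of `(1/n) Xᵀ X` in decreasing order, the columns
of `Vh` are corresponding orthonormal eigenvectors (right singular vectors), and the columns
of `Uh` are corresponding orthonormal left singular vectors. -/
def IsTruncatedSVD {n q k : ℕ} (X : Matrix (Fin n) (Fin q) ℝ)
    (Uh : Matrix (Fin n) (Fin k) ℝ) (μh : Fin k → ℝ) (Vh : Matrix (Fin q) (Fin k) ℝ) : Prop :=
  Uhᵀ * Uh = 1 ∧ Vhᵀ * Vh = 1 ∧ Antitone μh ∧ (∀ i, 0 ≤ μh i) ∧
  (∀ i : Fin k, μh i = ithEigDesc ((1 / (n : ℝ)) • (Xᵀ * X)) i) ∧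
  (∀ i : Fin k, (Xᵀ * X) *ᵥ (fun j => Vh j i) = ((n : ℝ) * μh i) • fun j => Vh j i) ∧
  (∀ i : Fin k, X *ᵥ (fun j => Vh j i) = (Real.sqrt n * Real.sqrt (μh i)) • fun j => Uh j i)

/-- Almost sure limit `μ̄` of the top sample eigenvalues (`s = σ²`). -/
def muBar (γ s μi : ℝ) : ℝ :=
  if s / Real.sqrt γ < μi then (μi + s) * (1 + s / (γ * μi))
  else s * (1 + 1 / Real.sqrt γ) ^ 2

/-- Limiting covariance matrix `Σ̄` of the fluctuations of the top sample eigenvalues. -/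
def sigmaBar {k : ℕ} (γ s : ℝ) (μ : Fin k → ℝ) (Cmat : Matrix (Fin k) (Fin k) ℝ) :
    Fin k → Fin k → ℝ := fun i j =>
  if s / Real.sqrt γ < μ i ∧ s / Real.sqrt γ < μ j then
    Cmat i j * (1 - s ^ 2 / (γ * (μ i) ^ 2)) * (1 - s ^ 2 / (γ * (μ j) ^ 2))
      + (if i = j then 2 * s * (2 * μ i + (1 + γ⁻¹) * s) * (1 - s ^ 2 / (γ * (μ i) ^ 2)) else 0)
  else 0

/-- The independent noise blocks `E_{n,12}`, `E_{n,21}` and the scaled Wishart eigenvalues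
`Λ_n` appearing after the change of basis. -/
structure NoiseBlocks (k : ℕ) (γ : ℝ) (p : ℕ → ℕ) (Ω : Type*) [MeasurableSpace Ω]
    (P : Measure Ω) where
  E12 : ∀ n : ℕ, Ω → Matrix (Fin k) (Fin (p n - k)) ℝ
  E21 : ∀ n : ℕ, Ω → Matrix (Fin (p n - k)) (Fin k) ℝ
  W : ∀ n : ℕ, Ω → Matrix (Fin (n - k)) (Fin (p n - k)) ℝ
  lam : ∀ n : ℕ, Ω → Fin (p n - k) → ℝ
  aspect : Tendsto (fun n : ℕ => (n : ℝ) / (p n)) atTop (𝓝 γ)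
  pTop : Tendsto p atTop atTop
  E12gauss : ∀ n, IIDGaussian P (fun ω => matEntries (E12 n ω)) 1
  E21gauss : ∀ n, IIDGaussian P (fun ω => matEntries (E21 n ω)) 1
  Wgauss : ∀ n, IIDGaussian P (fun ω => matEntries (W n ω)) 1
  /-- `n λ_{n,α}` are the decreasingly ordered eigenvalues of the white Wishart
  matrix `Wᵀ W`. -/
  lamEig : ∀ n ω, ∀ α : Fin (p n - k), (n : ℝ) * lam n ω α = ithEigDesc ((W n ω)ᵀ * W n ω) α
  indep1 : ∀ n, IndepFun (E12 n) (fun ω => (E21 n ω, W n ω)) P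
  indep2 : ∀ n, IndepFun (E21 n) (W n) P

namespace NoiseBlocks

variable {k : ℕ} {γ : ℝ} {p : ℕ → ℕ} {Ω : Type*} [MeasurableSpace Ω] {P : Measure Ω}

/-- `(1/n) E_{n,12} (Λ_n − z I)⁻¹ E_{n,12}ᵀ`. -/
def q1 (B : NoiseBlocks k γ p Ω P) (n : ℕ) (ω : Ω) (z : ℝ) : Matrix (Fin k) (Fin k) ℝ :=
  (1 / (n : ℝ)) • (B.E12 n ω * (Matrix.diagonal (B.lam n ω) - z • 1)⁻¹ * (B.E12 n ω)ᵀ)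

/-- `(1/n) E_{n,21}ᵀ (Λ_n − z I)⁻¹ E_{n,21}`. -/
def q2 (B : NoiseBlocks k γ p Ω P) (n : ℕ) (ω : Ω) (z : ℝ) : Matrix (Fin k) (Fin k) ℝ :=
  (1 / (n : ℝ)) • ((B.E21 n ω)ᵀ * (Matrix.diagonal (B.lam n ω) - z • 1)⁻¹ * B.E21 n ω)

/-- `(1/n) E_{n,12} (Λ_n − z I)⁻¹ Λ_n^{1/2} E_{n,21}`. -/
def q3 (B : NoiseBlocks k γ p Ω P) (n : ℕ) (ω : Ω) (z : ℝ) : Matrix (Fin k) (Fin k) ℝ :=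
  (1 / (n : ℝ)) • (B.E12 n ω * (Matrix.diagonal (B.lam n ω) - z • 1)⁻¹ *
    Matrix.diagonal (fun α => Real.sqrt (B.lam n ω α)) * B.E21 n ω)

/-- `F_n(z)`. -/
def Fn (B : NoiseBlocks k γ p Ω P) (n : ℕ) (ω : Ω) (z : ℝ) : Matrix (Fin k) (Fin k) ℝ :=
  Real.sqrt n • (B.q1 n ω z - (γ⁻¹ * mpStieltjes γ z) • 1)

/-- `G_n(z)`. -/
def Gn (B : NoiseBlocks k γ p Ω P) (n : ℕ) (ω : Ω) (z : ℝ) : Matrix (Fin k) (Fin k) ℝ :=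
  Real.sqrt n • B.q3 n ω z

/-- `H_n(z)`. -/
def Hn (B : NoiseBlocks k γ p Ω P) (n : ℕ) (ω : Ω) (z : ℝ) : Matrix (Fin k) (Fin k) ℝ :=
  Real.sqrt n • (B.q2 n ω z - (γ⁻¹ * mpStieltjes γ z) • 1)

end NoiseBlocks

/-- The difference quotient `(m(z₁) − m(z₂))/(z₁ − z₂)`, interpreted as `m'(z₁)` when
`z₁ = z₂`: covariance kernel of `F` and `H`. -/
def qFH (γ z₁ z₂ : ℝ) : ℝ :=
  if z₁ = z₂ then deriv (mpStieltjes γ) z₁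
  else (mpStieltjes γ z₁ - mpStieltjes γ z₂) / (z₁ - z₂)

/-- The difference quotient `(z₁ m(z₁) − z₂ m(z₂))/(z₁ − z₂)`, interpreted as
`m(z₁) + z₁ m'(z₁)` when `z₁ = z₂`: covariance kernel of `G`. -/
def qG (γ z₁ z₂ : ℝ) : ℝ :=
  if z₁ = z₂ then mpStieltjes γ z₁ + z₁ * deriv (mpStieltjes γ) z₁
  else (z₁ * mpStieltjes γ z₁ - z₂ * mpStieltjes γ z₂) / (z₁ - z₂)

/-- Covariance function of the limiting Gaussian family
`(F(z_r), G(z_r), H(z_r))_{r}` (index component `Fin 3`: `0 ↦ F`, `1 ↦ G`, `2 ↦ H`);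
it encodes that `F`, `G`, `H` are mutually independent, that `F` and `H` are symmetric,
and that all covariances vanish except the ones prescribed. -/
def covFGH (γ : ℝ) {l k : ℕ} (zs : Fin l → ℝ) :
    Fin l × Fin 3 × Fin k × Fin k → Fin l × Fin 3 × Fin k × Fin k → ℝ := fun q q' =>
  if q.2.1 = q'.2.1 then
    if q.2.1 = 1 then
      γ⁻¹ * qG γ (zs q.1) (zs q'.1) *
        (if q.2.2.1 = q'.2.2.1 ∧ q.2.2.2 = q'.2.2.2 then 1 else 0)
    else
      γ⁻¹ * qFH γ (zs q.1) (zs q'.1) *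
        ((if q.2.2.1 = q'.2.2.1 ∧ q.2.2.2 = q'.2.2.2 then 1 else 0)
          + (if q.2.2.1 = q'.2.2.2 ∧ q.2.2.2 = q'.2.2.1 then 1 else 0))
  else 0

/-- The model after the orthogonal change of basis: the data matrix `X̃_n` has block form
`[[√n D_n + E₁₁, E₁₂], [E₂₁, √n Λ_n^{1/2}], [E₃₁, 0]]`, with all blocks mutually independent,
the `E`-blocks having iid `N(0,1)` entries and `n λ_{n,α}` the decreasingly ordered
eigenvalues of a white Wishart matrix of dimension `p − k` with `n − k` degrees of freedom.
(Monotonicity assumptions on `d` and `μ` are stated separately when needed.) -/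
structure BlockModel (k : ℕ) (γ : ℝ) (p : ℕ → ℕ) (Ω : Type*) [MeasurableSpace Ω]
    (P : Measure Ω) (μ : Fin k → ℝ) where
  d : ∀ n : ℕ, Ω → Fin k → ℝ
  E11 : ∀ n : ℕ, Ω → Matrix (Fin k) (Fin k) ℝ
  E12 : ∀ n : ℕ, Ω → Matrix (Fin k) (Fin (p n - k)) ℝ
  E21 : ∀ n : ℕ, Ω → Matrix (Fin (p n - k)) (Fin k) ℝ
  E31 : ∀ n : ℕ, Ω → Matrix (Fin (n - p n)) (Fin k) ℝ
  W : ∀ n : ℕ, Ω → Matrix (Fin (n - k)) (Fin (p n - k)) ℝ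
  lam : ∀ n : ℕ, Ω → Fin (p n - k) → ℝ
  aspect : Tendsto (fun n : ℕ => Real.sqrt n * ((n : ℝ) / (p n) - γ)) atTop (𝓝 0)
  pTop : Tendsto p atTop atTop
  dpos : ∀ n ω i, 0 < d n ω i
  dconv : ∀ᵐ ω ∂P, ∀ i, Tendsto (fun n => d n ω i) atTop (𝓝 (Real.sqrt (μ i)))
  E11gauss : ∀ n, IIDGaussian P (fun ω => matEntries (E11 n ω)) 1
  E12gauss : ∀ n, IIDGaussian P (fun ω => matEntries (E12 n ω)) 1
  E21gauss : ∀ n, IIDGaussian P (fun ω => matEntries (E21 n ω)) 1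
  E31gauss : ∀ n, IIDGaussian P (fun ω => matEntries (E31 n ω)) 1
  Wgauss : ∀ n, IIDGaussian P (fun ω => matEntries (W n ω)) 1
  lamEig : ∀ n ω, ∀ α : Fin (p n - k), (n : ℝ) * lam n ω α = ithEigDesc ((W n ω)ᵀ * W n ω) α
  indep1 : ∀ n, IndepFun (d n) (fun ω => (E11 n ω, E12 n ω, E21 n ω, E31 n ω, W n ω)) P
  indep2 : ∀ n, IndepFun (E11 n) (fun ω => (E12 n ω, E21 n ω, E31 n ω, W n ω)) P
  indep3 : ∀ n, IndepFun (E12 n) (fun ω => (E21 n ω, E31 n ω, W n ω)) P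
  indep4 : ∀ n, IndepFun (E21 n) (fun ω => (E31 n ω, W n ω)) P
  indep5 : ∀ n, IndepFun (E31 n) (W n) P

namespace BlockModel

variable {k : ℕ} {γ : ℝ} {p : ℕ → ℕ} {Ω : Type*} [MeasurableSpace Ω] {P : Measure Ω}
  {μ : Fin k → ℝ}

/-- Upper-left block `S_{n,11}` of `S_n = (1/n) X̃_nᵀ X̃_n`. -/
def S11 (M : BlockModel k γ p Ω P μ) (n : ℕ) (ω : Ω) : Matrix (Fin k) (Fin k) ℝ :=
  Matrix.diagonal (fun i => (M.d n ω i) ^ 2)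
    + (1 / Real.sqrt n) •
      (Matrix.diagonal (M.d n ω) * M.E11 n ω + (M.E11 n ω)ᵀ * Matrix.diagonal (M.d n ω))
    + (1 / (n : ℝ)) •
      ((M.E11 n ω)ᵀ * M.E11 n ω + (M.E21 n ω)ᵀ * M.E21 n ω + (M.E31 n ω)ᵀ * M.E31 n ω)

/-- Block `S_{n,12}` of `S_n = (1/n) X̃_nᵀ X̃_n`. -/
def S12 (M : BlockModel k γ p Ω P μ) (n : ℕ) (ω : Ω) : Matrix (Fin k) (Fin (p n - k)) ℝ :=
  (1 / Real.sqrt n) • (Matrix.diagonal (M.d n ω) * M.E12 n ω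
      + (M.E21 n ω)ᵀ * Matrix.diagonal (fun α => Real.sqrt (M.lam n ω α)))
    + (1 / (n : ℝ)) • ((M.E11 n ω)ᵀ * M.E12 n ω)

/-- Block `S_{n,21}` of `S_n = (1/n) X̃_nᵀ X̃_n`. -/
def S21 (M : BlockModel k γ p Ω P μ) (n : ℕ) (ω : Ω) : Matrix (Fin (p n - k)) (Fin k) ℝ :=
  (1 / Real.sqrt n) • ((M.E12 n ω)ᵀ * Matrix.diagonal (M.d n ω)
      + Matrix.diagonal (fun α => Real.sqrt (M.lam n ω α)) * M.E21 n ω)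
    + (1 / (n : ℝ)) • ((M.E12 n ω)ᵀ * M.E11 n ω)

/-- Lower-right block `S_{n,22}` of `S_n = (1/n) X̃_nᵀ X̃_n`. -/
def S22 (M : BlockModel k γ p Ω P μ) (n : ℕ) (ω : Ω) :
    Matrix (Fin (p n - k)) (Fin (p n - k)) ℝ :=
  Matrix.diagonal (M.lam n ω) + (1 / (n : ℝ)) • ((M.E12 n ω)ᵀ * M.E12 n ω)

/-- The secular-equation matrix `T_n(z) = S₁₁ − z I − S₁₂ (S₂₂ − z I)⁻¹ S₂₁`. -/
def T (M : BlockModel k γ p Ω P μ) (n : ℕ) (ω : Ω) (z : ℝ) : Matrix (Fin k) (Fin k) ℝ :=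
  M.S11 n ω - z • 1 - M.S12 n ω * (M.S22 n ω - z • 1)⁻¹ * M.S21 n ω

/-- `F_n(z)` in the block model. -/
def Fmat (M : BlockModel k γ p Ω P μ) (n : ℕ) (ω : Ω) (z : ℝ) : Matrix (Fin k) (Fin k) ℝ :=
  Real.sqrt n • ((1 / (n : ℝ)) •
      (M.E12 n ω * (Matrix.diagonal (M.lam n ω) - z • 1)⁻¹ * (M.E12 n ω)ᵀ)
    - (γ⁻¹ * mpStieltjes γ z) • 1)

/-- `G_n(z)` in the block model. -/
def Gmat (M : BlockModel k γ p Ω P μ) (n : ℕ) (ω : Ω) (z : ℝ) : Matrix (Fin k) (Fin k) ℝ :=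
  Real.sqrt n • ((1 / (n : ℝ)) •
    (M.E12 n ω * (Matrix.diagonal (M.lam n ω) - z • 1)⁻¹ *
      Matrix.diagonal (fun α => Real.sqrt (M.lam n ω α)) * M.E21 n ω))

/-- `H_n(z)` in the block model. -/
def Hmat (M : BlockModel k γ p Ω P μ) (n : ℕ) (ω : Ω) (z : ℝ) : Matrix (Fin k) (Fin k) ℝ :=
  Real.sqrt n • ((1 / (n : ℝ)) •
      ((M.E21 n ω)ᵀ * (Matrix.diagonal (M.lam n ω) - z • 1)⁻¹ * M.E21 n ω)
    - (γ⁻¹ * mpStieltjes γ z) • 1)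

/-- `R_n(z) = D_n + n^{-1/2} E₁₁ − n^{-1/2} E₁₂ (S₂₂ − z I)⁻¹ S₂₁`. -/
def Rmat (M : BlockModel k γ p Ω P μ) (n : ℕ) (ω : Ω) (z : ℝ) : Matrix (Fin k) (Fin k) ℝ :=
  Matrix.diagonal (M.d n ω) + (1 / Real.sqrt n) • M.E11 n ω
    - (1 / Real.sqrt n) • (M.E12 n ω * (M.S22 n ω - z • 1)⁻¹ * M.S21 n ω)

/-- Euclidean norm of `x̃ = (x; −(S₂₂ − z I)⁻¹ S₂₁ x)`. -/
def xtNorm (M : BlockModel k γ p Ω P μ) (n : ℕ) (ω : Ω) (z : ℝ) (x : Fin k → ℝ) : ℝ :=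
  Real.sqrt (∑ j, x j ^ 2 +
    ∑ α, ((((M.S22 n ω - z • 1)⁻¹ * M.S21 n ω) *ᵥ x) α) ^ 2)

/-- First `k` components of the left singular vector: `y = R_n(z) x / ‖x̃‖₂`. -/
def yvec (M : BlockModel k γ p Ω P μ) (n : ℕ) (ω : Ω) (z : ℝ) (x : Fin k → ℝ) :
    Fin k → ℝ :=
  (M.xtNorm n ω z x)⁻¹ • (M.Rmat n ω z *ᵥ x)

end BlockModel

/-- The deterministic limit `T₀(z) = (1 + γ⁻¹ m(z))⁻¹ D² + m(z)⁻¹ I` of `T_n(z)`. -/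
def T0lim {k : ℕ} (γ : ℝ) (μ : Fin k → ℝ) (z : ℝ) : Matrix (Fin k) (Fin k) ℝ :=
  (1 + γ⁻¹ * mpStieltjes γ z)⁻¹ • Matrix.diagonal μ + (mpStieltjes γ z)⁻¹ • 1

/-! ### Standard Gaussian vectors and matrices -/

/-- The standard Gaussian measure on `ι → ℝ`. -/
abbrev gaussianVector (ι : Type*) [Fintype ι] : Measure (ι → ℝ) :=
  Measure.pi fun _ => gaussianReal 0 1

/-- The law of an `ι × κ` matrix with iid standard Gaussian entries, encoded as a family of
independent rows. -/
abbrev gaussianMatrix (ι κ : Type*) [Fintype ι] [Fintype κ] : Measure (ι → κ → ℝ) :=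
  Measure.pi fun _ => gaussianVector κ

section GaussianInvariance

variable (ι κ : Type*) [Fintype ι] [Fintype κ]

lemma measurePreserving_curry_gaussianVector :
    MeasurePreserving (fun (x : ι × κ → ℝ) i j => x (i, j))
      (gaussianVector (ι × κ)) (gaussianMatrix ι κ) := by
  refine ⟨by fun_prop, ?_⟩
  have h := Measure.infinitePi_map_curry (ι := ι) (κ := κ) (fun _ _ => gaussianReal 0 1)
  simp only [Measure.infinitePi_eq_pi] at h
  exact h

lemma measurePreserving_swap_gaussianVector :
    MeasurePreserving (fun (x : ι × κ → ℝ) (q : κ × ι) => x (q.2, q.1))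
      (gaussianVector (ι × κ)) (gaussianVector (κ × ι)) := by
  convert measurePreserving_piCongrLeft (fun _ : κ × ι => gaussianReal 0 1)
    (Equiv.prodComm ι κ) using 1
  ext x ⟨a, b⟩
  exact (Equiv.piCongrLeft_apply_apply (fun _ : κ × ι => ℝ) (Equiv.prodComm ι κ) x (b, a)).symm

lemma measurePreserving_transpose_gaussianMatrix :
    MeasurePreserving (fun (W : ι → κ → ℝ) j i => W i j)
      (gaussianMatrix ι κ) (gaussianMatrix κ ι) := by
  refine ⟨by fun_prop, ?_⟩
  rw [← (measurePreserving_curry_gaussianVector ι κ).map_eq,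
    Measure.map_map (by fun_prop) (by fun_prop),
    ← (measurePreserving_curry_gaussianVector κ ι).map_eq,
    ← (measurePreserving_swap_gaussianVector ι κ).map_eq,
    Measure.map_map (by fun_prop) (by fun_prop)]
  rfl

variable {ι}

lemma measurePreserving_rotate_gaussianVector
    (f : EuclideanSpace ℝ ι ≃ₗᵢ[ℝ] EuclideanSpace ℝ ι) :
    MeasurePreserving (fun x : ι → ℝ => (f (WithLp.toLp 2 x)).ofLp)
      (gaussianVector ι) (gaussianVector ι) := by
  refine ⟨by fun_prop, ?_⟩
  have hrotate : (gaussianVector ι).map (fun x : ι → ℝ => f (WithLp.toLp 2 x))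
      = (gaussianVector ι).map (WithLp.toLp 2) := by
    rw [map_pi_eq_stdGaussian, ← stdGaussian_map f, ← map_pi_eq_stdGaussian,
      Measure.map_map (by fun_prop) (by fun_prop)]
    rfl
  calc (gaussianVector ι).map (fun x : ι → ℝ => (f (WithLp.toLp 2 x)).ofLp)
      = ((gaussianVector ι).map (fun x : ι → ℝ => f (WithLp.toLp 2 x))).map WithLp.ofLp := by
        rw [Measure.map_map (by fun_prop) (by fun_prop)]; rfl
    _ = gaussianVector ι := by
        rw [hrotate, Measure.map_map (by fun_prop) (by fun_prop)]
        exact Measure.map_id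

end GaussianInvariance

section ProductSections

variable {X Y : Type*} [MeasurableSpace X] [MeasurableSpace Y] (μ : Measure X) (ν : Measure Y)
  {S : Set (X × Y)} {δ : ENNReal}

lemma prod_measure_le_of_forall_left_section_le [IsProbabilityMeasure μ] [SFinite ν]
    (hS : MeasurableSet S) (h : ∀ x, ν {y | (x, y) ∈ S} ≤ δ) : (μ.prod ν) S ≤ δ := by
  rw [Measure.prod_apply hS]
  exact (lintegral_mono h).trans_eq (by simp)

lemma prod_measure_le_of_forall_right_section_le [SFinite μ] [IsProbabilityMeasure ν]
    (hS : MeasurableSet S) (h : ∀ y, μ {x | (x, y) ∈ S} ≤ δ) : (μ.prod ν) S ≤ δ := by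
  rw [Measure.prod_apply_symm hS]
  exact (lintegral_mono h).trans_eq (by simp)

end ProductSections

/-! ### Sub-exponential random variables -/

/-- `X` is sub-exponential: its moment generating function is dominated by that of a centred
Gaussian variable of variance `2 v` on the interval `[-b, b]`. -/
structure HasSubexponentialMGF {Ω : Type*} [MeasurableSpace Ω] (X : Ω → ℝ) (v b : ℝ)
    (μ : Measure Ω) : Prop where
  measurable : Measurable X
  variance_pos : 0 < v
  radius_pos : 0 < b
  integrable_exp_mul : ∀ θ : ℝ, |θ| ≤ b → Integrable (fun ω => Real.exp (θ * X ω)) μ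
  mgf_le : ∀ θ : ℝ, |θ| ≤ b → mgf X μ θ ≤ Real.exp (v * θ ^ 2)

section ChiSquare

lemma one_le_one_sub_mul_exp {y : ℝ} (hy : |y| ≤ 1 / 2) :
    1 ≤ (1 - y) * Real.exp (y + y ^ 2) := by
  obtain ⟨hy1, hy2⟩ := abs_le.mp hy
  rcases le_total 0 y with h | h
  · have hexp := Real.quadratic_le_exp_of_nonneg (x := y + y ^ 2) (by positivity)
    have hfactor : 0 ≤ y ^ 2 * (1 - y - y ^ 2 - y ^ 3) :=
      mul_nonneg (by positivity) (by nlinarith [mul_nonneg h h])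
    calc 1 ≤ (1 - y) * (1 + (y + y ^ 2) + (y + y ^ 2) ^ 2 / 2) := by nlinarith
      _ ≤ _ := mul_le_mul_of_nonneg_left hexp (by linarith)
  · have hcube : 0 ≤ (-y) ^ 3 := pow_nonneg (by linarith) 3
    calc 1 ≤ (1 - y) * (y + y ^ 2 + 1) := by nlinarith
      _ ≤ _ := mul_le_mul_of_nonneg_left (Real.add_one_le_exp _) (by linarith)

lemma mgf_sq_gaussianReal {θ : ℝ} (hθ : θ < 1 / 2) :
    mgf (fun x => x ^ 2) (gaussianReal 0 1) θ = (Real.sqrt (1 - 2 * θ))⁻¹ := by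
  have hdensity : ∀ x : ℝ, gaussianPDFReal 0 1 x • Real.exp (θ * x ^ 2)
      = (Real.sqrt (2 * Real.pi))⁻¹ * Real.exp (-(1 / 2 - θ) * x ^ 2) := fun x => by
    rw [gaussianPDFReal, smul_eq_mul, mul_assoc, ← Real.exp_add]
    simp only [NNReal.coe_one, mul_one, sub_zero]
    congr 2
    ring
  rw [mgf, integral_gaussianReal_eq_integral_smul one_ne_zero]
  simp only [hdensity]
  rw [integral_const_mul, integral_gaussian, ← Real.sqrt_inv, ← Real.sqrt_inv,
    ← Real.sqrt_mul (by positivity)]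
  have : 1 / 2 - θ ≠ 0 := by linarith
  congr 1
  rw [show 1 - 2 * θ = 2 * (1 / 2 - θ) by ring]
  field_simp

lemma integrable_exp_mul_sq_gaussianReal {θ : ℝ} (hθ : θ < 1 / 2) :
    Integrable (fun x => Real.exp (θ * x ^ 2)) (gaussianReal 0 1) := by
  rw [← mgf_pos_iff (X := fun x : ℝ => x ^ 2), mgf_sq_gaussianReal hθ]
  have : 0 < 1 - 2 * θ := by linarith
  positivity

lemma mgf_sq_gaussianReal_le {θ : ℝ} (hθ : |θ| ≤ 1 / 4) :
    mgf (fun x => x ^ 2) (gaussianReal 0 1) θ ≤ Real.exp (θ + 2 * θ ^ 2) := by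
  obtain ⟨-, hθ2⟩ := abs_le.mp hθ
  rw [mgf_sq_gaussianReal (by linarith), ← Real.sqrt_inv]
  refine Real.sqrt_le_iff.mpr ⟨by positivity, ?_⟩
  have hsq : ((2 : ℕ) : ℝ) * (θ + 2 * θ ^ 2) = 2 * θ + (2 * θ) ^ 2 := by
    push_cast
    ring
  rw [← Real.exp_nat_mul, inv_le_iff_one_le_mul₀ (by linarith), mul_comm, hsq]
  exact one_le_one_sub_mul_exp (by rw [abs_mul, abs_two]; linarith)

lemma hasSubexponentialMGF_sq_sub_one :
    HasSubexponentialMGF (fun x => x ^ 2 - 1) 2 (1 / 4) (gaussianReal 0 1) where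
  measurable := by fun_prop
  variance_pos := by norm_num
  radius_pos := by norm_num
  integrable_exp_mul θ hθ := by
    simp only [mul_sub, Real.exp_sub]
    exact (integrable_exp_mul_sq_gaussianReal (by linarith [le_abs_self θ])).div_const _
  mgf_le θ hθ := by
    simp only [sub_eq_add_neg]
    rw [mgf_add_const]
    calc _ ≤ Real.exp (θ + 2 * θ ^ 2) * Real.exp (θ * -1) :=
          mul_le_mul_of_nonneg_right (mgf_sq_gaussianReal_le hθ) (Real.exp_nonneg _)
      _ = Real.exp (2 * θ ^ 2) := by
          rw [← Real.exp_add]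
          ring_nf

lemma hasSubexponentialMGF_mul :
    HasSubexponentialMGF (fun x : ℝ × ℝ => x.1 * x.2) 2 (1 / 4)
      ((gaussianReal 0 1).prod (gaussianReal 0 1)) := by
  have hinner : ∀ θ x : ℝ, ∫ y, Real.exp (θ * (x * y)) ∂(gaussianReal 0 1)
      = Real.exp (θ ^ 2 / 2 * x ^ 2) := fun θ x => by
    have h := congrFun (mgf_fun_id_gaussianReal (μ := 0) (v := 1)) (θ * x)
    simp only [mgf] at h
    simp only [← mul_assoc, h]
    congr 1
    simp only [NNReal.coe_one]
    ring
  have hsq : ∀ θ : ℝ, |θ| ≤ 1 / 4 → θ ^ 2 ≤ (1 / 4) ^ 2 := fun θ hθ => sq_le_sq.mpr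
    (by rwa [abs_of_nonneg (show (0 : ℝ) ≤ 1 / 4 by norm_num)])
  have hint : ∀ θ : ℝ, |θ| ≤ 1 / 4 → Integrable (fun x : ℝ × ℝ => Real.exp (θ * (x.1 * x.2)))
      ((gaussianReal 0 1).prod (gaussianReal 0 1)) := fun θ hθ => by
    rw [integrable_prod_iff (by fun_prop)]
    refine ⟨ae_of_all _ fun x => ?_, ?_⟩
    · simpa only [mul_assoc] using integrable_exp_mul_gaussianReal (μ := 0) (v := 1) (θ * x)
    · simp only [Real.norm_eq_abs, Real.abs_exp, hinner]
      exact integrable_exp_mul_sq_gaussianReal (by linarith [hsq θ hθ])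
  refine ⟨by fun_prop, by norm_num, by norm_num, hint, fun θ hθ => ?_⟩
  rw [mgf, integral_prod _ (hint θ hθ)]
  simp only [hinner]
  refine (mgf_sq_gaussianReal_le (θ := θ ^ 2 / 2) ?_).trans (Real.exp_le_exp.mpr ?_)
  · rw [abs_of_nonneg (by positivity)]
    linarith [hsq θ hθ]
  · nlinarith [hsq θ hθ, sq_nonneg θ]

end ChiSquare

namespace HasSubexponentialMGF

variable {Ω ι : Type*} [MeasurableSpace Ω] [Fintype ι] {μ : Measure Ω} [IsProbabilityMeasure μ]
  {v b : ℝ}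

lemma measure_le_sum_mul_le {X : ι → Ω → ℝ} (hindep : iIndepFun X μ)
    (h : ∀ i, HasSubexponentialMGF (X i) v b μ) (l : ι → ℝ) {K θ : ℝ}
    (hl : ∀ i, |l i| ≤ K) (hθ : 0 ≤ θ) (hθK : θ * K ≤ b) (t : ℝ) :
    μ.real {ω | t ≤ ∑ i, l i * X i ω}
      ≤ Real.exp (-(θ * t) + v * θ ^ 2 * K ^ 2 * Fintype.card ι) := by
  have hindep' : iIndepFun (fun i ω => l i * X i ω) μ :=
    hindep.comp (fun i x => l i * x) fun i => by fun_prop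
  have hmeas : ∀ i, Measurable fun ω => l i * X i ω := fun i => (h i).measurable.const_mul _
  have hθl : ∀ i, |θ * l i| ≤ θ * K := fun i => by
    rw [abs_mul, abs_of_nonneg hθ]
    exact mul_le_mul_of_nonneg_left (hl i) hθ
  have hint : ∀ i, Integrable (fun ω => Real.exp (θ * (l i * X i ω))) μ := fun i => by
    simpa only [mul_assoc] using (h i).integrable_exp_mul _ ((hθl i).trans hθK)
  have hmgf : ∀ i, mgf (fun ω => l i * X i ω) μ θ ≤ Real.exp (v * (θ * K) ^ 2) := fun i => by
    rw [mgf_const_mul, mul_comm]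
    refine ((h i).mgf_le _ ((hθl i).trans hθK)).trans (Real.exp_le_exp.mpr ?_)
    exact mul_le_mul_of_nonneg_left (sq_le_sq.mpr ((hθl i).trans (le_abs_self _)))
      (h i).variance_pos.le
  have hchernoff := measure_ge_le_exp_mul_mgf t hθ
    (hindep'.integrable_exp_mul_sum hmeas (s := Finset.univ) fun i _ => hint i)
  rw [hindep'.mgf_sum hmeas] at hchernoff
  simp only [Finset.sum_apply] at hchernoff
  calc _ ≤ _ := hchernoff
    _ ≤ Real.exp (-θ * t) * ∏ _i : ι, Real.exp (v * (θ * K) ^ 2) :=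
        mul_le_mul_of_nonneg_left
          (Finset.prod_le_prod (fun _ _ => mgf_nonneg) fun i _ => hmgf i) (Real.exp_nonneg _)
    _ = _ := by
        rw [← Real.exp_sum, ← Real.exp_add, Finset.sum_const, Finset.card_univ, nsmul_eq_mul]
        ring_nf

lemma measure_le_abs_sum_mul_le {X : ι → Ω → ℝ} (hindep : iIndepFun X μ)
    (h : ∀ i, HasSubexponentialMGF (X i) v b μ) (l : ι → ℝ) {K θ : ℝ}
    (hl : ∀ i, |l i| ≤ K) (hθ : 0 ≤ θ) (hθK : θ * K ≤ b) (t : ℝ) :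
    μ.real {ω | t ≤ |∑ i, l i * X i ω|}
      ≤ 2 * Real.exp (-(θ * t) + v * θ ^ 2 * K ^ 2 * Fintype.card ι) := by
  have hsub : {ω | t ≤ |∑ i, l i * X i ω|}
      ⊆ {ω | t ≤ ∑ i, l i * X i ω} ∪ {ω | t ≤ ∑ i, -l i * X i ω} := fun ω hω => by
    have hω' : t ≤ |∑ i, l i * X i ω| := hω
    simpa [neg_mul, Finset.sum_neg_distrib] using le_abs.mp hω'
  calc _ ≤ _ := measureReal_mono hsub
    _ ≤ _ := measureReal_union_le _ _
    _ ≤ _ := add_le_add (measure_le_sum_mul_le hindep h l hl hθ hθK t)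
        (measure_le_sum_mul_le hindep h (fun i => -l i) (by simpa using hl) hθ hθK t)
    _ = _ := (two_mul _).symm

lemma exists_measure_abs_sum_mul_le_exp {X : Ω → ℝ} (h : HasSubexponentialMGF X v b μ)
    {K C ε : ℝ} (hK : 0 < K) (hC : 0 < C) (hε : 0 < ε) :
    ∃ c > 0, ∀ (n q : ℕ) (l : Fin q → ℝ), (q : ℝ) ≤ C * n → (∀ i, |l i| ≤ K) →
      (Measure.pi fun _ : Fin q => μ) {x | ε * n ≤ |∑ i, l i * X (x i)|}
        ≤ ENNReal.ofReal (2 * Real.exp (-(c * n))) := by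
  have hv := h.variance_pos
  have hb := h.radius_pos
  set θ := min (b / K) (ε / (2 * v * K ^ 2 * C))
  have hθ : 0 < θ := by positivity
  have hθK : θ * K ≤ b := (le_div_iff₀ hK).mp (min_le_left _ _)
  have hθε : θ * (2 * v * K ^ 2 * C) ≤ ε := (le_div_iff₀ (by positivity)).mp (min_le_right _ _)
  refine ⟨θ * ε / 2, by positivity, fun n q l hq hl => ?_⟩
  have hcoord : ∀ i : Fin q, HasSubexponentialMGF (fun x : Fin q → Ω => X (x i)) v b
      (Measure.pi fun _ : Fin q => μ) := fun i => by
    have hpres := measurePreserving_eval (fun _ : Fin q => μ) i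
    refine ⟨h.measurable.comp (measurable_pi_apply i), hv, hb,
      fun θ hθ => hpres.integrable_comp_of_integrable (h.integrable_exp_mul θ hθ), fun θ hθ => ?_⟩
    have := mgf_map (μ := Measure.pi fun _ : Fin q => μ) (Y := Function.eval i) (X := X) (t := θ)
      hpres.aemeasurable ((h.measurable.const_mul θ).exp.aestronglyMeasurable)
    rw [hpres.map_eq] at this
    exact this ▸ h.mgf_le θ hθ
  have htail := measure_le_abs_sum_mul_le
    (iIndepFun_pi (X := fun (_ : Fin q) (x : Ω) => X x) fun _ => h.measurable.aemeasurable)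
    hcoord l hl hθ.le hθK (ε * n)
  rw [← ofReal_measureReal]
  refine ENNReal.ofReal_le_ofReal (htail.trans ?_)
  have hcard : v * θ ^ 2 * K ^ 2 * q ≤ v * θ ^ 2 * K ^ 2 * (C * n) := by gcongr
  have hrate : θ * n * (θ * (2 * v * K ^ 2 * C)) ≤ θ * n * ε := by gcongr
  rw [Fintype.card_fin]
  gcongr
  nlinarith

end HasSubexponentialMGF

section BorelCantelli

variable {Ω : Type*} [MeasurableSpace Ω] {P : Measure Ω}

lemma ae_eventually_notMem_of_eventually_le {s : ℕ → Set Ω} {a : ℕ → ℝ} (ha : Summable a)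
    (h : ∀ᶠ n in atTop, P (s n) ≤ ENNReal.ofReal (a n)) :
    ∀ᵐ ω ∂P, ∀ᶠ n in atTop, ω ∉ s n := by
  obtain ⟨N, hN⟩ := eventually_atTop.mp h
  have hsum : ∑' n, P (s (n + N)) ≠ ⊤ := ne_top_of_le_ne_top
    ((summable_nat_add_iff N).mpr ha).tsum_ofReal_ne_top
    (ENNReal.tsum_le_tsum fun n => hN _ (Nat.le_add_left N n))
  filter_upwards [ae_eventually_notMem hsum] with ω hω
  rw [← map_add_atTop_eq_nat N]
  exact eventually_map.mpr hω

lemma summable_mul_exp_neg_mul {c : ℝ} (hc : 0 < c) (A : ℝ) :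
    Summable fun n : ℕ => A * n * Real.exp (-(c * n)) := by
  simpa [mul_assoc, neg_mul] using (Real.summable_pow_mul_exp_neg_nat_mul 1 hc).mul_left A

lemma ae_tendsto_zero_of_exp_tail {X : ℕ → Ω → ℝ}
    (h : ∀ ε > 0, ∃ c > 0, ∃ A : ℝ, ∀ᶠ n : ℕ in atTop,
      P {ω | ε ≤ |X n ω|} ≤ ENNReal.ofReal (A * n * Real.exp (-(c * n)))) :
    ∀ᵐ ω ∂P, Tendsto (fun n => X n ω) atTop (𝓝 0) := by
  have hsmall : ∀ m : ℕ, ∀ᵐ ω ∂P, ∀ᶠ n in atTop, |X n ω| < 1 / ((m : ℝ) + 1) := fun m => by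
    obtain ⟨c, hc, A, hA⟩ := h (1 / ((m : ℝ) + 1)) (by positivity)
    filter_upwards [ae_eventually_notMem_of_eventually_le (summable_mul_exp_neg_mul hc A) hA]
      with ω hω
    filter_upwards [hω] with n hn using not_le.mp hn
  filter_upwards [ae_all_iff.mpr hsmall] with ω hω
  rw [Metric.tendsto_nhds]
  intro ε hε
  obtain ⟨m, hm⟩ := exists_nat_one_div_lt hε
  filter_upwards [hω m] with n hn
  rw [Real.dist_eq, sub_zero]
  exact hn.trans hm

end BorelCantelli

/-! ### The largest singular value of a Gaussian matrix -/

/-- The squared operator norm of the matrix `[u | W]`, obtained by attaching the column `u` to `W`,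
exceeds `s`. The attached column is kept apart because a bidiagonalisation step turns a row of `W`
into the column attached to the transposed remainder. -/
def OpNormSqExceeds {ι κ : Type*} [Fintype ι] [Fintype κ] (s : ℝ) (u : ι → ℝ) (W : ι → κ → ℝ) :
    Prop :=
  ∃ y : ι → ℝ, s * ∑ a, y a ^ 2 < (∑ a, u a * y a) ^ 2 + ∑ j, (∑ a, y a * W a j) ^ 2

namespace OpNormSqExceeds

section Fintype

variable {ι κ : Type*} [Fintype ι] [Fintype κ] {s : ℝ} {u : ι → ℝ} {W : ι → κ → ℝ}

lemma isOpen_setOf (s : ℝ) :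
    IsOpen {q : (ι → ℝ) × (ι → κ → ℝ) | OpNormSqExceeds s q.1 q.2} := by
  simp only [OpNormSqExceeds, Set.ofPred_exists]
  exact isOpen_iUnion fun y => isOpen_lt (by fun_prop) (by fun_prop)

lemma isOpen_setOf_right (s : ℝ) (u : ι → ℝ) :
    IsOpen {W : ι → κ → ℝ | OpNormSqExceeds s u W} :=
  (isOpen_setOf s).preimage (f := fun W => (u, W)) (by fun_prop)

lemma exists_transpose (hs : 0 ≤ s) (h : OpNormSqExceeds s u W) : ∃ (a : ℝ) (x : κ → ℝ),
    s * (a ^ 2 + ∑ j, x j ^ 2) < ∑ b, (a * u b + ∑ j, W b j * x j) ^ 2 := by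
  obtain ⟨y, hy⟩ := h
  set a := ∑ b, u b * y b with ha
  set x : κ → ℝ := fun j => ∑ a, y a * W a j
  refine ⟨a, x, ?_⟩
  have hadjoint : a ^ 2 + ∑ j, x j ^ 2 = ∑ b, y b * (a * u b + ∑ j, W b j * x j) := by
    have hcolumn : a ^ 2 = ∑ b, y b * (a * u b) := by
      rw [sq]; nth_rw 2 [ha]; rw [Finset.mul_sum]
      exact Finset.sum_congr rfl fun b _ => by ring
    have hmatrix : ∑ j, x j ^ 2 = ∑ b, y b * ∑ j, W b j * x j := by
      have hsq : ∀ j, x j ^ 2 = ∑ b, y b * W b j * x j := fun j => by rw [← Finset.sum_mul, sq]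
      simp only [hsq, Finset.mul_sum]
      rw [Finset.sum_comm]
      simp only [mul_assoc]
    simp only [hcolumn, hmatrix, ← Finset.sum_add_distrib, mul_add]
  have hcauchy := Finset.sum_mul_sq_le_sq_mul_sq Finset.univ y
    (fun b => a * u b + ∑ j, W b j * x j)
  rw [← hadjoint] at hcauchy
  set V := a ^ 2 + ∑ j, x j ^ 2
  have hY : 0 ≤ ∑ b, y b ^ 2 := Finset.sum_nonneg fun _ _ => sq_nonneg _
  have hV : 0 < V := (mul_nonneg hs hY).trans_lt hy
  by_contra! hle
  have hVV : V * V ≤ (∑ b, y b ^ 2) * (s * V) := by nlinarith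
  nlinarith

lemma rotate (f : EuclideanSpace ℝ ι ≃ₗᵢ[ℝ] EuclideanSpace ℝ ι)
    (h : OpNormSqExceeds s u W) :
    OpNormSqExceeds s (f (WithLp.toLp 2 u)).ofLp
      (fun a j => (f (WithLp.toLp 2 fun b => W b j)).ofLp a) := by
  have hinner : ∀ v w : ι → ℝ, ∑ a, (f (WithLp.toLp 2 v)).ofLp a * (f (WithLp.toLp 2 w)).ofLp a
      = ∑ a, v a * w a := fun v w => by
    simpa only [PiLp.inner_apply, RCLike.inner_apply, conj_trivial] using
      f.inner_map_map (WithLp.toLp 2 w) (WithLp.toLp 2 v)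
  obtain ⟨y, hy⟩ := h
  refine ⟨(f (WithLp.toLp 2 y)).ofLp, ?_⟩
  simp only [sq] at hy ⊢
  simpa only [hinner, mul_comm] using hy

end Fintype

lemma sq_mul_add_le {α β r : ℝ} (hα : 0 < α) (hβ : 0 < β) (hr : r ^ 2 ≤ β * (α + β)) (a C : ℝ) :
    (a * r + C) ^ 2 ≤ (α + β) ^ 2 * a ^ 2 + (α + β) / α * C ^ 2 := by
  have hsquare : (α + β) / β * (a * r) ^ 2 + (α + β) / α * C ^ 2 - (a * r + C) ^ 2
      = (α * (a * r) - β * C) ^ 2 / (α * β) := by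
    field_simp; ring
  have hnonneg : 0 ≤ (α * (a * r) - β * C) ^ 2 / (α * β) := by positivity
  calc (a * r + C) ^ 2
      ≤ (α + β) / β * (a * r) ^ 2 + (α + β) / α * C ^ 2 := by linarith
    _ = (α + β) / β * a ^ 2 * r ^ 2 + (α + β) / α * C ^ 2 := by ring
    _ ≤ (α + β) / β * a ^ 2 * (β * (α + β)) + (α + β) / α * C ^ 2 := by gcongr
    _ = (α + β) ^ 2 * a ^ 2 + (α + β) / α * C ^ 2 := by field_simp

/-- One step of the bidiagonalisation of `[u | W]` when `u` is a multiple of the first basis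
vector: removing the first row `c` of `W` leaves the transposed problem for the remaining rows,
with a multiple of `c` as the attached column. -/
lemma bidiagonalize {p n : ℕ} {α β r : ℝ} (hα : 0 < α) (hβ : 0 < β) (hr : r ^ 2 ≤ β * (α + β))
    {c : Fin n → ℝ} {W : Fin p → Fin n → ℝ}
    (h : OpNormSqExceeds ((α + β) ^ 2) (Fin.cons r 0 : Fin (p + 1) → ℝ)
      (Fin.cons c W : Fin (p + 1) → Fin n → ℝ)) :
    OpNormSqExceeds ((α + β) ^ 2) (√((α + β) / α) • c) (fun j b => W b j) := by
  obtain ⟨a, x, hx⟩ := h.exists_transpose (by positivity)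
  refine ⟨x, ?_⟩
  simp only [Fin.sum_univ_succ, Fin.cons_zero, Fin.cons_succ, Pi.zero_apply, mul_zero,
    zero_add] at hx
  have hcolumn : (∑ j, (√((α + β) / α) • c) j * x j) ^ 2
      = (α + β) / α * (∑ j, c j * x j) ^ 2 := by
    simp only [Pi.smul_apply, smul_eq_mul, mul_assoc]
    rw [← Finset.mul_sum, mul_pow, Real.sq_sqrt (by positivity)]
  simp only [hcolumn, mul_comm (x _)]
  linarith [sq_mul_add_le hα hβ hr a (∑ j, c j * x j)]

end OpNormSqExceeds

lemma exists_linearIsometryEquiv_eq_cons {p : ℕ} (u : Fin (p + 1) → ℝ) :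
    ∃ f : EuclideanSpace ℝ (Fin (p + 1)) ≃ₗᵢ[ℝ] EuclideanSpace ℝ (Fin (p + 1)),
      (f (WithLp.toLp 2 u)).ofLp = Fin.cons √(∑ a, u a ^ 2) 0 := by
  set v : EuclideanSpace ℝ (Fin (p + 1)) := WithLp.toLp 2 (Fin.cons √(∑ a, u a ^ 2) 0)
  have hnorm : ‖WithLp.toLp 2 u‖ = ‖v‖ := by
    rw [EuclideanSpace.norm_eq, EuclideanSpace.norm_eq, Fin.sum_univ_succ (n := p)
      (f := fun i => ‖v.ofLp i‖ ^ 2)]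
    simp [v, Real.sq_sqrt (Finset.sum_nonneg fun a _ => sq_nonneg (u a))]
  exact ⟨Submodule.reflection (ℝ ∙ (WithLp.toLp 2 u - v))ᗮ, by rw [Submodule.reflection_sub hnorm]⟩

lemma measurePreserving_rotate_gaussianMatrix {ι κ : Type*} [Fintype ι] [Fintype κ]
    (f : EuclideanSpace ℝ ι ≃ₗᵢ[ℝ] EuclideanSpace ℝ ι) :
    MeasurePreserving (fun (W : ι → κ → ℝ) a j => (f (WithLp.toLp 2 fun b => W b j)).ofLp a)
      (gaussianMatrix ι κ) (gaussianMatrix ι κ) :=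
  (measurePreserving_transpose_gaussianMatrix κ ι).comp
    ((measurePreserving_pi (fun _ : κ => gaussianVector ι) (fun _ : κ => gaussianVector ι)
      (fun _ => measurePreserving_rotate_gaussianVector f)).comp
        (measurePreserving_transpose_gaussianMatrix ι κ))

section Silverstein

variable {p n : ℕ}

lemma measure_opNormSqExceeds_le_cons (s : ℝ) (u : Fin (p + 1) → ℝ) :
    gaussianMatrix (Fin (p + 1)) (Fin n) {W | OpNormSqExceeds s u W}
      ≤ gaussianMatrix (Fin (p + 1)) (Fin n)
          {W | OpNormSqExceeds s (Fin.cons √(∑ a, u a ^ 2) 0) W} := by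
  obtain ⟨f, hf⟩ := exists_linearIsometryEquiv_eq_cons u
  refine le_trans (measure_mono fun W hW => ?_)
    ((measurePreserving_rotate_gaussianMatrix f).measure_preimage
      (OpNormSqExceeds.isOpen_setOf_right s _).measurableSet.nullMeasurableSet).le
  have hrotated := OpNormSqExceeds.rotate f hW
  rw [hf] at hrotated
  exact hrotated

lemma measure_opNormSqExceeds_cons_le {δ ε : ENNReal} {α β r : ℝ} (hα : 0 < α) (hβ : 0 < β)
    (hr : r ^ 2 ≤ β * (α + β)) (hrow : gaussianVector (Fin n) {c | α ^ 2 < ∑ i, c i ^ 2} ≤ δ)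
    (hrest : ∀ c : Fin n → ℝ, ∑ i, c i ^ 2 ≤ α ^ 2 → gaussianMatrix (Fin n) (Fin p)
      {W | OpNormSqExceeds ((α + β) ^ 2) (√((α + β) / α) • c) W} ≤ ε) :
    gaussianMatrix (Fin (p + 1)) (Fin n) {W | OpNormSqExceeds ((α + β) ^ 2) (Fin.cons r 0) W}
      ≤ δ + ε := by
  set longRow : Set ((Fin n → ℝ) × (Fin p → Fin n → ℝ)) := {q | α ^ 2 < ∑ i, q.1 i ^ 2}
  set longRest : Set ((Fin n → ℝ) × (Fin p → Fin n → ℝ)) := {q | ∑ i, q.1 i ^ 2 ≤ α ^ 2 ∧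
    OpNormSqExceeds ((α + β) ^ 2) (√((α + β) / α) • q.1) (fun j b => q.2 b j)}
  have hlongRow : MeasurableSet longRow := (isOpen_lt (by fun_prop) (by fun_prop)).measurableSet
  have hlongRest : MeasurableSet longRest :=
    (isClosed_le (f := fun q : (Fin n → ℝ) × (Fin p → Fin n → ℝ) => ∑ i, q.1 i ^ 2)
      (by fun_prop) continuous_const).measurableSet.inter
      ((OpNormSqExceeds.isOpen_setOf _).preimage (f := fun q : (Fin n → ℝ) × (Fin p → Fin n → ℝ) =>
        (√((α + β) / α) • q.1, fun j b => q.2 b j)) (by fun_prop)).measurableSet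
  have hsplit : {W | OpNormSqExceeds ((α + β) ^ 2) (Fin.cons r 0) W}
      ⊆ MeasurableEquiv.piFinSuccAbove (fun _ => Fin n → ℝ) 0 ⁻¹' (longRow ∪ longRest) := by
    intro W hW
    rcases lt_or_ge (α ^ 2) (∑ i, W 0 i ^ 2) with hc | hc
    · exact Or.inl (by simpa [longRow] using hc)
    · refine Or.inr ⟨by simpa using hc, ?_⟩
      rw [Set.mem_ofPred_eq, ← Fin.cons_self_tail W] at hW
      simpa [MeasurableEquiv.piFinSuccAbove, Fin.removeNth, Fin.tail] using
        hW.bidiagonalize hα hβ hr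
  calc _ ≤ _ := measure_mono hsplit
    _ = _ := (measurePreserving_piFinSuccAbove (fun _ : Fin (p + 1) => gaussianVector (Fin n))
        0).measure_preimage (hlongRow.union hlongRest).nullMeasurableSet
    _ ≤ _ := measure_union_le _ _
    _ ≤ δ + ε := add_le_add
        (prod_measure_le_of_forall_right_section_le _ _ hlongRow fun _ => hrow) ?_
  refine prod_measure_le_of_forall_left_section_le _ _ hlongRest fun c => ?_
  by_cases hc : ∑ i, c i ^ 2 ≤ α ^ 2
  · have hle := hrest c hc
    rw [← (measurePreserving_transpose_gaussianMatrix (Fin p) (Fin n)).measure_preimage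
      (OpNormSqExceeds.isOpen_setOf_right _ _).measurableSet.nullMeasurableSet] at hle
    exact (measure_mono fun W hW => hW.2).trans hle
  · have hempty : {W : Fin p → Fin n → ℝ | (c, W) ∈ longRest} = ∅ := by
      ext W; simp [longRest, hc]
    simp [hempty]

/-- **Silverstein's bound**. Every bidiagonalisation step transposes the problem, which exchanges
the roles of `α` and `β`. -/
lemma measure_opNormSqExceeds_le {δ : ENNReal} {α β : ℝ} (hα : 0 < α) (hβ : 0 < β)
    (hαδ : ∀ d ≤ n, gaussianVector (Fin d) {c | α ^ 2 < ∑ i, c i ^ 2} ≤ δ)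
    (hβδ : ∀ d ≤ p, gaussianVector (Fin d) {c | β ^ 2 < ∑ i, c i ^ 2} ≤ δ)
    {u : Fin p → ℝ} (hu : ∑ a, u a ^ 2 ≤ β * (α + β)) :
    gaussianMatrix (Fin p) (Fin n) {W | OpNormSqExceeds ((α + β) ^ 2) u W} ≤ (p + n : ℕ) * δ := by
  induction hm : p + n generalizing p n α β with
  | zero =>
    obtain rfl : p = 0 := by lia
    simp [OpNormSqExceeds]
  | succ m ih =>
    rcases p with _ | p
    · simp [OpNormSqExceeds]
    have hr : √(∑ a, u a ^ 2) ^ 2 ≤ β * (α + β) := by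
      rwa [Real.sq_sqrt (Finset.sum_nonneg fun a _ => sq_nonneg (u a))]
    have hrest : ∀ c : Fin n → ℝ, ∑ i, c i ^ 2 ≤ α ^ 2 → gaussianMatrix (Fin n) (Fin p)
        {W | OpNormSqExceeds ((α + β) ^ 2) (√((α + β) / α) • c) W} ≤ m * δ := by
      intro c hc
      have hcolumn : ∑ i, (√((α + β) / α) • c) i ^ 2 ≤ α * (β + α) := by
        simp only [Pi.smul_apply, smul_eq_mul, mul_pow]
        rw [← Finset.mul_sum, Real.sq_sqrt (by positivity)]
        calc (α + β) / α * ∑ i, c i ^ 2 ≤ (α + β) / α * α ^ 2 := by gcongr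
          _ = α * (β + α) := by field_simp; ring
      simpa only [add_comm β α] using ih hβ hα (fun d hd => hβδ d (by lia)) hαδ hcolumn (by lia)
    calc _ ≤ _ := measure_opNormSqExceeds_le_cons _ u
      _ ≤ δ + m * δ := measure_opNormSqExceeds_cons_le hα hβ hr (hαδ n le_rfl) hrest
      _ = (m + 1 : ℕ) * δ := by push_cast; ring

end Silverstein

lemma exists_sq_sqrt_add_sqrt_lt_of_bGamma_lt {γ B : ℝ} (hB : bGamma γ < B) :
    ∃ ε > 0, (√(1 + ε) + √(γ⁻¹ + 2 * ε)) ^ 2 < B := by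
  have hcont : Continuous fun ε : ℝ => (√(1 + ε) + √(γ⁻¹ + 2 * ε)) ^ 2 := by fun_prop
  have hzero : (√(1 + 0) + √(γ⁻¹ + 2 * 0)) ^ 2 < B := by
    rw [bGamma] at hB; simpa [Real.sqrt_inv] using hB
  obtain ⟨ε, hεB, hε⟩ := (((hcont.tendsto 0).eventually (gt_mem_nhds hzero)).filter_mono
    nhdsWithin_le_nhds |>.and (self_mem_nhdsWithin (s := Set.Ioi (0 : ℝ)))).exists
  exact ⟨ε, hε, hεB⟩

lemma exists_gaussianVector_sum_sq_tail {C ε : ℝ} (hC : 0 < C) (hε : 0 < ε) :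
    ∃ c > 0, ∀ (n d : ℕ) (x : ℝ), (d : ℝ) ≤ C * n → d + ε * n ≤ x →
      gaussianVector (Fin d) {v | x < ∑ i, v i ^ 2} ≤ ENNReal.ofReal (2 * Real.exp (-(c * n))) := by
  obtain ⟨c, hc, htail⟩ := hasSubexponentialMGF_sq_sub_one.exists_measure_abs_sum_mul_le_exp
    (K := 1) one_pos hC hε
  refine ⟨c, hc, fun n d x hd hx => (measure_mono fun v hv => ?_).trans
    (htail n d (fun _ => 1) hd (by simp))⟩
  have hcentred : ε * n ≤ ∑ i, 1 * (v i ^ 2 - 1) := by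
    simp only [one_mul, Finset.sum_sub_distrib, Finset.sum_const, Finset.card_univ,
      Fintype.card_fin, nsmul_eq_mul, mul_one]
    linarith [show x < ∑ i, v i ^ 2 from hv]
  exact hcentred.trans (le_abs_self _)

lemma gaussianMatrix_opNormSq_le {N q : ℕ} {α β B : ℝ} {δ : ENNReal} (hα : 0 < α) (hβ : 0 < β)
    (hαδ : ∀ d ≤ N, gaussianVector (Fin d) {c | α ^ 2 < ∑ i, c i ^ 2} ≤ δ)
    (hβδ : ∀ d ≤ q, gaussianVector (Fin d) {c | β ^ 2 < ∑ i, c i ^ 2} ≤ δ)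
    (hB : (α + β) ^ 2 ≤ B) :
    gaussianMatrix (Fin N) (Fin q)
      {W | ∃ y : Fin q → ℝ, B * ∑ j, y j ^ 2 < ∑ i, (∑ j, W i j * y j) ^ 2} ≤ (q + N : ℕ) * δ := by
  have hbound := measure_opNormSqExceeds_le hα hβ hαδ hβδ (u := 0) (by
    simp only [Pi.zero_apply, zero_pow two_ne_zero, Finset.sum_const_zero]
    positivity)
  rw [← (measurePreserving_transpose_gaussianMatrix (Fin N) (Fin q)).measure_preimage
    (OpNormSqExceeds.isOpen_setOf_right _ _).measurableSet.nullMeasurableSet] at hbound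
  refine (measure_mono ?_).trans hbound
  rintro W ⟨y, hy⟩
  refine ⟨y, lt_of_le_of_lt ?_ (hy.trans_eq (by simp [mul_comm]))⟩
  gcongr

lemma exists_gaussianMatrix_opNormSq_tail {γ : ℝ} (hγ : 0 < γ) {B : ℝ} (hB : bGamma γ < B)
    (N q : ℕ → ℕ) (hN : ∀ n, N n ≤ n) (hq : Tendsto (fun n => (q n : ℝ) / n) atTop (𝓝 γ⁻¹)) :
    ∃ c > 0, ∃ A : ℝ, ∀ᶠ n : ℕ in atTop, gaussianMatrix (Fin (N n)) (Fin (q n))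
      {W | ∃ y : Fin (q n) → ℝ, B * n * ∑ j, y j ^ 2 < ∑ i, (∑ j, W i j * y j) ^ 2}
        ≤ ENNReal.ofReal (A * n * Real.exp (-(c * n))) := by
  have : 0 < γ⁻¹ := by positivity
  obtain ⟨ε, hε, hεB⟩ := exists_sq_sqrt_add_sqrt_lt_of_bGamma_lt hB
  obtain ⟨c, hc, htail⟩ := exists_gaussianVector_sum_sq_tail (C := 1 + ε + γ⁻¹) (by positivity) hε
  refine ⟨c, hc, 2 * (2 + ε + γ⁻¹), ?_⟩
  filter_upwards [hq.eventually (gt_mem_nhds (show γ⁻¹ < γ⁻¹ + ε by linarith)),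
    eventually_gt_atTop 0] with n hqn hn
  have hn' : (0 : ℝ) < n := by exact_mod_cast hn
  rw [div_lt_iff₀ hn'] at hqn
  have hsq : ∀ x : ℝ, 0 ≤ x → (√x * √n) ^ 2 = x * n := fun x hx => by
    rw [mul_pow, Real.sq_sqrt hx, Real.sq_sqrt hn'.le]
  have hNn : (N n : ℝ) ≤ n := by exact_mod_cast hN n
  have hedge : (√(1 + ε) * √n + √(γ⁻¹ + 2 * ε) * √n) ^ 2 ≤ B * n := by
    rw [← add_mul, mul_pow, Real.sq_sqrt hn'.le]
    gcongr
  have hrows : ∀ d ≤ N n, gaussianVector (Fin d) {v | (√(1 + ε) * √n) ^ 2 < ∑ i, v i ^ 2}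
      ≤ ENNReal.ofReal (2 * Real.exp (-(c * n))) := fun d hd => by
    have hd' : (d : ℝ) ≤ N n := by exact_mod_cast hd
    exact htail n d _ (by nlinarith) (by rw [hsq _ (by positivity)]; linarith)
  have hcols : ∀ d ≤ q n, gaussianVector (Fin d) {v | (√(γ⁻¹ + 2 * ε) * √n) ^ 2 < ∑ i, v i ^ 2}
      ≤ ENNReal.ofReal (2 * Real.exp (-(c * n))) := fun d hd => by
    have hd' : (d : ℝ) ≤ q n := by exact_mod_cast hd
    exact htail n d _ (by linarith) (by rw [hsq _ (by positivity)]; linarith)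
  refine (gaussianMatrix_opNormSq_le (by positivity) (by positivity) hrows hcols hedge).trans ?_
  rw [← ENNReal.ofReal_natCast, ← ENNReal.ofReal_mul (by positivity)]
  refine ENNReal.ofReal_le_ofReal ?_
  push_cast
  calc (q n + N n : ℝ) * (2 * Real.exp (-(c * n)))
      ≤ ((2 + ε + γ⁻¹) * n) * (2 * Real.exp (-(c * n))) := by gcongr; linarith
    _ = _ := by ring

/-! ### Quadratic forms and rank-one updates -/

section QuadraticForms

variable {ι κ : Type*} [Fintype ι] [Fintype κ]

lemma zero_le_dotProduct_self (y : ι → ℝ) : 0 ≤ y ⬝ᵥ y := by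
  simpa using dotProduct_self_star_nonneg y

lemma dotProduct_self_eq_sum_sq (y : ι → ℝ) : y ⬝ᵥ y = ∑ i, y i ^ 2 := by
  simp only [dotProduct, sq]

omit [Fintype κ] in
lemma isHermitian_transpose_mul_self (V : Matrix ι κ ℝ) : (Vᵀ * V).IsHermitian := by
  simpa using isHermitian_conjTranspose_mul_self V

lemma dotProduct_transpose_mul_self_mulVec (V : Matrix ι κ ℝ) (y : κ → ℝ) :
    y ⬝ᵥ (Vᵀ * V) *ᵥ y = (V *ᵥ y) ⬝ᵥ (V *ᵥ y) := by
  rw [← mulVec_mulVec, dotProduct_mulVec, vecMul_transpose]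

variable [DecidableEq ι] {R : Matrix ι ι ℝ}

lemma exists_eigenvector_dotProduct_mulVec (hR : R.IsHermitian) (i : ι) :
    ∃ y : ι → ℝ, y ⬝ᵥ y = 1 ∧ y ⬝ᵥ R *ᵥ y = hR.eigenvalues i := by
  refine ⟨(hR.eigenvectorBasis i).ofLp, ?_, by simpa using (hR.eigenvalues_eq i).symm⟩
  have hnorm := hR.eigenvectorBasis.norm_eq_one i
  rw [EuclideanSpace.norm_eq, Real.sqrt_eq_one] at hnorm
  simpa [dotProduct_self_eq_sum_sq] using hnorm

lemma abs_eigenvalues_le (hR : R.IsHermitian) {K : ℝ}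
    (hK : ∀ y, |y ⬝ᵥ R *ᵥ y| ≤ K * (y ⬝ᵥ y)) (i : ι) : |hR.eigenvalues i| ≤ K := by
  obtain ⟨y, hy, hform⟩ := exists_eigenvector_dotProduct_mulVec hR i
  simpa [hform, hy] using hK y

lemma dotProduct_mulVec_eq_sum_eigenvalues (hR : R.IsHermitian) (w : ι → ℝ) :
    w ⬝ᵥ R *ᵥ w
      = ∑ i, hR.eigenvalues i * (hR.eigenvectorBasis.repr (WithLp.toLp 2 w)).ofLp i ^ 2 := by
  have hcoord : ∀ i, (hR.eigenvectorBasis.repr (WithLp.toLp 2 (R *ᵥ w))).ofLp i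
      = hR.eigenvalues i * (hR.eigenvectorBasis.repr (WithLp.toLp 2 w)).ofLp i := fun i => by
    have hsymm : Rᵀ = R := by simpa using hR.eq
    simp only [OrthonormalBasis.repr_apply_apply, EuclideanSpace.inner_eq_star_dotProduct,
      star_trivial]
    rw [dotProduct_comm, dotProduct_mulVec, ← mulVec_transpose, hsymm,
      hR.mulVec_eigenvectorBasis, smul_dotProduct, smul_eq_mul, dotProduct_comm]
  have hisometry := hR.eigenvectorBasis.repr.inner_map_map (WithLp.toLp 2 (R *ᵥ w))
    (WithLp.toLp 2 w)
  simp only [EuclideanSpace.inner_eq_star_dotProduct, star_trivial] at hisometry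
  rw [← hisometry]
  simp only [dotProduct, hcoord]
  exact Finset.sum_congr rfl fun i _ => by ring

end QuadraticForms

section RankOneUpdate

variable {ι : Type*} [Fintype ι] [DecidableEq ι]

lemma inv_add_smul_vecMulVec {K : Type*} [Field K] {B : Matrix ι ι K} (hB : IsUnit B.det) (c : K)
    (u v : ι → K) (h : 1 + c * (v ⬝ᵥ B⁻¹ *ᵥ u) ≠ 0) :
    (B + c • vecMulVec u v)⁻¹
      = B⁻¹ - (c / (1 + c * (v ⬝ᵥ B⁻¹ *ᵥ u))) • vecMulVec (B⁻¹ *ᵥ u) (v ᵥ* B⁻¹) := by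
  refine inv_eq_right_inv ?_
  have hBB : B *ᵥ B⁻¹ *ᵥ u = u := by rw [mulVec_mulVec, mul_nonsing_inv _ hB, one_mulVec]
  rw [Matrix.add_mul, Matrix.mul_sub, Matrix.mul_sub, mul_nonsing_inv _ hB, Matrix.mul_smul,
    Matrix.mul_smul, mul_vecMulVec, hBB, Matrix.smul_mul, Matrix.smul_mul, vecMulVec_mul,
    vecMulVec_mul_vecMulVec]
  ext i j
  simp only [Matrix.add_apply, Matrix.sub_apply, Matrix.smul_apply, vecMulVec_apply,
    Pi.smul_apply, smul_eq_mul]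
  field_simp
  ring

lemma dotProduct_inv_add_smul_vecMulVec_mulVec {K : Type*} [Field K] {B : Matrix ι ι K}
    (hB : IsUnit B.det) (c : K) (u v : ι → K) (h : 1 + c * (v ⬝ᵥ B⁻¹ *ᵥ u) ≠ 0) :
    v ⬝ᵥ (B + c • vecMulVec u v)⁻¹ *ᵥ u
      = (v ⬝ᵥ B⁻¹ *ᵥ u) / (1 + c * (v ⬝ᵥ B⁻¹ *ᵥ u)) := by
  rw [inv_add_smul_vecMulVec hB c u v h, sub_mulVec, smul_mulVec, vecMulVec_mulVec,
    dotProduct_sub, dotProduct_smul, op_smul_eq_smul, dotProduct_smul, ← dotProduct_mulVec]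
  generalize v ⬝ᵥ B⁻¹ *ᵥ u = a at h ⊢
  rw [eq_div_iff h]
  simp only [smul_eq_mul]
  linear_combination (-(a * a)) * div_mul_cancel₀ c h

lemma abs_trace_inv_add_smul_vecMulVec_sub_le {B : Matrix ι ι ℝ} (hB : B.PosDef) {t : ℝ}
    (ht : 0 < t) (hBt : ∀ y, t * (y ⬝ᵥ y) ≤ y ⬝ᵥ B *ᵥ y) {c : ℝ} (hc : 0 ≤ c) (v : ι → ℝ) :
    |(B + c • vecMulVec v v)⁻¹.trace - B⁻¹.trace| ≤ 1 / t := by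
  have hdet : IsUnit B.det := (isUnit_iff_isUnit_det _).mp hB.isUnit
  set y := B⁻¹ *ᵥ v with hy
  have hsymm : v ᵥ* B⁻¹ = y := by
    rw [hy, ← mulVec_transpose, show (B⁻¹)ᵀ = B⁻¹ by simpa using hB.inv.isHermitian.eq]
  have hBy : B *ᵥ y = v := by rw [hy, mulVec_mulVec, mul_nonsing_inv _ hdet, one_mulVec]
  have hyy : 0 ≤ y ⬝ᵥ y := zero_le_dotProduct_self y
  have hty : t * (y ⬝ᵥ y) ≤ v ⬝ᵥ y := by simpa [hBy, dotProduct_comm] using hBt y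
  have hvy : 0 ≤ v ⬝ᵥ y := le_trans (by positivity) hty
  rw [inv_add_smul_vecMulVec hdet c v v (by positivity), trace_sub, trace_smul, hsymm,
    trace_vecMulVec, sub_sub_cancel_left, abs_neg, smul_eq_mul, abs_of_nonneg (by positivity),
    div_mul_eq_mul_div, div_le_div_iff₀ (by positivity) ht]
  nlinarith [mul_le_mul_of_nonneg_left hty hc]

end RankOneUpdate

lemma exists_gaussianVector_quadraticForm_tail {K C ε : ℝ} (hK : 0 < K) (hC : 0 < C) (hε : 0 < ε) :
    ∃ c > 0, ∀ (n q : ℕ) (R : Matrix (Fin q) (Fin q) ℝ), (q : ℝ) ≤ C * n → R.IsHermitian →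
      (∀ y, |y ⬝ᵥ R *ᵥ y| ≤ K * (y ⬝ᵥ y)) →
      gaussianVector (Fin q) {w | ε * n ≤ |w ⬝ᵥ R *ᵥ w - R.trace|}
        ≤ ENNReal.ofReal (2 * Real.exp (-(c * n))) := by
  obtain ⟨c, hc, htail⟩ :=
    hasSubexponentialMGF_sq_sub_one.exists_measure_abs_sum_mul_le_exp hK hC hε
  refine ⟨c, hc, fun n q R hq hR hRK => ?_⟩
  refine le_of_eq_of_le ?_ (htail n q hR.eigenvalues hq (abs_eigenvalues_le hR hRK))
  have hmeas : MeasurableSet {x : Fin q → ℝ | ε * n ≤ |∑ i, hR.eigenvalues i * (x i ^ 2 - 1)|} :=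
    measurableSet_le (by fun_prop) (by fun_prop)
  rw [← (measurePreserving_rotate_gaussianVector
    hR.eigenvectorBasis.repr).measure_preimage hmeas.nullMeasurableSet]
  congr 1
  ext w
  simp [dotProduct_mulVec_eq_sum_eigenvalues hR, hR.trace_eq_sum_eigenvalues, mul_sub,
    Finset.sum_sub_distrib]

/-! ### The resolvent of a Gaussian sample covariance matrix -/

/-- The regularised sample covariance matrix `n⁻¹ VᵀV + t` of the observations `V i`, normalised by
an arbitrary `n` in place of their number. -/
def regCov {ι κ : Type*} [Fintype ι] [DecidableEq κ] (n : ℕ) (t : ℝ) (V : ι → κ → ℝ) :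
    Matrix κ κ ℝ :=
  (n : ℝ)⁻¹ • ((of V)ᵀ * of V) + t • 1

section RegCov

variable {ι κ : Type*} [Fintype ι] [Fintype κ] [DecidableEq κ] (n : ℕ) {t : ℝ}

lemma mul_dotProduct_self_le_regCov (V : ι → κ → ℝ) (y : κ → ℝ) :
    t * (y ⬝ᵥ y) ≤ y ⬝ᵥ regCov n t V *ᵥ y := by
  have hgram : 0 ≤ (n : ℝ)⁻¹ * ((of V *ᵥ y) ⬝ᵥ (of V *ᵥ y)) :=
    mul_nonneg (by positivity) (zero_le_dotProduct_self _)
  simp only [regCov, add_mulVec, dotProduct_add, smul_mulVec, one_mulVec, dotProduct_smul,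
    dotProduct_transpose_mul_self_mulVec, smul_eq_mul]
  linarith

omit [Fintype κ] in
lemma posDef_regCov [Finite κ] (ht : 0 < t) (V : ι → κ → ℝ) : (regCov n t V).PosDef :=
  (PosDef.one.smul ht).posSemidef_add
    ((by simpa using posSemidef_conjTranspose_mul_self (of V) :
      ((of V)ᵀ * of V).PosSemidef).smul (by positivity : 0 ≤ (n : ℝ)⁻¹))

lemma isUnit_det_regCov (ht : 0 < t) (V : ι → κ → ℝ) : IsUnit (regCov n t V).det :=
  (isUnit_iff_isUnit_det _).mp (posDef_regCov n ht V).isUnit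

lemma continuous_inv_regCov (ht : 0 < t) :
    Continuous fun V : ι → κ → ℝ => (regCov n t V)⁻¹ := by
  have hregCov : Continuous fun V : ι → κ → ℝ => regCov n t V := by
    have hof : Continuous fun V : ι → κ → ℝ => of V := continuous_id
    exact ((hof.matrix_transpose.matrix_mul hof).const_smul (n : ℝ)⁻¹).add continuous_const
  simp only [inv_def, Ring.inverse_eq_inv']
  exact (hregCov.matrix_det.inv₀ fun V => (posDef_regCov n ht V).det_pos.ne').smul
    hregCov.matrix_adjugate

lemma abs_dotProduct_inv_regCov_mulVec_le (ht : 0 < t) (V : ι → κ → ℝ) (y : κ → ℝ) :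
    |y ⬝ᵥ (regCov n t V)⁻¹ *ᵥ y| ≤ t⁻¹ * (y ⬝ᵥ y) := by
  set x := (regCov n t V)⁻¹ *ᵥ y with hx
  have hy : y = regCov n t V *ᵥ x := by
    rw [hx, mulVec_mulVec, mul_nonsing_inv _ (isUnit_det_regCov n ht V), one_mulVec]
  have htx : t * (x ⬝ᵥ x) ≤ y ⬝ᵥ x := by
    have hle := mul_dotProduct_self_le_regCov n (t := t) V x
    rwa [← hy, dotProduct_comm x y] at hle
  have hxx := zero_le_dotProduct_self x
  rw [abs_of_nonneg (le_trans (by positivity) htx), ← div_eq_inv_mul, le_div_iff₀ ht]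
  have hsquare := zero_le_dotProduct_self (y - t • x)
  simp only [sub_dotProduct, dotProduct_sub, smul_dotProduct, dotProduct_smul, smul_eq_mul,
    dotProduct_comm x y] at hsquare
  nlinarith

omit [Fintype κ] in
lemma regCov_eq_sum_vecMulVec (V : ι → κ → ℝ) :
    regCov n t V = ∑ i, (n : ℝ)⁻¹ • vecMulVec (V i) (V i) + t • 1 := by
  rw [regCov, ← Finset.smul_sum]
  congr 2
  ext a b
  simp [mul_apply, Matrix.sum_apply, vecMulVec_apply]

omit [Fintype κ] in
lemma regCov_eq_add_vecMulVec {N : ℕ} (V : Fin (N + 1) → κ → ℝ) (j : Fin (N + 1)) :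
    regCov n t V = regCov n t (fun a => V (j.succAbove a)) + (n : ℝ)⁻¹ • vecMulVec (V j) (V j) := by
  rw [regCov_eq_sum_vecMulVec, regCov_eq_sum_vecMulVec, Fin.sum_univ_succAbove _ j]
  abel

lemma card_sub_mul_trace_inv_regCov (ht : 0 < t) (V : ι → κ → ℝ) :
    (Fintype.card κ : ℝ) - t * (regCov n t V)⁻¹.trace
      = ∑ i, (n : ℝ)⁻¹ * (V i ⬝ᵥ (regCov n t V)⁻¹ *ᵥ V i) := by
  have htrace : (regCov n t V * (regCov n t V)⁻¹).trace = Fintype.card κ := by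
    rw [mul_nonsing_inv _ (isUnit_det_regCov n ht V), trace_one]
  nth_rw 1 [regCov_eq_sum_vecMulVec] at htrace
  rw [Matrix.add_mul, trace_add, Matrix.smul_mul, Matrix.one_mul, trace_smul, Finset.sum_mul,
    trace_sum] at htrace
  rw [← htrace, smul_eq_mul, add_sub_cancel_right]
  refine Finset.sum_congr rfl fun i _ => ?_
  rw [Matrix.smul_mul, trace_smul, vecMulVec_mul, trace_vecMulVec, smul_eq_mul,
    dotProduct_mulVec, dotProduct_comm]

/-- The error in the Marchenko–Pastur equation `q / n - t s = (N / n) s / (1 + s)` for the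
normalised trace `s` of the resolvent of an `N × q` sample. -/
def mpResidual (n : ℕ) (t : ℝ) (V : ι → κ → ℝ) : ℝ :=
  let s := (regCov n t V)⁻¹.trace / n
  (Fintype.card κ : ℝ) / n - t * s - (Fintype.card ι : ℝ) / n * (s / (1 + s))

lemma abs_div_one_add_sub_div_one_add_le {a s : ℝ} (ha : 0 ≤ a) (hs : 0 ≤ s) :
    |a / (1 + a) - s / (1 + s)| ≤ |a - s| := by
  have hdiff : a / (1 + a) - s / (1 + s) = (a - s) / ((1 + a) * (1 + s)) := by
    field_simp; ring
  rw [hdiff, abs_div, abs_of_pos (a := (1 + a) * (1 + s)) (by positivity)]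
  exact div_le_self (abs_nonneg _) (by nlinarith [mul_nonneg ha hs])

/-- Leave-one-out comparison of the summands of `card_sub_mul_trace_inv_regCov`: by
Sherman–Morrison, such a summand is `a / (1 + a)`, where `a` involves the resolvent without the row
`V j`, which is close to the normalised trace when `V j` is independent of the other rows. -/
lemma abs_leaveOneOut_sub_le {N : ℕ} {n : ℕ} (hn : 0 < n) {ε : ℝ} (ht : 0 < t)
    (V : Fin (N + 1) → κ → ℝ) (j : Fin (N + 1))
    (h : |V j ⬝ᵥ (regCov n t fun a => V (j.succAbove a))⁻¹ *ᵥ V j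
      - (regCov n t fun a => V (j.succAbove a))⁻¹.trace| ≤ ε * n) :
    |(n : ℝ)⁻¹ * (V j ⬝ᵥ (regCov n t V)⁻¹ *ᵥ V j)
      - (regCov n t V)⁻¹.trace / n / (1 + (regCov n t V)⁻¹.trace / n)| ≤ ε + 1 / (t * n) := by
  have hn' : (0 : ℝ) < n := by exact_mod_cast hn
  set B := regCov n t fun a => V (j.succAbove a)
  have hB : B.PosDef := posDef_regCov n ht _
  have hupdate : regCov n t V = B + (n : ℝ)⁻¹ • vecMulVec (V j) (V j) :=
    regCov_eq_add_vecMulVec n V j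
  have htrace := abs_trace_inv_add_smul_vecMulVec_sub_le hB ht (mul_dotProduct_self_le_regCov n _)
    (inv_nonneg.mpr hn'.le) (V j)
  rw [← hupdate] at htrace
  have hform : 0 ≤ V j ⬝ᵥ B⁻¹ *ᵥ V j := by
    simpa using hB.inv.posSemidef.dotProduct_mulVec_nonneg (V j)
  have hs : 0 ≤ (regCov n t V)⁻¹.trace / n :=
    div_nonneg (posDef_regCov n ht V).inv.posSemidef.trace_nonneg hn'.le
  set a := (n : ℝ)⁻¹ * (V j ⬝ᵥ B⁻¹ *ᵥ V j) with ha
  have ha0 : 0 ≤ a := by positivity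
  have hsummand : (n : ℝ)⁻¹ * (V j ⬝ᵥ (regCov n t V)⁻¹ *ᵥ V j) = a / (1 + a) := by
    rw [hupdate, dotProduct_inv_add_smul_vecMulVec_mulVec (isUnit_det_regCov n ht _) _ _ _
      (by positivity), mul_div_assoc]
  rw [hsummand]
  calc |a / (1 + a) - (regCov n t V)⁻¹.trace / n / (1 + (regCov n t V)⁻¹.trace / n)|
      ≤ |a - (regCov n t V)⁻¹.trace / n| := abs_div_one_add_sub_div_one_add_le ha0 hs
    _ = |(V j ⬝ᵥ B⁻¹ *ᵥ V j - B⁻¹.trace) - ((regCov n t V)⁻¹.trace - B⁻¹.trace)| / n := by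
        rw [← abs_of_pos hn', ← abs_div, abs_of_pos hn', ha]; congr 1; ring
    _ ≤ (ε * n + 1 / t) / n := by gcongr; exact (abs_sub _ _).trans (add_le_add h htrace)
    _ = ε + 1 / (t * n) := by field_simp

lemma abs_mpResidual_le {N : ℕ} {n : ℕ} (hn : 0 < n) (hN : N + 1 ≤ n) {ε : ℝ} (ht : 0 < t)
    (hε : 0 ≤ ε) (V : Fin (N + 1) → κ → ℝ)
    (h : ∀ j, |V j ⬝ᵥ (regCov n t fun a => V (j.succAbove a))⁻¹ *ᵥ V j
      - (regCov n t fun a => V (j.succAbove a))⁻¹.trace| ≤ ε * n) :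
    |mpResidual n t V| ≤ ε + 1 / (t * n) := by
  have hn' : (0 : ℝ) < n := by exact_mod_cast hn
  have hN' : ((N + 1 : ℕ) : ℝ) ≤ n := by exact_mod_cast hN
  set s := (regCov n t V)⁻¹.trace / n with hs
  have hsum : mpResidual n t V
      = (∑ j, ((n : ℝ)⁻¹ * (V j ⬝ᵥ (regCov n t V)⁻¹ *ᵥ V j) - s / (1 + s))) / n := by
    rw [Finset.sum_sub_distrib, ← card_sub_mul_trace_inv_regCov n ht]
    simp only [mpResidual, Finset.sum_const, Finset.card_univ, nsmul_eq_mul, ← hs]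
    rw [hs]
    ring
  rw [hsum, abs_div, abs_of_pos hn', div_le_iff₀ hn']
  calc |∑ j, ((n : ℝ)⁻¹ * (V j ⬝ᵥ (regCov n t V)⁻¹ *ᵥ V j) - s / (1 + s))|
      ≤ ∑ j, |(n : ℝ)⁻¹ * (V j ⬝ᵥ (regCov n t V)⁻¹ *ᵥ V j) - s / (1 + s)| :=
        Finset.abs_sum_le_sum_abs _ _
    _ ≤ ∑ _j : Fin (N + 1), (ε + 1 / (t * n)) :=
        Finset.sum_le_sum fun j _ => abs_leaveOneOut_sub_le hn ht V j (h j)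
    _ = ((N + 1 : ℕ) : ℝ) * (ε + 1 / (t * n)) := by
        rw [Finset.sum_const, Finset.card_univ, Fintype.card_fin, nsmul_eq_mul]
    _ ≤ n * (ε + 1 / (t * n)) := by gcongr
    _ = (ε + 1 / (t * n)) * n := mul_comm _ _

end RegCov

lemma exists_leaveOneOut_tail {t ε C : ℝ} (ht : 0 < t) (hε : 0 < ε) (hC : 0 < C) :
    ∃ c > 0, ∀ (n N q : ℕ) (j : Fin (N + 1)), (q : ℝ) ≤ C * n →
      gaussianMatrix (Fin (N + 1)) (Fin q) {V | ε * n ≤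
          |V j ⬝ᵥ (regCov n t fun a => V (j.succAbove a))⁻¹ *ᵥ V j
            - (regCov n t fun a => V (j.succAbove a))⁻¹.trace|}
        ≤ ENNReal.ofReal (2 * Real.exp (-(c * n))) := by
  obtain ⟨c, hc, hquad⟩ := exists_gaussianVector_quadraticForm_tail (inv_pos.mpr ht) hC hε
  refine ⟨c, hc, fun n N q j hq => ?_⟩
  set S : Set ((Fin q → ℝ) × (Fin N → Fin q → ℝ)) :=
    {x | ε * n ≤ |x.1 ⬝ᵥ (regCov n t x.2)⁻¹ *ᵥ x.1 - (regCov n t x.2)⁻¹.trace|}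
  have hS : MeasurableSet S := by
    have hinv : Continuous fun x : (Fin q → ℝ) × (Fin N → Fin q → ℝ) => (regCov n t x.2)⁻¹ :=
      (continuous_inv_regCov n ht).comp continuous_snd
    exact (isClosed_le continuous_const ((continuous_fst.dotProduct
      (hinv.matrix_mulVec continuous_fst)).sub hinv.matrix_trace).abs).measurableSet
  have hsplit := (measurePreserving_piFinSuccAbove
    (fun _ : Fin (N + 1) => gaussianVector (Fin q)) j).measure_preimage hS.nullMeasurableSet
  change gaussianMatrix (Fin (N + 1)) (Fin q)
    (MeasurableEquiv.piFinSuccAbove (fun _ => Fin q → ℝ) j ⁻¹' S) ≤ _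
  rw [hsplit]
  exact prod_measure_le_of_forall_right_section_le _ _ hS fun V =>
    hquad n q (regCov n t V)⁻¹ hq (posDef_regCov n ht V).inv.isHermitian
      (abs_dotProduct_inv_regCov_mulVec_le n ht V)

lemma exists_mpResidual_tail {t ε C : ℝ} (ht : 0 < t) (hε : 0 < ε) (hC : 0 < C) :
    ∃ c > 0, ∃ n₀ : ℕ, ∀ n N q : ℕ, n₀ ≤ n → 0 < N → N ≤ n → (q : ℝ) ≤ C * n →
      gaussianMatrix (Fin N) (Fin q) {V | ε ≤ |mpResidual n t V|}
        ≤ ENNReal.ofReal (2 * n * Real.exp (-(c * n))) := by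
  obtain ⟨c, hc, htail⟩ := exists_leaveOneOut_tail ht (by positivity : 0 < ε / 4) hC
  obtain ⟨n₀, hn₀⟩ := exists_nat_gt (4 / (t * ε))
  refine ⟨c, hc, n₀, ?_⟩
  rintro n (_ | N) q hn₀n hNpos hN hq
  · exact absurd hNpos (lt_irrefl 0)
  have hn : 0 < n := by lia
  have hN' : ((N + 1 : ℕ) : ℝ) ≤ n := by exact_mod_cast hN
  have hsmall : ε / 4 + 1 / (t * n) < ε := by
    have hnlarge : 4 / (t * ε) < n := hn₀.trans_le (by exact_mod_cast hn₀n)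
    have hinv : 1 / (t * n) < ε / 4 := by
      have hn' : (0 : ℝ) < n := by exact_mod_cast hn
      rw [div_lt_iff₀ (by positivity)] at hnlarge ⊢
      nlinarith
    linarith
  set bad : Fin (N + 1) → Set (Fin (N + 1) → Fin q → ℝ) := fun j => {V | ε / 4 * n ≤
    |V j ⬝ᵥ (regCov n t fun a => V (j.succAbove a))⁻¹ *ᵥ V j
      - (regCov n t fun a => V (j.succAbove a))⁻¹.trace|} with hbad
  have hcover : {V | ε ≤ |mpResidual n t V|} ⊆ ⋃ j, bad j := by
    intro V hV
    by_contra hgood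
    simp only [hbad, Set.mem_iUnion, Set.mem_ofPred_eq, not_exists, not_le] at hgood hV
    linarith [abs_mpResidual_le hn hN ht (by positivity : 0 ≤ ε / 4) V fun j => (hgood j).le]
  calc _ ≤ gaussianMatrix (Fin (N + 1)) (Fin q) (⋃ j, bad j) := measure_mono hcover
    _ ≤ ∑ j, gaussianMatrix (Fin (N + 1)) (Fin q) (bad j) := measure_iUnion_fintype_le _ _
    _ ≤ ∑ _j : Fin (N + 1), ENNReal.ofReal (2 * Real.exp (-(c * n))) :=
        Finset.sum_le_sum fun j _ => htail n N q j hq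
    _ = ENNReal.ofReal ((N + 1 : ℕ) * (2 * Real.exp (-(c * n)))) := by
        rw [Finset.sum_const, Finset.card_univ, Fintype.card_fin, nsmul_eq_mul,
          ← ENNReal.ofReal_natCast, ← ENNReal.ofReal_mul (by positivity)]
    _ ≤ ENNReal.ofReal (2 * n * Real.exp (-(c * n))) := by
        refine ENNReal.ofReal_le_ofReal ?_
        calc ((N + 1 : ℕ) : ℝ) * (2 * Real.exp (-(c * n))) ≤ n * (2 * Real.exp (-(c * n))) := by
              gcongr
          _ = _ := by ring

/-! ### Ordered eigenvalues of Hermitian matrices -/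

section OrderedEigenvalues

variable {q : ℕ} {A : Matrix (Fin q) (Fin q) ℝ}

lemma length_eigsDesc (hA : A.IsHermitian) : (eigsDesc A).length = q := by
  simp only [eigsDesc, hA, dite_true, List.length_insertionSort, List.length_ofFn]

lemma perm_eigsDesc (hA : A.IsHermitian) : (eigsDesc A).Perm (List.ofFn hA.eigenvalues) := by
  simpa only [eigsDesc, hA, dite_true] using List.perm_insertionSort _ _

lemma pairwise_eigsDesc (hA : A.IsHermitian) : (eigsDesc A).Pairwise (· ≥ ·) := by
  simpa only [eigsDesc, hA, dite_true] using List.pairwise_insertionSort _ _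

lemma ithEigDesc_eq_getElem (hA : A.IsHermitian) (α : Fin q) :
    ithEigDesc A α = (eigsDesc A)[α.1]'((length_eigsDesc hA).symm ▸ α.2) := by
  rw [ithEigDesc, List.getD_eq_getElem]

lemma exists_ithEigDesc_eq_eigenvalues (hA : A.IsHermitian) (α : Fin q) :
    ∃ i, ithEigDesc A α = hA.eigenvalues i := by
  have hmem := (perm_eigsDesc hA).subset
    (List.getElem_mem ((length_eigsDesc hA).symm ▸ α.2 : α.1 < (eigsDesc A).length))
  obtain ⟨i, hi⟩ := (List.mem_ofFn' _ _).mp hmem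
  exact ⟨i, by rw [ithEigDesc_eq_getElem hA, hi]⟩

lemma antitone_ithEigDesc (hA : A.IsHermitian) : Antitone fun α : Fin q => ithEigDesc A α := by
  intro α β hαβ
  rcases hαβ.lt_or_eq with hlt | rfl
  · simp only [ithEigDesc_eq_getElem hA]
    exact List.pairwise_iff_getElem.mp (pairwise_eigsDesc hA) _ _ _ _ hlt
  · rfl

lemma sum_ithEigDesc (hA : A.IsHermitian) (f : ℝ → ℝ) :
    ∑ α : Fin q, f (ithEigDesc A α) = ∑ i, f (hA.eigenvalues i) := by
  have hlist : List.ofFn (fun α : Fin q => ithEigDesc A α) = eigsDesc A := by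
    refine List.ext_getElem (by simp [length_eigsDesc hA]) fun i _ _ => ?_
    rw [List.getElem_ofFn, ithEigDesc_eq_getElem hA]
  have hperm := ((perm_eigsDesc hA).map f).sum_eq
  rwa [← hlist, List.map_ofFn, List.map_ofFn, List.sum_ofFn, List.sum_ofFn] at hperm

end OrderedEigenvalues

section Traces

variable {κ : Type*} [Fintype κ] [DecidableEq κ] {A : Matrix κ κ ℝ}

lemma trace_conjStarAlgAut_diagonal (U : unitary (Matrix κ κ ℝ)) (d : κ → ℝ) :
    (Unitary.conjStarAlgAut ℝ _ U (diagonal d)).trace = ∑ i, d i := by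
  rw [Unitary.conjStarAlgAut_apply, trace_mul_cycle, Unitary.coe_star_mul_self, Matrix.one_mul,
    trace_diagonal]

lemma trace_pow_eq_sum_eigenvalues_pow (hA : A.IsHermitian) (m : ℕ) :
    (A ^ m).trace = ∑ i, hA.eigenvalues i ^ m := by
  conv_lhs => rw [hA.spectral_theorem]
  rw [← map_pow, diagonal_pow, trace_conjStarAlgAut_diagonal]
  simp

lemma trace_inv_smul_add_smul_one (hA : A.IsHermitian) (c t : ℝ)
    (h : ∀ i, c * hA.eigenvalues i + t ≠ 0) :
    (c • A + t • 1)⁻¹.trace = ∑ i, (c * hA.eigenvalues i + t)⁻¹ := by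
  set φ := Unitary.conjStarAlgAut ℝ (Matrix κ κ ℝ) hA.eigenvectorUnitary
  have hspectral : A = φ (diagonal hA.eigenvalues) := hA.spectral_theorem
  have hdiagonal : c • A + t • 1 = φ (diagonal fun i => c * hA.eigenvalues i + t) := by
    conv_lhs => rw [hspectral, ← map_one φ, ← map_smul, ← map_smul, ← map_add]
    rw [← diagonal_smul, smul_one_eq_diagonal, diagonal_add]
    rfl
  rw [hdiagonal, inv_eq_right_inv (B := φ (diagonal fun i => (c * hA.eigenvalues i + t)⁻¹)),
    trace_conjStarAlgAut_diagonal]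
  simp_rw [← map_mul, diagonal_mul_diagonal, mul_inv_cancel₀ (h _), diagonal_one, map_one]

end Traces

section GramEigenvalues

variable {ι : Type*} [Fintype ι] {q : ℕ}

lemma ithEigDesc_transpose_mul_self_nonneg (V : Matrix ι (Fin q) ℝ) (α : Fin q) :
    0 ≤ ithEigDesc (Vᵀ * V) α := by
  have hV : (Vᵀ * V).PosSemidef := by simpa using posSemidef_conjTranspose_mul_self V
  obtain ⟨i, hi⟩ := exists_ithEigDesc_eq_eigenvalues hV.isHermitian α
  exact hi ▸ hV.eigenvalues_nonneg i

lemma ithEigDesc_transpose_mul_self_le (V : Matrix ι (Fin q) ℝ) {b : ℝ}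
    (h : ∀ y : Fin q → ℝ, (V *ᵥ y) ⬝ᵥ (V *ᵥ y) ≤ b * (y ⬝ᵥ y)) (α : Fin q) :
    ithEigDesc (Vᵀ * V) α ≤ b := by
  obtain ⟨i, hi⟩ := exists_ithEigDesc_eq_eigenvalues (isHermitian_transpose_mul_self V) α
  obtain ⟨y, hy, hform⟩ := exists_eigenvector_dotProduct_mulVec (isHermitian_transpose_mul_self V) i
  rw [hi, ← hform, dotProduct_transpose_mul_self_mulVec]
  simpa [hy] using h y

lemma trace_inv_regCov_eq_sum_ithEigDesc (n : ℕ) {t : ℝ} (ht : 0 < t) (V : ι → Fin q → ℝ) :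
    (regCov n t V)⁻¹.trace
      = ∑ α : Fin q, (ithEigDesc ((Matrix.of V)ᵀ * Matrix.of V) α / n + t)⁻¹ := by
  have hV : ((Matrix.of V)ᵀ * Matrix.of V).PosSemidef := by
    simpa using posSemidef_conjTranspose_mul_self (Matrix.of V)
  have hpos : ∀ i, (n : ℝ)⁻¹ * hV.isHermitian.eigenvalues i + t ≠ 0 := fun i => by
    have := hV.eigenvalues_nonneg i
    positivity
  rw [sum_ithEigDesc hV.isHermitian fun x => (x / n + t)⁻¹, regCov,
    trace_inv_smul_add_smul_one hV.isHermitian _ _ hpos]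
  simp only [div_eq_inv_mul]

end GramEigenvalues

section Measurability

lemma tendsto_rpow_inv_sum_sub_sum_filter_lt {q : ℕ} {x : Fin q → ℝ} (hx : Antitone x)
    (hnonneg : ∀ β, 0 ≤ x β) (α : Fin q) :
    Tendsto (fun m : ℕ => (∑ β, x β ^ (m + 1) - ∑ β with β < α, x β ^ (m + 1))
      ^ ((m + 1 : ℕ) : ℝ)⁻¹) atTop (𝓝 (x α)) := by
  have htail : ∀ m : ℕ, ∑ β, x β ^ m - ∑ β with β < α, x β ^ m
      = ∑ β with ¬ β < α, x β ^ m := fun m => by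
    rw [← Finset.sum_filter_add_sum_filter_not Finset.univ (· < α), add_sub_cancel_left]
  have hroot : ∀ m : ℕ, (x α ^ (m + 1)) ^ ((m + 1 : ℕ) : ℝ)⁻¹ = x α := fun m =>
    Real.pow_rpow_inv_natCast (hnonneg α) m.succ_ne_zero
  have hlower : ∀ m : ℕ, x α ^ (m + 1) ≤ ∑ β with ¬ β < α, x β ^ (m + 1) := fun m =>
    Finset.single_le_sum (f := fun β => x β ^ (m + 1)) (fun β _ => pow_nonneg (hnonneg β) _)
      (by simp)
  have hupper : ∀ m : ℕ, ∑ β with ¬ β < α, x β ^ (m + 1) ≤ q * x α ^ (m + 1) := fun m => by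
    refine (Finset.sum_le_card_nsmul _ _ (x α ^ (m + 1)) fun β hβ => ?_).trans ?_
    · exact pow_le_pow_left₀ (hnonneg β) (hx (not_lt.mp (Finset.mem_filter.mp hβ).2)) _
    · rw [nsmul_eq_mul]
      refine mul_le_mul_of_nonneg_right ?_ (pow_nonneg (hnonneg α) _)
      exact_mod_cast (Finset.card_filter_le _ _).trans_eq (Finset.card_fin q)
  have hq : (q : ℝ) ≠ 0 := by exact_mod_cast (Nat.zero_le _).trans_lt α.2 |>.ne'
  have hconstant : Tendsto (fun m : ℕ => (q : ℝ) ^ ((m + 1 : ℕ) : ℝ)⁻¹ * x α) atTop (𝓝 (x α)) := by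
    have hinv : Tendsto (fun m : ℕ => ((m + 1 : ℕ) : ℝ)⁻¹) atTop (𝓝 0) := by
      simpa using tendsto_one_div_add_atTop_nhds_zero_nat (𝕜 := ℝ)
    simpa using ((Real.continuousAt_const_rpow hq).tendsto.comp hinv).mul_const (x α)
  refine tendsto_of_tendsto_of_tendsto_of_le_of_le tendsto_const_nhds hconstant
    (fun m => ?_) (fun m => ?_)
  · dsimp only
    rw [htail]
    nth_rw 1 [← hroot m]
    exact Real.rpow_le_rpow (pow_nonneg (hnonneg α) _) (hlower m) (by positivity)
  · dsimp only
    rw [htail]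
    nth_rw 1 [← hroot m]
    rw [← Real.mul_rpow (by positivity) (pow_nonneg (hnonneg α) _)]
    exact Real.rpow_le_rpow (Finset.sum_nonneg fun β _ => pow_nonneg (hnonneg β) _) (hupper m)
      (by positivity)

variable {ι : Type*} [Fintype ι] {q : ℕ}

lemma measurable_sum_ithEigDesc_pow (m : ℕ) :
    Measurable fun V : ι → Fin q → ℝ =>
      ∑ α : Fin q, ithEigDesc ((Matrix.of V)ᵀ * Matrix.of V) α ^ m := by
  have hof : Continuous fun V : ι → Fin q → ℝ => Matrix.of V := continuous_id
  have htrace := ((hof.matrix_transpose.matrix_mul hof).pow m).matrix_trace.measurable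
  convert htrace using 2 with V
  rw [sum_ithEigDesc (isHermitian_transpose_mul_self (Matrix.of V)) fun x => x ^ m,
    ← trace_pow_eq_sum_eigenvalues_pow]
  rfl

/-- By strong induction on `α`: the power sums of all eigenvalues are traces of powers, and removing
the larger eigenvalues leaves a tail whose `ℓ^m` norms converge to the `α`-th eigenvalue. -/
lemma measurable_ithEigDesc_transpose_mul_self (α : Fin q) :
    Measurable fun V : ι → Fin q → ℝ => ithEigDesc ((Matrix.of V)ᵀ * Matrix.of V) α := by
  induction α using WellFoundedLT.induction with
  | ind α ih =>
    have hhead : ∀ m : ℕ, Measurable fun V : ι → Fin q → ℝ =>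
        ∑ β : Fin q with β < α, ithEigDesc ((Matrix.of V)ᵀ * Matrix.of V) β ^ m := fun m =>
      Finset.measurable_fun_sum _ fun β hβ => (ih β (Finset.mem_filter.mp hβ).2).pow_const m
    refine measurable_of_tendsto_metrizable (fun m => ((measurable_sum_ithEigDesc_pow (m + 1)).sub
      (hhead (m + 1))).pow_const (((m + 1 : ℕ) : ℝ)⁻¹)) (tendsto_pi_nhds.mpr fun V => ?_)
    exact tendsto_rpow_inv_sum_sub_sum_filter_lt
      (antitone_ithEigDesc (isHermitian_transpose_mul_self (Matrix.of V)))
      (ithEigDesc_transpose_mul_self_nonneg (Matrix.of V)) α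

end Measurability

/-! ### The Marchenko–Pastur law -/

section Semicircle

lemma hasDerivAt_sqrt_mul_arcsin_div {A x : ℝ} (hA : 1 ≤ A) (hx : x ∈ Set.Ioo (-1) 1) :
    HasDerivAt (fun x => √(A ^ 2 - 1) * Real.arcsin ((A * x + 1) / (x + A)))
      ((A ^ 2 - 1) / ((x + A) * √(1 - x ^ 2))) x := by
  rcases hA.eq_or_lt with rfl | hA
  · simpa using hasDerivAt_const x (0 : ℝ)
  have hxA : 0 < x + A := by linarith [hx.1]
  have hx1 : 0 < 1 - x ^ 2 := by nlinarith [hx.1, hx.2]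
  have hA1 : 0 < A ^ 2 - 1 := by nlinarith
  have hcos : 1 - ((A * x + 1) / (x + A)) ^ 2 = (A ^ 2 - 1) * (1 - x ^ 2) / (x + A) ^ 2 := by
    field_simp
    ring
  have hpos : 0 < 1 - ((A * x + 1) / (x + A)) ^ 2 := by
    rw [hcos]
    positivity
  have hquotient : HasDerivAt (fun x => (A * x + 1) / (x + A))
      ((A * 1 * (x + A) - (A * x + 1) * 1) / (x + A) ^ 2) x :=
    (((hasDerivAt_id x).const_mul A).add_const 1).div ((hasDerivAt_id x).add_const A) hxA.ne'
  refine (((Real.hasDerivAt_arcsin (x := (A * x + 1) / (x + A)) (by rintro h; simp [h] at hpos)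
    (by rintro h; simp [h] at hpos)).comp x hquotient).const_mul √(A ^ 2 - 1)).congr_deriv ?_
  rw [hcos, Real.sqrt_div (by positivity), Real.sqrt_mul hA1.le, Real.sqrt_sq hxA.le]
  have : 0 < √(A ^ 2 - 1) := Real.sqrt_pos.mpr hA1
  have : 0 < √(1 - x ^ 2) := Real.sqrt_pos.mpr hx1
  field_simp
  ring

lemma continuousOn_sqrt_mul_arcsin_div {A : ℝ} (hA : 1 ≤ A) :
    ContinuousOn (fun x => √(A ^ 2 - 1) * Real.arcsin ((A * x + 1) / (x + A)))
      (Set.Icc (-1) 1) := by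
  rcases hA.eq_or_lt with rfl | hA
  · simpa using continuousOn_const
  · refine continuousOn_const.mul (Real.continuous_arcsin.comp_continuousOn ?_)
    exact ContinuousOn.div (by fun_prop) (by fun_prop) fun x hx => by linarith [hx.1]

/-- An antiderivative on `(-1, 1)` of the semicircle kernel `x ↦ √(1 - x²) / (x + A)`. -/
def semicirclePrimitive (A x : ℝ) : ℝ :=
  A * Real.arcsin x + √(1 - x ^ 2) - √(A ^ 2 - 1) * Real.arcsin ((A * x + 1) / (x + A))

lemma continuousOn_semicirclePrimitive {A : ℝ} (hA : 1 ≤ A) :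
    ContinuousOn (semicirclePrimitive A) (Set.Icc (-1) 1) :=
  ((continuous_const.mul Real.continuous_arcsin).add (by fun_prop)).continuousOn.sub
    (continuousOn_sqrt_mul_arcsin_div hA)

lemma hasDerivAt_semicirclePrimitive {A x : ℝ} (hA : 1 ≤ A) (hx : x ∈ Set.Ioo (-1) 1) :
    HasDerivAt (semicirclePrimitive A) (√(1 - x ^ 2) / (x + A)) x := by
  have hxA : 0 < x + A := by linarith [hx.1]
  have hx1 : 0 < 1 - x ^ 2 := by nlinarith [hx.1, hx.2]
  have hsqrt : HasDerivAt (fun x : ℝ => √(1 - x ^ 2)) (-(2 * x) / (2 * √(1 - x ^ 2))) x := by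
    simpa using ((hasDerivAt_pow 2 x).const_sub 1).sqrt hx1.ne'
  refine ((((Real.hasDerivAt_arcsin hx.1.ne' hx.2.ne).const_mul A).add hsqrt).sub
    (hasDerivAt_sqrt_mul_arcsin_div hA hx)).congr_deriv ?_
  have : 0 < √(1 - x ^ 2) := Real.sqrt_pos.mpr hx1
  field_simp
  rw [Real.sq_sqrt hx1.le]
  ring

lemma semicirclePrimitive_sub {A : ℝ} (hA : 1 ≤ A) :
    semicirclePrimitive A 1 - semicirclePrimitive A (-1) = Real.pi * (A - √(A ^ 2 - 1)) := by
  rcases hA.eq_or_lt with rfl | hA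
  · simp [semicirclePrimitive]
  · have hright : (A * 1 + 1) / (1 + A) = 1 := by
      rw [mul_one, add_comm, div_self (by linarith)]
    have hleft : (A * (-1) + 1) / (-1 + A) = -1 := by
      rw [div_eq_iff (by linarith)]
      ring
    rw [semicirclePrimitive, semicirclePrimitive, hright, hleft, Real.arcsin_one,
      Real.arcsin_neg_one]
    norm_num
    ring

lemma intervalIntegrable_semicircle {A : ℝ} (hA : 1 ≤ A) :
    IntervalIntegrable (fun x => √(1 - x ^ 2) / (x + A)) volume (-1) 1 := by
  have huIoo : Set.Ioo (min (-1) 1) (max (-1 : ℝ) 1) = Set.Ioo (-1) 1 := by norm_num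
  refine intervalIntegral.intervalIntegrable_deriv_of_nonneg (g := semicirclePrimitive A)
    ?_ (fun x hx => ?_) fun x hx => ?_
  · rw [Set.uIcc_of_le (by norm_num)]
    exact continuousOn_semicirclePrimitive hA
  · exact hasDerivAt_semicirclePrimitive hA (huIoo ▸ hx)
  · have hx : x ∈ Set.Ioo (-1 : ℝ) 1 := huIoo ▸ hx
    exact div_nonneg (Real.sqrt_nonneg _) (by linarith [hx.1])

lemma support_semicircle_subset (A : ℝ) :
    Function.support (fun x => √(1 - x ^ 2) / (x + A)) ⊆ Set.Ioc (-1) 1 := by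
  intro x hx
  have hsqrt : √(1 - x ^ 2) ≠ 0 := (div_ne_zero_iff.mp hx).1
  have hpos : x ^ 2 < 1 := by linarith [Real.sqrt_ne_zero'.mp hsqrt]
  exact ⟨(abs_lt.mp (sq_lt_one_iff_abs_lt_one x |>.mp hpos)).1,
    (abs_lt.mp (sq_lt_one_iff_abs_lt_one x |>.mp hpos)).2.le⟩

/-- The integral of `x ↦ √(1 - x²) / (x + A)` over `[-1, 1]`; outside this interval `Real.sqrt`
makes the integrand vanish. -/
def semicircleIntegral (A : ℝ) : ℝ := ∫ x, √(1 - x ^ 2) / (x + A)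

lemma integrable_semicircle {A : ℝ} (hA : 1 ≤ |A|) :
    Integrable fun x => √(1 - x ^ 2) / (x + A) := by
  have hof_one_le : ∀ A : ℝ, 1 ≤ A → Integrable fun x => √(1 - x ^ 2) / (x + A) := fun A hA => by
    rw [← integrableOn_iff_integrable_of_support_subset (support_semicircle_subset A),
      ← intervalIntegrable_iff_integrableOn_Ioc_of_le (by norm_num)]
    exact intervalIntegrable_semicircle hA
  rcases le_abs.mp hA with hA | hA
  · exact hof_one_le A hA
  · refine (hof_one_le (-A) hA).comp_neg.neg.congr (Eventually.of_forall fun x => ?_)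
    simp only [Pi.neg_apply, neg_sq]
    rw [← div_neg]
    ring

lemma semicircleIntegral_of_one_le {A : ℝ} (hA : 1 ≤ A) :
    semicircleIntegral A = Real.pi * (A - √(A ^ 2 - 1)) := by
  rw [semicircleIntegral, ← setIntegral_eq_integral_of_forall_compl_eq_zero fun x hx =>
      Function.notMem_support.mp (mt (support_semicircle_subset A ·) hx),
    ← intervalIntegral.integral_of_le (by norm_num),
    intervalIntegral.integral_eq_sub_of_hasDerivAt_of_le (by norm_num)
      (continuousOn_semicirclePrimitive hA) (fun x hx => hasDerivAt_semicirclePrimitive hA hx)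
      (intervalIntegrable_semicircle hA), semicirclePrimitive_sub hA]

lemma semicircleIntegral_neg (A : ℝ) : semicircleIntegral (-A) = -semicircleIntegral A := by
  rw [semicircleIntegral, semicircleIntegral, ← integral_neg, ← integral_neg_eq_self]
  congr with x
  rw [neg_sq, ← div_neg]
  ring

lemma semicircleIntegral_quadratic {A : ℝ} (hA : 1 ≤ |A|) :
    (semicircleIntegral A / Real.pi) ^ 2 - 2 * A * (semicircleIntegral A / Real.pi) + 1 = 0 := by
  have hof_one_le : ∀ A : ℝ, 1 ≤ A →
      (semicircleIntegral A / Real.pi) ^ 2 - 2 * A * (semicircleIntegral A / Real.pi) + 1 = 0 :=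
    fun A hA => by
      have hsq : √(A ^ 2 - 1) ^ 2 = A ^ 2 - 1 := Real.sq_sqrt (by nlinarith)
      rw [semicircleIntegral_of_one_le hA, mul_div_cancel_left₀ _ Real.pi_ne_zero]
      linear_combination hsq
  rcases le_abs.mp hA with hA | hA
  · exact hof_one_le A hA
  · have hneg := hof_one_le (-A) hA
    rw [semicircleIntegral_neg] at hneg
    linear_combination hneg

lemma integral_semicircle_div_mul {A B : ℝ} (hA : 1 ≤ |A|) (hB : 1 ≤ |B|) (hAB : A ≠ B) :
    ∫ x, √(1 - x ^ 2) / ((x + A) * (x + B))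
      = (B - A)⁻¹ * (semicircleIntegral A - semicircleIntegral B) := by
  rw [semicircleIntegral, semicircleIntegral, ← integral_sub (integrable_semicircle hA)
    (integrable_semicircle hB), ← integral_const_mul]
  congr with x
  by_cases hx : x ^ 2 < 1
  · have hne : ∀ C : ℝ, 1 ≤ |C| → x + C ≠ 0 := fun C hC h => by
      have habs := (sq_lt_one_iff_abs_lt_one x).mp hx
      rw [eq_neg_of_add_eq_zero_left h, abs_neg] at habs
      linarith
    have := hne A hA
    have := hne B hB
    have := sub_ne_zero.mpr hAB.symm
    field_simp
    ring
  · rw [Real.sqrt_eq_zero_of_nonpos (by linarith)]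
    simp

end Semicircle

section MarchenkoPastur

variable {γ : ℝ}

/-- The centre of the Marchenko–Pastur support in units of its half-width `2 / √γ`. -/
def mpCenter (γ : ℝ) : ℝ := (√γ + (√γ)⁻¹) / 2

lemma one_le_mpCenter (hγ : 0 < γ) : 1 ≤ mpCenter γ := by
  have hs := Real.sqrt_pos.mpr hγ
  have hinv := mul_inv_cancel₀ hs.ne'
  have := inv_pos.mpr hs
  rw [mpCenter]
  nlinarith [sq_nonneg (√γ - 1), sq_nonneg (√γ - (√γ)⁻¹)]

lemma aGamma_nonneg (γ : ℝ) : 0 ≤ aGamma γ := sq_nonneg _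

lemma aGamma_eq (hγ : 0 < γ) : aGamma γ = 2 / √γ * (-1 + mpCenter γ) := by
  have := Real.sqrt_pos.mpr hγ
  rw [aGamma, mpCenter]
  field_simp
  ring

lemma bGamma_eq (hγ : 0 < γ) : bGamma γ = 2 / √γ * (1 + mpCenter γ) := by
  have := Real.sqrt_pos.mpr hγ
  rw [bGamma, mpCenter]
  field_simp
  ring

lemma bGamma_pos (hγ : 0 < γ) : 0 < bGamma γ := by
  have := Real.sqrt_pos.mpr hγ
  rw [bGamma]
  positivity

lemma measurable_mpDensity (γ : ℝ) : Measurable (mpDensity γ) :=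
  Measurable.ite measurableSet_Icc (by fun_prop) measurable_const

lemma mpDensity_nonneg (hγ : 0 ≤ γ) (t : ℝ) : 0 ≤ mpDensity γ t := by
  unfold mpDensity
  split_ifs with ht
  · have := (aGamma_nonneg γ).trans ht.1
    have := Real.pi_pos
    positivity
  · rfl

lemma mpDensity_two_div_sqrt_mul (hγ : 0 < γ) (x : ℝ) :
    mpDensity γ (2 / √γ * (x + mpCenter γ))
      = γ / (2 * Real.pi) * (√(1 - x ^ 2) / (x + mpCenter γ)) := by
  have := Real.sqrt_pos.mpr hγ
  have hr : 0 < 2 / √γ := by positivity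
  rw [mpDensity, aGamma_eq hγ, bGamma_eq hγ]
  split_ifs with hx
  · have hproduct : (2 / √γ * (1 + mpCenter γ) - 2 / √γ * (x + mpCenter γ))
        * (2 / √γ * (x + mpCenter γ) - 2 / √γ * (-1 + mpCenter γ))
          = (2 / √γ) ^ 2 * (1 - x ^ 2) := by ring
    rw [hproduct, Real.sqrt_mul (sq_nonneg _), Real.sqrt_sq hr.le]
    field_simp
  · have hx2 : 1 ≤ x ^ 2 := by
      by_contra! h
      obtain ⟨hleft, hright⟩ := abs_lt.mp ((sq_lt_one_iff_abs_lt_one x).mp h)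
      exact hx ⟨by gcongr, by gcongr⟩
    rw [Real.sqrt_eq_zero_of_nonpos (by linarith)]
    simp

lemma integrable_mpDensity (hγ : 0 < γ) : Integrable (mpDensity γ) := by
  have := Real.sqrt_pos.mpr hγ
  have haffine : Integrable fun x => mpDensity γ (2 / √γ * (x + mpCenter γ)) := by
    simp only [mpDensity_two_div_sqrt_mul hγ]
    exact (integrable_semicircle ((one_le_mpCenter hγ).trans (le_abs_self _))).const_mul _
  refine (integrable_comp_mul_left_iff (mpDensity γ) (by positivity : 2 / √γ ≠ 0)).mp ?_
  simpa using haffine.comp_sub_right (mpCenter γ)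

lemma isFiniteMeasure_mpMeasure (hγ : 0 < γ) : IsFiniteMeasure (mpMeasure γ) :=
  isFiniteMeasure_withDensity_ofReal (integrable_mpDensity hγ).2

lemma mpMeasure_compl_Icc {B : ℝ} (hB : bGamma γ ≤ B) : mpMeasure γ (Set.Icc 0 B)ᶜ = 0 := by
  rw [mpMeasure, withDensity_apply _ measurableSet_Icc.compl,
    setLIntegral_eq_zero_iff measurableSet_Icc.compl (measurable_mpDensity γ).ennreal_ofReal]
  refine Eventually.of_forall fun t ht => ?_
  have : t ∉ Set.Icc (aGamma γ) (bGamma γ) := fun h =>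
    ht ⟨(aGamma_nonneg γ).trans h.1, h.2.trans hB⟩
  simp [mpDensity, this]

lemma mpStieltjes_eq_integral_semicircle (hγ : 0 < γ) (z : ℝ) :
    mpStieltjes γ z = γ / (2 * Real.pi)
      * ∫ x, √(1 - x ^ 2) / ((x + mpCenter γ) * (x + (mpCenter γ - √γ * z / 2))) := by
  have := Real.sqrt_pos.mpr hγ
  have hdensity : mpStieltjes γ z = ∫ t, mpDensity γ t * (t - z)⁻¹ := by
    rw [mpStieltjes, mpMeasure, integral_withDensity_eq_integral_toReal_smul
      (measurable_mpDensity γ).ennreal_ofReal (by simp)]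
    simp only [ENNReal.toReal_ofReal (mpDensity_nonneg hγ.le _), smul_eq_mul]
  have haffine : ∫ t, mpDensity γ t * (t - z)⁻¹
      = 2 / √γ * ∫ x, mpDensity γ (2 / √γ * (x + mpCenter γ))
        * (2 / √γ * (x + mpCenter γ) - z)⁻¹ := by
    rw [integral_add_right_eq_self (fun x => mpDensity γ (2 / √γ * x) * (2 / √γ * x - z)⁻¹),
      Measure.integral_comp_mul_left (fun t => mpDensity γ t * (t - z)⁻¹), smul_eq_mul,
      abs_of_pos (by positivity), mul_inv_cancel_left₀ (by positivity)]
  rw [hdensity, haffine, ← integral_const_mul, ← integral_const_mul]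
  congr with x
  have hshift : 2 / √γ * (x + mpCenter γ) - z
      = 2 / √γ * (x + (mpCenter γ - √γ * z / 2)) := by
    field_simp
    ring
  rw [mpDensity_two_div_sqrt_mul hγ, hshift]
  simp only [div_eq_mul_inv, mul_inv, inv_inv]
  field_simp

lemma semicircleIntegral_mpCenter (hγ : 1 ≤ γ) :
    semicircleIntegral (mpCenter γ) = Real.pi * (√γ)⁻¹ := by
  have hs : 1 ≤ √γ := Real.one_le_sqrt.mpr hγ
  have hdisc : mpCenter γ ^ 2 - 1 = ((√γ - (√γ)⁻¹) / 2) ^ 2 := by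
    rw [mpCenter]
    field_simp
    ring
  rw [semicircleIntegral_of_one_le (one_le_mpCenter (by linarith)), hdisc,
    Real.sqrt_sq (by linarith [inv_le_one_of_one_le₀ hs]), mpCenter]
  ring

lemma one_le_abs_mpCenter_sub (hγ : 0 < γ) {z : ℝ} (hz : z < 0 ∨ bGamma γ < z) :
    1 ≤ |mpCenter γ - √γ * z / 2| := by
  have hs := Real.sqrt_pos.mpr hγ
  rcases hz with hz | hz
  · refine le_abs.mpr (.inl ?_)
    linarith [one_le_mpCenter hγ, mul_neg_of_pos_of_neg hs hz]
  · refine le_abs.mpr (.inr ?_)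
    rw [bGamma_eq hγ, div_mul_eq_mul_div, div_lt_iff₀ hs] at hz
    linarith

/-- Off the support, `κ = (1 + z m(z)) / √γ` is the normalised semicircle integral at
`mpCenter γ - √γ z / 2`, so the equation is `semicircleIntegral_quadratic` rewritten in `m`. -/
lemma mpStieltjes_quadratic (hγ : 1 ≤ γ) {z : ℝ} (hz : z < 0 ∨ bGamma γ < z) :
    γ⁻¹ * z * mpStieltjes γ z ^ 2 + (z + γ⁻¹ - 1) * mpStieltjes γ z + 1 = 0 := by
  have hγ0 : 0 < γ := by linarith
  have hs := Real.sqrt_pos.mpr hγ0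
  have hγs : γ = √γ ^ 2 := (Real.sq_sqrt hγ0.le).symm
  have hz0 : z ≠ 0 := by
    rcases hz with hz | hz
    exacts [hz.ne, ((bGamma_pos hγ0).trans hz).ne']
  have hcenter : 1 ≤ |mpCenter γ| := (one_le_mpCenter hγ0).trans (le_abs_self _)
  have hoff := one_le_abs_mpCenter_sub hγ0 hz
  have hquadratic := semicircleIntegral_quadratic hoff
  have hm := mpStieltjes_eq_integral_semicircle hγ0 z
  have hne : mpCenter γ ≠ mpCenter γ - √γ * z / 2 := fun h =>
    mul_ne_zero hs.ne' hz0 (by linarith)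
  rw [integral_semicircle_div_mul hcenter hoff hne, semicircleIntegral_mpCenter hγ,
    sub_sub_cancel_left] at hm
  set κ := semicircleIntegral (mpCenter γ - √γ * z / 2) / Real.pi with hκ
  have hκm : κ = (√γ)⁻¹ * (1 + z * mpStieltjes γ z) := by
    rw [hm, hκ]
    generalize semicircleIntegral (mpCenter γ - √γ * z / 2) = I
    have := Real.pi_ne_zero
    field_simp
    linear_combination (I * √γ - Real.pi) * Real.sq_sqrt hγ0.le
  rw [hκm, mpCenter] at hquadratic
  refine (mul_eq_zero.mp ?_).resolve_left hz0
  have hγinv : γ⁻¹ = (√γ)⁻¹ ^ 2 := by rw [inv_pow, ← hγs]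
  have hcancel := mul_inv_cancel₀ hs.ne'
  rw [hγinv]
  linear_combination hquadratic + (1 - z + z * mpStieltjes γ z - z ^ 2 * mpStieltjes γ z) * hcancel

lemma mpStieltjes_neg_nonneg (γ : ℝ) {t : ℝ} (ht : 0 < t) : 0 ≤ mpStieltjes γ (-t) := by
  refine integral_nonneg_of_ae ?_
  have hsupport : ∀ᵐ x ∂(mpMeasure γ), x ∈ Set.Icc 0 (bGamma γ) :=
    ae_iff.mpr (mpMeasure_compl_Icc le_rfl)
  filter_upwards [hsupport] with x hx
  exact inv_nonneg.mpr (by linarith [hx.1])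

end MarchenkoPastur

/-! ### Density of the resolvent functions -/

section Resolvents

/-- The function `x ↦ (x + t)⁻¹` on `[0, B]`. Rational parameters suffice for density and leave
only countably many almost sure events to intersect. -/
def resolventFunction (B : ℝ) (t : {t : ℚ // 0 < t}) : C(Set.Icc (0 : ℝ) B, ℝ) where
  toFun x := ((x : ℝ) + (t : ℚ))⁻¹
  continuous_toFun := (by fun_prop : Continuous fun x : Set.Icc (0 : ℝ) B =>
    (x : ℝ) + ((t : ℚ) : ℝ)).inv₀ fun x =>
      (add_pos_of_nonneg_of_pos x.2.1 (Rat.cast_pos.mpr t.2)).ne'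

variable {B : ℝ}

lemma add_ratCast_pos (x : Set.Icc (0 : ℝ) B) (t : {t : ℚ // 0 < t}) :
    0 < (x : ℝ) + ((t : ℚ) : ℝ) :=
  add_pos_of_nonneg_of_pos x.2.1 (Rat.cast_pos.mpr t.2)

lemma norm_resolventFunction_le (t : {t : ℚ // 0 < t}) :
    ‖resolventFunction B t‖ ≤ ((t : ℚ) : ℝ)⁻¹ := by
  have ht : (0 : ℝ) < (t : ℚ) := Rat.cast_pos.mpr t.2
  refine (ContinuousMap.norm_le _ (by positivity)).mpr fun x => ?_
  have := add_ratCast_pos x t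
  change |((x : ℝ) + (t : ℚ))⁻¹| ≤ _
  rw [abs_of_nonneg (by positivity)]
  exact inv_anti₀ ht (by linarith [x.2.1])

lemma resolventFunction_sub (s t : {t : ℚ // 0 < t}) :
    resolventFunction B s - resolventFunction B t
      = (((t : ℚ) : ℝ) - (s : ℚ)) • (resolventFunction B s * resolventFunction B t) := by
  ext x
  have := (add_ratCast_pos x s).ne'
  have := (add_ratCast_pos x t).ne'
  change ((x : ℝ) + (s : ℚ))⁻¹ - ((x : ℝ) + (t : ℚ))⁻¹
    = (((t : ℚ) : ℝ) - (s : ℚ)) * (((x : ℝ) + (s : ℚ))⁻¹ * ((x : ℝ) + (t : ℚ))⁻¹)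
  field_simp
  ring

/-- The span of the resolvent functions. -/
def resolventSpan (B : ℝ) : Submodule ℝ C(Set.Icc (0 : ℝ) B, ℝ) :=
  Submodule.span ℝ (Set.range (resolventFunction B))

lemma resolventFunction_mem_resolventSpan (t : {t : ℚ // 0 < t}) :
    resolventFunction B t ∈ resolventSpan B :=
  Submodule.subset_span ⟨t, rfl⟩

lemma tendsto_resolventFunction_add_inv (t : {t : ℚ // 0 < t}) :
    Tendsto (fun n : ℕ => resolventFunction B
      ⟨t + ((n : ℚ) + 1)⁻¹, add_pos t.2 (by positivity)⟩) atTop (𝓝 (resolventFunction B t)) := by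
  have ht : (0 : ℝ) < (t : ℚ) := Rat.cast_pos.mpr t.2
  have hdecay := ((tendsto_one_div_add_atTop_nhds_zero_nat (𝕜 := ℝ)).mul_const
    (((t : ℚ) : ℝ)⁻¹ * ((t : ℚ) : ℝ)⁻¹))
  rw [zero_mul] at hdecay
  refine tendsto_iff_norm_sub_tendsto_zero.mpr (squeeze_zero (fun _ => norm_nonneg _)
    (fun n => ?_) hdecay)
  rw [resolventFunction_sub, norm_smul]
  have hstep : (0 : ℝ) < ((n : ℝ) + 1)⁻¹ := by positivity
  refine mul_le_mul ?_ ((norm_mul_le _ _).trans (mul_le_mul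
    ((norm_resolventFunction_le _).trans ?_) (norm_resolventFunction_le t) (norm_nonneg _)
    (by positivity))) (norm_nonneg _) (by positivity)
  · simp [abs_of_pos (by positivity : (0 : ℝ) < n + 1)]
  · refine inv_anti₀ ht ?_
    push_cast
    linarith

/-- For `s ≠ t` the product is a combination of the two factors by the resolvent identity; the
square is a limit of such products. -/
lemma resolventFunction_mul_mem (s t : {t : ℚ // 0 < t}) :
    resolventFunction B s * resolventFunction B t ∈ (resolventSpan B).topologicalClosure := by
  have hne : ∀ s t : {t : ℚ // 0 < t}, s ≠ t →
      resolventFunction B s * resolventFunction B t ∈ resolventSpan B := fun s t hst => by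
    have hdiff : ((t : ℚ) : ℝ) - (s : ℚ) ≠ 0 := by
      rw [sub_ne_zero, Ne, Rat.cast_inj]
      exact fun h => hst (Subtype.ext h.symm)
    rw [← inv_smul_smul₀ hdiff (_ * _), ← resolventFunction_sub]
    exact Submodule.smul_mem _ _ (Submodule.sub_mem _ (resolventFunction_mem_resolventSpan s)
      (resolventFunction_mem_resolventSpan t))
  rcases ne_or_eq s t with hst | rfl
  · exact Submodule.le_topologicalClosure _ (hne s t hst)
  · refine mem_closure_of_tendsto ((tendsto_resolventFunction_add_inv s).mul_const
      (resolventFunction B s)) (Eventually.of_forall fun n => hne _ _ fun h => ?_)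
    have : ((n : ℚ) + 1)⁻¹ = 0 := by simpa using congrArg Subtype.val h
    exact absurd this (by positivity)

lemma mul_mem_topologicalClosure_resolventSpan {f g : C(Set.Icc (0 : ℝ) B, ℝ)}
    (hf : f ∈ (resolventSpan B).topologicalClosure)
    (hg : g ∈ (resolventSpan B).topologicalClosure) :
    f * g ∈ (resolventSpan B).topologicalClosure := by
  have hspan : resolventSpan B * resolventSpan B ≤ (resolventSpan B).topologicalClosure := by
    rw [resolventSpan, Submodule.span_mul_span, Submodule.span_le, Set.mul_subset_iff]
    rintro _ ⟨s, rfl⟩ _ ⟨t, rfl⟩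
    exact resolventFunction_mul_mem s t
  have hclosure := map_mem_closure₂ continuous_mul hf hg fun u hu v hv =>
    hspan (Submodule.mul_mem_mul hu hv)
  rwa [(Submodule.isClosed_topologicalClosure _).closure_eq] at hclosure

/-- The constant `1` is the uniform limit of `t ↦ t / (x + t)` as `t → ∞`. -/
lemma one_mem_topologicalClosure_resolventSpan :
    (1 : C(Set.Icc (0 : ℝ) B, ℝ)) ∈ (resolventSpan B).topologicalClosure := by
  let t : ℕ → {t : ℚ // 0 < t} := fun n => ⟨(n : ℚ) + 1, by positivity⟩
  have hdecay := (tendsto_one_div_add_atTop_nhds_zero_nat (𝕜 := ℝ)).const_mul |B|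
  rw [mul_zero] at hdecay
  have hlimit : Tendsto (fun n => ((t n : ℚ) : ℝ) • resolventFunction B (t n)) atTop (𝓝 1) := by
    refine tendsto_iff_norm_sub_tendsto_zero.mpr (squeeze_zero (fun _ => norm_nonneg _)
      (fun n => (ContinuousMap.norm_le _ (by positivity)).mpr fun x => ?_) hdecay)
    have hpos := add_ratCast_pos x (t n)
    have hsub : ((t n : ℚ) : ℝ) * ((x : ℝ) + (t n : ℚ))⁻¹ - 1
        = -((x : ℝ) * ((x : ℝ) + (t n : ℚ))⁻¹) := by
      field_simp
      ring
    change |((t n : ℚ) : ℝ) * ((x : ℝ) + (t n : ℚ))⁻¹ - 1| ≤ _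
    rw [hsub, abs_neg, abs_of_nonneg (mul_nonneg x.2.1 (by positivity)), one_div]
    refine mul_le_mul (x.2.2.trans (le_abs_self B)) (inv_anti₀ (by positivity) ?_)
      (by positivity) (abs_nonneg B)
    simp only [t]
    push_cast
    linarith [x.2.1]
  exact mem_closure_of_tendsto hlimit (Eventually.of_forall fun n =>
    Submodule.smul_mem _ _ (resolventFunction_mem_resolventSpan (t n)))

lemma topologicalClosure_resolventSpan (B : ℝ) : (resolventSpan B).topologicalClosure = ⊤ := by
  have hseparates : (Algebra.adjoin ℝ (Set.range (resolventFunction B))).SeparatesPoints :=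
    fun x y hxy => by
      refine ⟨_, ⟨_, Algebra.subset_adjoin ⟨⟨1, one_pos⟩, rfl⟩, rfl⟩, fun h => hxy ?_⟩
      have : (x : ℝ) + ((1 : ℚ) : ℝ) = y + ((1 : ℚ) : ℝ) := inv_injective h
      exact Subtype.ext (by linarith)
  have hadjoin : ∀ f ∈ Algebra.adjoin ℝ (Set.range (resolventFunction B)),
      f ∈ (resolventSpan B).topologicalClosure := fun f hf => by
    induction hf using Algebra.adjoin_induction with
    | mem f hf =>
      obtain ⟨t, rfl⟩ := hf
      exact Submodule.le_topologicalClosure _ (resolventFunction_mem_resolventSpan t)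
    | algebraMap r =>
      rw [Algebra.algebraMap_eq_smul_one]
      exact Submodule.smul_mem _ _ one_mem_topologicalClosure_resolventSpan
    | add f g _ _ hf hg => exact Submodule.add_mem _ hf hg
    | mul f g _ _ hf hg => exact mul_mem_topologicalClosure_resolventSpan hf hg
  refine eq_top_iff.mpr fun f _ => ?_
  have hf : f ∈ (Algebra.adjoin ℝ (Set.range (resolventFunction B))).topologicalClosure := by
    rw [ContinuousMap.subalgebra_topologicalClosure_eq_top_of_separatesPoints _ hseparates]
    trivial
  exact closure_minimal hadjoin (Submodule.isClosed_topologicalClosure _) hf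

end Resolvents

lemma tendsto_of_span_dense {α E : Type*} [NormedAddCommGroup E] [NormedSpace ℝ E]
    {l : Filter α} {L : α → E →L[ℝ] ℝ} {L₀ : E →L[ℝ] ℝ} {C : ℝ} {S : Set E}
    (hS : (Submodule.span ℝ S).topologicalClosure = ⊤) (hbound : ∀ᶠ n in l, ‖L n‖ ≤ C)
    (hlimit : ∀ v ∈ S, Tendsto (fun n => L n v) l (𝓝 (L₀ v))) (x : E) :
    Tendsto (fun n => L n x) l (𝓝 (L₀ x)) := by
  have hspan : ∀ v ∈ Submodule.span ℝ S, Tendsto (fun n => L n v) l (𝓝 (L₀ v)) := fun v hv => by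
    induction hv using Submodule.span_induction with
    | mem v hv => exact hlimit v hv
    | zero => simpa using tendsto_const_nhds
    | add u v _ _ hu hv => simpa using hu.add hv
    | smul a v _ hv => simpa using hv.const_mul a
  rw [Metric.tendsto_nhds]
  intro ε hε
  set D : ℝ := |C| + ‖L₀‖ + 1
  have hD : 0 < D := by positivity
  have hx : x ∈ closure (Submodule.span ℝ S : Set E) := by
    rw [← Submodule.topologicalClosure_coe, hS]
    trivial
  obtain ⟨v, hv, hxv⟩ := Metric.mem_closure_iff.mp hx (ε / (2 * D)) (by positivity)
  filter_upwards [hbound, Metric.tendsto_nhds.mp (hspan v hv) (ε / 2) (by linarith)] with n hn hnv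
  rw [dist_eq_norm] at hxv hnv ⊢
  have happrox : (|C| + ‖L₀‖) * ‖x - v‖ ≤ D * (ε / (2 * D)) := by
    gcongr
    simp [D]
  have hhalf : D * (ε / (2 * D)) = ε / 2 := by field_simp
  calc ‖L n x - L₀ x‖ = ‖L n (x - v) + (L n v - L₀ v) - L₀ (x - v)‖ := by
        rw [map_sub, map_sub]
        congr 1
        ring
    _ ≤ ‖L n (x - v)‖ + ‖L n v - L₀ v‖ + ‖L₀ (x - v)‖ :=
        (norm_sub_le _ _).trans (add_le_add_left (norm_add_le _ _) _)
    _ ≤ |C| * ‖x - v‖ + ‖L n v - L₀ v‖ + ‖L₀‖ * ‖x - v‖ := by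
        gcongr
        · exact ((L n).le_opNorm _).trans (by gcongr; exact hn.trans (le_abs_self C))
        · exact L₀.le_opNorm _
    _ < ε := by linarith

section Averages

variable {B : ℝ} (hB : 0 ≤ B)

/-- The functional `f ↦ (∑ α, f (x α)) / n` on `C[0, B]`, with the points `x α` projected to
`[0, B]`. -/
def averageFunctional (n : ℕ) {ι : Type*} [Fintype ι] (x : ι → ℝ) :
    C(Set.Icc (0 : ℝ) B, ℝ) →L[ℝ] ℝ :=
  (n : ℝ)⁻¹ • ∑ α, ContinuousMap.evalCLM ℝ (Set.projIcc 0 B hB (x α))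

/-- The functional `f ↦ ∫ f dν` on `C[0, B]`, with `ν` pushed to `[0, B]` by the projection. -/
def integralFunctional (ν : Measure ℝ) [IsFiniteMeasure ν] : C(Set.Icc (0 : ℝ) B, ℝ) →L[ℝ] ℝ :=
  (L1.integralCLM (α := Set.Icc (0 : ℝ) B) (E := ℝ)).comp
    (ContinuousMap.toLp 1 (ν.map (Set.projIcc 0 B hB)) ℝ)

variable {hB}

lemma norm_averageFunctional_le (n : ℕ) {ι : Type*} [Fintype ι] (x : ι → ℝ) :
    ‖averageFunctional hB n x‖ ≤ Fintype.card ι / n := by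
  refine ContinuousLinearMap.opNorm_le_bound _ (by positivity) fun f => ?_
  have hsum : ‖∑ α, f (Set.projIcc 0 B hB (x α))‖ ≤ ∑ _α : ι, ‖f‖ :=
    norm_sum_le_of_le _ fun α _ => f.norm_coe_le_norm _
  have hcard : ∑ _α : ι, ‖f‖ = Fintype.card ι * ‖f‖ := by simp
  calc ‖averageFunctional hB n x f‖ = (n : ℝ)⁻¹ * ‖∑ α, f (Set.projIcc 0 B hB (x α))‖ := by
        simp [averageFunctional]
    _ ≤ (n : ℝ)⁻¹ * (Fintype.card ι * ‖f‖) := by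
        rw [← hcard]
        gcongr
    _ = _ := by ring

lemma averageFunctional_apply (n : ℕ) {ι : Type*} [Fintype ι] {x : ι → ℝ}
    (hx : ∀ α, x α ∈ Set.Icc 0 B) {f : ℝ → ℝ} {g : C(Set.Icc (0 : ℝ) B, ℝ)}
    (hfg : ∀ x : Set.Icc (0 : ℝ) B, g x = f x) :
    averageFunctional hB n x g = (∑ α, f (x α)) / n := by
  simp [averageFunctional, hfg, Set.projIcc_of_mem hB (hx _),
    div_eq_inv_mul]

lemma integralFunctional_apply {ν : Measure ℝ} [IsFiniteMeasure ν] (hν : ν (Set.Icc 0 B)ᶜ = 0)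
    {f : ℝ → ℝ} {g : C(Set.Icc (0 : ℝ) B, ℝ)} (hfg : ∀ x : Set.Icc (0 : ℝ) B, g x = f x) :
    integralFunctional hB ν g = ∫ x, f x ∂ν := by
  have hprojection : AEMeasurable (Set.projIcc 0 B hB) ν :=
    continuous_projIcc.measurable.aemeasurable
  have hsupport : ∀ᵐ x ∂ν, x ∈ Set.Icc 0 B := ae_iff.mpr hν
  calc integralFunctional hB ν g = ∫ x, g x ∂(ν.map (Set.projIcc 0 B hB)) := by
        rw [← integral_congr_ae (ContinuousMap.coeFn_toLp (𝕜 := ℝ) (p := 1) _ g),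
          ← L1.integral_eq_integral, L1.integral_eq]
        rfl
    _ = ∫ x, g (Set.projIcc 0 B hB x) ∂ν :=
        integral_map hprojection g.continuous.aestronglyMeasurable
    _ = ∫ x, f x ∂ν := by
        refine integral_congr_ae (hsupport.mono fun x hx => ?_)
        simp only [hfg, Set.projIcc_of_mem hB hx]

end Averages

lemma tendsto_average_of_tendsto_stieltjes {B C κ : ℝ} (hB : 0 ≤ B) {ι : ℕ → Type*}
    [∀ n, Fintype (ι n)] {x : ∀ n, ι n → ℝ}
    (hcard : ∀ᶠ n in atTop, (Fintype.card (ι n) : ℝ) ≤ C * n)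
    (hx : ∀ᶠ n in atTop, ∀ α, x n α ∈ Set.Icc 0 B)
    {ν : Measure ℝ} [IsFiniteMeasure ν] (hν : ν (Set.Icc 0 B)ᶜ = 0)
    (hstieltjes : ∀ t : ℚ, 0 < t → Tendsto (fun n : ℕ => (∑ α, (x n α + (t : ℝ))⁻¹) / (n : ℝ))
      atTop (𝓝 (κ * ∫ x, (x + (t : ℝ))⁻¹ ∂ν)))
    {f : ℝ → ℝ} (hf : ContinuousOn f (Set.Icc 0 B)) :
    Tendsto (fun n : ℕ => (∑ α, f (x n α)) / (n : ℝ)) atTop (𝓝 (κ * ∫ x, f x ∂ν)) := by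
  have hbound : ∀ᶠ n in atTop, ‖averageFunctional hB n (x n)‖ ≤ C := by
    filter_upwards [hcard, eventually_gt_atTop 0] with n hn hn0
    exact (norm_averageFunctional_le n (x n)).trans
      ((div_le_iff₀ (Nat.cast_pos.mpr hn0)).mpr hn)
  have hresolvents : ∀ g ∈ Set.range (resolventFunction B),
      Tendsto (fun n => averageFunctional hB n (x n) g) atTop
        (𝓝 ((κ • integralFunctional hB ν) g)) := by
    rintro _ ⟨t, rfl⟩
    let r : ℝ → ℝ := fun y => (y + ((t : ℚ) : ℝ))⁻¹
    have hr : ∀ x : Set.Icc (0 : ℝ) B, resolventFunction B t x = r x := fun _ => rfl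
    rw [_root_.smul_apply, integralFunctional_apply hν hr, smul_eq_mul]
    exact (hstieltjes t t.2).congr'
      (hx.mono fun n hn => (averageFunctional_apply n hn hr).symm)
  let g : C(Set.Icc (0 : ℝ) B, ℝ) := ⟨fun x => f x, hf.domRestrict⟩
  have hg : ∀ x : Set.Icc (0 : ℝ) B, g x = f x := fun _ => rfl
  have hlimit := tendsto_of_span_dense (topologicalClosure_resolventSpan B) hbound hresolvents g
  rw [_root_.smul_apply, integralFunctional_apply hν hg, smul_eq_mul] at hlimit
  exact hlimit.congr' (hx.mono fun n hn => averageFunctional_apply n hn hg)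

/-! ### The Marchenko–Pastur law for the block model -/

namespace IIDGaussian

variable {Ω ι κ : Type*} [MeasurableSpace Ω] [Fintype ι] [Fintype κ] {P : Measure Ω}

omit [Fintype κ] in
lemma aemeasurable {X : Ω → ι → ℝ} {v : NNReal} (hX : IIDGaussian P X v) : AEMeasurable X P := by
  have : NeZero (Measure.map X P) := by
    rw [hX]
    infer_instance
  exact aemeasurable_of_map_neZero this

variable {X : Ω → Matrix ι κ ℝ}

lemma hasLaw_matrix (hX : IIDGaussian P (fun ω => matEntries (X ω)) 1) :
    HasLaw (fun ω i j => X ω i j) (gaussianMatrix ι κ) P :=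
  (measurePreserving_curry_gaussianVector ι κ).fun_comp_hasLaw ⟨hX.aemeasurable, hX⟩

lemma measure_mem_le_gaussianMatrix (hX : IIDGaussian P (fun ω => matEntries (X ω)) 1)
    (S : Set (ι → κ → ℝ)) : P {ω | X ω ∈ S} ≤ gaussianMatrix ι κ S := by
  rw [← hX.hasLaw_matrix.map_eq]
  exact Measure.le_map_apply hX.hasLaw_matrix.aemeasurable S

end IIDGaussian

/-- The map `s ↦ t s + s / (1 + s)` expands distances by at least the factor `t`. -/
lemma tendsto_of_tendsto_mul_add_div_one_add {α : Type*} {l : Filter α} {t s₀ : ℝ} (ht : 0 < t)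
    (hs₀ : 0 ≤ s₀) {s : α → ℝ} (hs : ∀ n, 0 ≤ s n)
    (h : Tendsto (fun n => t * s n + s n / (1 + s n)) l (𝓝 (t * s₀ + s₀ / (1 + s₀)))) :
    Tendsto s l (𝓝 s₀) := by
  rw [tendsto_iff_dist_tendsto_zero] at h ⊢
  have hscaled := h.const_mul t⁻¹
  rw [mul_zero] at hscaled
  refine squeeze_zero (fun _ => dist_nonneg) (fun n => ?_) hscaled
  have hsn := hs n
  have hslope : t * s n + s n / (1 + s n) - (t * s₀ + s₀ / (1 + s₀))
      = (s n - s₀) * (t + 1 / ((1 + s n) * (1 + s₀))) := by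
    field_simp
    ring
  rw [Real.dist_eq, Real.dist_eq, hslope, abs_mul, abs_of_pos (a := t + _) (by positivity),
    le_inv_mul_iff₀ ht, mul_comm t]
  exact mul_le_mul_of_nonneg_left (le_add_of_nonneg_right (by positivity)) (abs_nonneg _)

lemma mul_add_div_one_add_mpStieltjes_neg {γ t : ℝ} (hγ : 1 ≤ γ) (ht : 0 < t) :
    t * (γ⁻¹ * mpStieltjes γ (-t)) + γ⁻¹ * mpStieltjes γ (-t) / (1 + γ⁻¹ * mpStieltjes γ (-t))
      = γ⁻¹ := by
  have hquadratic := mpStieltjes_quadratic hγ (z := -t) (.inl (by linarith))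
  have hm := mpStieltjes_neg_nonneg γ ht
  set m := mpStieltjes γ (-t)
  have : 0 < 1 + γ⁻¹ * m := by positivity
  field_simp at hquadratic ⊢
  linear_combination -hquadratic

lemma tendsto_natCast_sub_const_div (k : ℕ) :
    Tendsto (fun n : ℕ => ((n - k : ℕ) : ℝ) / n) atTop (𝓝 1) := by
  have h := (tendsto_const_nhds (x := (1 : ℝ))).sub (tendsto_const_div_atTop_nhds_zero_nat (k : ℝ))
  rw [sub_zero] at h
  refine h.congr' ?_
  filter_upwards [eventually_ge_atTop k, eventually_gt_atTop 0] with n hn hn0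
  rw [Nat.cast_sub hn, sub_div, div_self (Nat.cast_ne_zero.mpr hn0.ne')]

namespace BlockModel

variable {k : ℕ} {γ : ℝ} {p : ℕ → ℕ} {Ω : Type*} [MeasurableSpace Ω] {P : Measure Ω}
  {μ : Fin k → ℝ}

lemma tendsto_natCast_p_div (M : BlockModel k γ p Ω P μ) (hγ : 0 < γ) :
    Tendsto (fun n : ℕ => (p n : ℝ) / n) atTop (𝓝 γ⁻¹) := by
  have hsqrt : Tendsto (fun n : ℕ => (√(n : ℝ))⁻¹) atTop (𝓝 0) :=
    tendsto_inv_atTop_zero.comp (Real.tendsto_sqrt_atTop.comp tendsto_natCast_atTop_atTop)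
  have hratio : Tendsto (fun n : ℕ => (n : ℝ) / p n) atTop (𝓝 γ) := by
    have h := (hsqrt.mul M.aspect).add_const γ
    rw [zero_mul, zero_add] at h
    refine h.congr' ?_
    filter_upwards [eventually_gt_atTop 0] with n hn
    have : 0 < √(n : ℝ) := Real.sqrt_pos.mpr (Nat.cast_pos.mpr hn)
    field_simp
    ring
  refine (hratio.inv₀ hγ.ne').congr fun n => ?_
  rw [inv_div]

lemma tendsto_natCast_p_sub_div (M : BlockModel k γ p Ω P μ) (hγ : 0 < γ) :
    Tendsto (fun n : ℕ => ((p n - k : ℕ) : ℝ) / n) atTop (𝓝 γ⁻¹) := by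
  have h := (M.tendsto_natCast_p_div hγ).sub (tendsto_const_div_atTop_nhds_zero_nat (k : ℝ))
  rw [sub_zero] at h
  refine h.congr' ?_
  filter_upwards [M.pTop.eventually_ge_atTop k] with n hn
  rw [Nat.cast_sub hn, sub_div]

lemma tendsto_natCast_sub_p_div (M : BlockModel k γ p Ω P μ) (hγ : 1 ≤ γ) :
    Tendsto (fun n : ℕ => ((n - p n : ℕ) : ℝ) / n) atTop (𝓝 (1 - γ⁻¹)) := by
  have h := ((tendsto_const_nhds (x := (1 : ℝ))).sub
    (M.tendsto_natCast_p_div (by linarith))).max (tendsto_const_nhds (x := (0 : ℝ)))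
  rw [max_eq_left (by linarith [inv_le_one_of_one_le₀ hγ])] at h
  refine h.congr' ?_
  filter_upwards [eventually_gt_atTop 0] with n hn0
  have hn : (0 : ℝ) < n := Nat.cast_pos.mpr hn0
  rcases le_total (p n) n with hle | hle
  · rw [Nat.cast_sub hle, sub_div, div_self hn.ne', max_eq_left]
    exact sub_nonneg.mpr ((div_le_one hn).mpr (Nat.cast_le.mpr hle))
  · rw [Nat.sub_eq_zero_of_le hle, max_eq_right]
    · simp
    · exact sub_nonpos.mpr ((one_le_div hn).mpr (Nat.cast_le.mpr hle))

lemma eventually_natCast_p_sub_le (M : BlockModel k γ p Ω P μ) (hγ : 1 ≤ γ) :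
    ∀ᶠ n : ℕ in atTop, ((p n - k : ℕ) : ℝ) ≤ 2 * n := by
  have hlt : γ⁻¹ < 2 := by linarith [inv_le_one_of_one_le₀ hγ]
  filter_upwards [(M.tendsto_natCast_p_sub_div (by linarith)).eventually (gt_mem_nhds hlt),
    eventually_gt_atTop 0] with n hn hn0
  exact ((div_lt_iff₀ (Nat.cast_pos.mpr hn0)).mp hn).le

lemma lam_eq (M : BlockModel k γ p Ω P μ) {n : ℕ} (hn : 0 < n) (ω : Ω) (α : Fin (p n - k)) :
    M.lam n ω α = ithEigDesc ((M.W n ω)ᵀ * M.W n ω) α / n := by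
  rw [← M.lamEig, mul_div_cancel_left₀ _ (Nat.cast_ne_zero.mpr hn.ne')]

lemma lam_nonneg (M : BlockModel k γ p Ω P μ) {n : ℕ} (hn : 0 < n) (ω : Ω) (α : Fin (p n - k)) :
    0 ≤ M.lam n ω α := by
  rw [M.lam_eq hn]
  exact div_nonneg (ithEigDesc_transpose_mul_self_nonneg _ _) (Nat.cast_nonneg _)

lemma ae_eventually_lam_mem_Icc (M : BlockModel k γ p Ω P μ) (hγ : 0 < γ) {B : ℝ}
    (hB : bGamma γ < B) : ∀ᵐ ω ∂P, ∀ᶠ n in atTop, ∀ α, M.lam n ω α ∈ Set.Icc 0 B := by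
  obtain ⟨c, hc, A, hA⟩ := exists_gaussianMatrix_opNormSq_tail hγ hB (fun n => n - k)
    (fun n => p n - k) (fun n => Nat.sub_le n k) (M.tendsto_natCast_p_sub_div hγ)
  have hrare := ae_eventually_notMem_of_eventually_le (summable_mul_exp_neg_mul hc A)
    (hA.mono fun n hn => ((M.Wgauss n).measure_mem_le_gaussianMatrix _).trans hn)
  filter_upwards [hrare] with ω hω
  filter_upwards [hω, eventually_gt_atTop 0] with n hn hn0 α
  refine ⟨M.lam_nonneg hn0 ω α, ?_⟩
  rw [M.lam_eq hn0, div_le_iff₀ (Nat.cast_pos.mpr hn0)]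
  refine ithEigDesc_transpose_mul_self_le _ (fun y => ?_) α
  rw [dotProduct_self_eq_sum_sq, dotProduct_self_eq_sum_sq]
  exact not_lt.mp fun h => hn ⟨y, h⟩

lemma ae_tendsto_mpResidual (M : BlockModel k γ p Ω P μ) (hγ : 1 ≤ γ) {t : ℝ} (ht : 0 < t) :
    ∀ᵐ ω ∂P, Tendsto (fun n => mpResidual n t (M.W n ω)) atTop (𝓝 0) := by
  refine ae_tendsto_zero_of_exp_tail fun ε hε => ?_
  obtain ⟨c, hc, n₀, htail⟩ := exists_mpResidual_tail ht hε two_pos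
  refine ⟨c, hc, 2, ?_⟩
  filter_upwards [M.eventually_natCast_p_sub_le hγ, eventually_ge_atTop n₀, eventually_gt_atTop k]
    with n hdim hn hk
  exact ((M.Wgauss n).measure_mem_le_gaussianMatrix {V | ε ≤ |mpResidual n t V|}).trans
    (htail n (n - k) (p n - k) hn (by lia) (Nat.sub_le _ _) hdim)

lemma mpResidual_eq (M : BlockModel k γ p Ω P μ) {n : ℕ} (hn : 0 < n) {t : ℝ} (ht : 0 < t)
    (ω : Ω) :
    mpResidual n t (M.W n ω) = ((p n - k : ℕ) : ℝ) / n
      - t * ((∑ α, (M.lam n ω α + t)⁻¹) / n) - ((n - k : ℕ) : ℝ) / n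
        * ((∑ α, (M.lam n ω α + t)⁻¹) / n / (1 + (∑ α, (M.lam n ω α + t)⁻¹) / n)) := by
  have htrace : (regCov n t (M.W n ω))⁻¹.trace = ∑ α, (M.lam n ω α + t)⁻¹ := by
    simp only [M.lam_eq hn]
    exact trace_inv_regCov_eq_sum_ithEigDesc n ht fun i j => M.W n ω i j
  simp only [mpResidual, htrace, Fintype.card_fin]

lemma tendsto_stieltjes_of_tendsto_mpResidual (M : BlockModel k γ p Ω P μ) (hγ : 1 ≤ γ) {t : ℝ}
    (ht : 0 < t) {ω : Ω} (hω : Tendsto (fun n => mpResidual n t (M.W n ω)) atTop (𝓝 0)) :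
    Tendsto (fun n : ℕ => (∑ α, (M.lam n ω α + t)⁻¹) / (n : ℝ)) atTop
      (𝓝 (γ⁻¹ * mpStieltjes γ (-t))) := by
  have hγ0 : 0 < γ := by linarith
  set s : ℕ → ℝ := fun n => (∑ α, (M.lam n ω α + t)⁻¹) / (n : ℝ) with hs
  have hs0 : ∀ n, 0 ≤ s n := fun n => by
    rcases n.eq_zero_or_pos with rfl | hn
    · simp [hs]
    · refine div_nonneg (Finset.sum_nonneg fun α _ => ?_) (Nat.cast_nonneg _)
      have := M.lam_nonneg hn ω α
      positivity
  refine tendsto_of_tendsto_mul_add_div_one_add ht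
    (mul_nonneg (by positivity) (mpStieltjes_neg_nonneg γ ht)) hs0 ?_
  rw [mul_add_div_one_add_mpStieltjes_neg hγ ht]
  have hdof : Tendsto (fun n : ℕ => (1 - ((n - k : ℕ) : ℝ) / n) * (s n / (1 + s n)))
      atTop (𝓝 0) := by
    have hfactor := (tendsto_natCast_sub_const_div k).const_sub 1
    rw [sub_self] at hfactor
    refine (bdd_le_mul_tendsto_zero' 1 (Eventually.of_forall fun n => ?_) hfactor).congr
      fun n => mul_comm _ _
    have := hs0 n
    rw [abs_of_nonneg (by positivity), div_le_one (by positivity)]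
    linarith
  have hlimit := ((M.tendsto_natCast_p_sub_div hγ0).sub hω).add hdof
  rw [sub_zero, add_zero] at hlimit
  refine hlimit.congr' ?_
  filter_upwards [eventually_gt_atTop 0] with n hn
  rw [M.mpResidual_eq hn ht]
  ring

lemma ae_tendsto_stieltjes (M : BlockModel k γ p Ω P μ) (hγ : 1 ≤ γ) :
    ∀ᵐ ω ∂P, ∀ t : ℚ, 0 < t →
      Tendsto (fun n : ℕ => (∑ α, (M.lam n ω α + (t : ℝ))⁻¹) / (n : ℝ)) atTop
        (𝓝 (γ⁻¹ * ∫ x, (x + (t : ℝ))⁻¹ ∂(mpMeasure γ))) := by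
  have hstieltjes : ∀ t : ℝ, ∫ x, (x + t)⁻¹ ∂(mpMeasure γ) = mpStieltjes γ (-t) := fun t => by
    simp only [mpStieltjes, sub_neg_eq_add]
  simp only [hstieltjes, ae_all_iff]
  intro t ht
  have ht' : (0 : ℝ) < t := Rat.cast_pos.mpr ht
  filter_upwards [M.ae_tendsto_mpResidual hγ ht'] with ω hω
  exact M.tendsto_stieltjes_of_tendsto_mpResidual hγ ht' hω

lemma ae_tendsto_spectral_average (M : BlockModel k γ p Ω P μ) (hγ : 1 ≤ γ) {B : ℝ}
    (hB : bGamma γ < B) :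
    ∀ᵐ ω ∂P, ∀ f : ℝ → ℝ, ContinuousOn f (Set.Icc 0 B) →
      Tendsto (fun n : ℕ => (∑ α, f (M.lam n ω α)) / (n : ℝ)) atTop
        (𝓝 (γ⁻¹ * ∫ x, f x ∂(mpMeasure γ))) := by
  have hγ0 : 0 < γ := by linarith
  have := isFiniteMeasure_mpMeasure hγ0
  filter_upwards [M.ae_eventually_lam_mem_Icc hγ0 hB, M.ae_tendsto_stieltjes hγ]
    with ω hmem hstieltjes f hf
  refine tendsto_average_of_tendsto_stieltjes (C := 2) ((bGamma_pos hγ0).le.trans hB.le) ?_ hmem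
    (mpMeasure_compl_Icc hB.le) hstieltjes hf
  simpa using M.eventually_natCast_p_sub_le hγ

end BlockModel

/-! ### Weighted Gram matrices of Gaussian rows -/

section StrongLaw

variable {Ω Y : Type*} {Z : ℕ → Type*} [MeasurableSpace Ω] [MeasurableSpace Y]
  [∀ n, MeasurableSpace (Z n)] {P : Measure Ω} {ν : ∀ n, Measure (Z n)}
  [∀ n, IsProbabilityMeasure (ν n)] {q : ℕ → ℕ} {C K : ℝ} {W : ∀ n, Ω → Z n}
  {L : ∀ n, Z n → Fin (q n) → ℝ}

lemma ae_tendsto_weighted_sum_div {ρ : Measure Y} [IsProbabilityMeasure ρ] {φ : Y → ℝ} {v b : ℝ}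
    (hφ : HasSubexponentialMGF φ v b ρ) (hC : 0 < C) (hK : 0 < K)
    (hq : ∀ᶠ n in atTop, (q n : ℝ) ≤ C * n) {X : ∀ n, Ω → Fin (q n) → Y}
    (hlaw : ∀ n, HasLaw (fun ω => (X n ω, W n ω)) ((Measure.pi fun _ => ρ).prod (ν n)) P)
    (hLm : ∀ n α, Measurable fun w => L n w α) (hL : ∀ n w α, |L n w α| ≤ K) :
    ∀ᵐ ω ∂P, Tendsto (fun n : ℕ => (∑ α, L n (W n ω) α * φ (X n ω α)) / (n : ℝ)) atTop (𝓝 0) := by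
  refine ae_tendsto_zero_of_exp_tail fun ε hε => ?_
  obtain ⟨c, hc, htail⟩ := hφ.exists_measure_abs_sum_mul_le_exp hK hC hε
  refine ⟨c, hc, 2, ?_⟩
  filter_upwards [hq, eventually_gt_atTop 0] with n hqn hn0
  have hn : (1 : ℝ) ≤ n := Nat.one_le_cast.mpr hn0
  set S : Set ((Fin (q n) → Y) × Z n) := {x | ε * n ≤ |∑ α, L n x.2 α * φ (x.1 α)|}
  have hS : MeasurableSet S :=
    measurableSet_le measurable_const <| Measurable.abs <| Finset.measurable_fun_sum _ fun α _ =>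
      ((hLm n α).comp measurable_snd).mul
        (hφ.measurable.comp ((measurable_pi_apply α).comp measurable_fst))
  calc P {ω | ε ≤ |(∑ α, L n (W n ω) α * φ (X n ω α)) / (n : ℝ)|}
      = P {ω | (X n ω, W n ω) ∈ S} := by
        congr 1
        ext ω
        rw [Set.mem_ofPred_eq, abs_div, Nat.abs_cast, le_div_iff₀ (by linarith)]
        rfl
    _ = ((Measure.pi fun _ => ρ).prod (ν n)) S := (hlaw n).measure_eq hS
    _ ≤ ENNReal.ofReal (2 * Real.exp (-(c * n))) :=
        prod_measure_le_of_forall_right_section_le _ _ hS fun w =>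
          htail n (q n) (L n w) hqn (hL n w)
    _ ≤ _ := ENNReal.ofReal_le_ofReal <|
        mul_le_mul_of_nonneg_right (by linarith) (Real.exp_pos _).le

end StrongLaw

lemma measurePreserving_row_pair_gaussianMatrix {ι : Type*} [Fintype ι] (q : ℕ) {a b : ι}
    (hab : a ≠ b) :
    MeasurePreserving (fun (x : ι → Fin q → ℝ) α => (x a α, x b α)) (gaussianMatrix ι (Fin q))
      (Measure.pi fun _ => (gaussianReal 0 1).prod (gaussianReal 0 1)) := by
  have hrow : ∀ c : ι, HasLaw (fun x : ι → Fin q → ℝ => x c) (gaussianVector (Fin q))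
      (gaussianMatrix ι (Fin q)) := fun c =>
    (measurePreserving_eval (fun _ : ι => gaussianVector (Fin q)) c).hasLaw
  have hindep : iIndepFun (fun (c : ι) (x : ι → Fin q → ℝ) => x c) (gaussianMatrix ι (Fin q)) :=
    iIndepFun_pi (X := fun _ x => x) fun _ => aemeasurable_id
  have hpair := (indepFun_iff_hasLaw_prodMk_prod (hrow a) (hrow b)).mp (hindep.indepFun hab)
  exact (measurePreserving_arrowProdEquivProdArrow ℝ ℝ (Fin q) (fun _ => gaussianReal 0 1)
    (fun _ => gaussianReal 0 1)).symm.comp (hpair.measurePreserving (by fun_prop))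

/-- The weighted Gram matrix `n⁻¹ R diag(w) Rᵀ` of the rows of `R`, normalised by the sample
size `n`. -/
def scaledGram {ι κ : Type*} [Fintype κ] [DecidableEq κ] (n : ℕ) (R : Matrix ι κ ℝ) (w : κ → ℝ) :
    Matrix ι ι ℝ :=
  (n : ℝ)⁻¹ • (R * diagonal w * Rᵀ)

section ScaledGram

variable {ι κ : Type*} [Fintype κ] [DecidableEq κ]

omit [Fintype κ] [DecidableEq κ] in
lemma tendsto_matrix_iff {α : Type*} {l : Filter α} {A : α → Matrix ι κ ℝ} {B : Matrix ι κ ℝ} :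
    Tendsto A l (𝓝 B) ↔ ∀ i j, Tendsto (fun x => A x i j) l (𝓝 (B i j)) :=
  tendsto_pi_nhds.trans (forall_congr' fun _ => tendsto_pi_nhds)

lemma scaledGram_apply (n : ℕ) (R : Matrix ι κ ℝ) (w : κ → ℝ) (a b : ι) :
    scaledGram n R w a b = (∑ α, w α * (R a α * R b α)) / n := by
  rw [scaledGram, Matrix.smul_apply, mul_apply, smul_eq_mul, div_eq_inv_mul]
  congr 1
  refine Finset.sum_congr rfl fun α _ => ?_
  rw [mul_diagonal, transpose_apply]
  ring

variable {Ω : Type*} {Z : ℕ → Type*} [MeasurableSpace Ω] [∀ n, MeasurableSpace (Z n)]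
  {P : Measure Ω} [Fintype ι] [DecidableEq ι] {q : ℕ → ℕ} {R : ∀ n, Ω → ι → Fin (q n) → ℝ}

lemma ae_tendsto_scaledGram {ν : ∀ n, Measure (Z n)} [∀ n, IsProbabilityMeasure (ν n)] {C K : ℝ}
    (hC : 0 < C) (hK : 0 < K) (hq : ∀ᶠ n in atTop, (q n : ℝ) ≤ C * n) {W : ∀ n, Ω → Z n}
    (hlaw : ∀ n, HasLaw (fun ω => (R n ω, W n ω)) ((gaussianMatrix ι (Fin (q n))).prod (ν n)) P)
    {L : ∀ n, Z n → Fin (q n) → ℝ} (hLm : ∀ n α, Measurable fun w => L n w α)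
    (hL : ∀ n w α, |L n w α| ≤ K) :
    ∀ᵐ ω ∂P, ∀ l : ℝ, Tendsto (fun n : ℕ => (∑ α, L n (W n ω) α) / (n : ℝ)) atTop (𝓝 l) →
      Tendsto (fun n => scaledGram n (R n ω) (L n (W n ω))) atTop (𝓝 (l • 1)) := by
  have hdiag : ∀ a, ∀ᵐ ω ∂P, Tendsto (fun n : ℕ =>
      (∑ α, L n (W n ω) α * (R n ω a α ^ 2 - 1)) / (n : ℝ)) atTop (𝓝 0) := fun a =>
    ae_tendsto_weighted_sum_div hasSubexponentialMGF_sq_sub_one hC hK hq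
      (fun n => ((measurePreserving_eval _ a).prod (.id (ν n))).fun_comp_hasLaw (hlaw n)) hLm hL
  have hoff : ∀ a b, a ≠ b → ∀ᵐ ω ∂P, Tendsto (fun n : ℕ =>
      (∑ α, L n (W n ω) α * (R n ω a α * R n ω b α)) / (n : ℝ)) atTop (𝓝 0) := fun a b hab =>
    ae_tendsto_weighted_sum_div (X := fun n ω α => (R n ω a α, R n ω b α)) hasSubexponentialMGF_mul
      hC hK hq (fun n => ((measurePreserving_row_pair_gaussianMatrix (q n) hab).prod
        (.id (ν n))).fun_comp_hasLaw (hlaw n)) hLm hL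
  filter_upwards [ae_all_iff.mpr hdiag, ae_all_iff.mpr fun a => ae_all_iff.mpr fun b =>
    Filter.eventually_all.mpr (hoff a b)] with ω hdiag hoff l hl
  refine tendsto_matrix_iff.mpr fun a b =>
    Tendsto.congr (fun n => (scaledGram_apply n (R n ω) (L n (W n ω)) a b).symm) ?_
  rcases eq_or_ne a b with rfl | hab
  · have hsum := (hdiag a).add hl
    rw [zero_add] at hsum
    simp only [Matrix.smul_apply, one_apply_eq, smul_eq_mul, mul_one]
    refine hsum.congr fun n => ?_
    rw [← add_div, ← Finset.sum_add_distrib]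
    congr 1
    exact Finset.sum_congr rfl fun α _ => by ring
  · simpa [one_apply_ne hab] using hoff a b hab

lemma ae_tendsto_scaledGram_one {l : ℝ} (hq : Tendsto (fun n => (q n : ℝ) / n) atTop (𝓝 l))
    (hlaw : ∀ n, HasLaw (R n) (gaussianMatrix ι (Fin (q n))) P) :
    ∀ᵐ ω ∂P, Tendsto (fun n => scaledGram n (R n ω) 1) atTop (𝓝 (l • 1)) := by
  have hbound : ∀ᶠ n : ℕ in atTop, (q n : ℝ) ≤ (|l| + 1) * n := by
    have hlt : l < |l| + 1 := (le_abs_self l).trans_lt (lt_add_one _)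
    filter_upwards [hq.eventually (gt_mem_nhds hlt), eventually_gt_atTop 0] with n hn hn0
    exact ((div_lt_iff₀ (Nat.cast_pos.mpr hn0)).mp hn).le
  have hpair : ∀ n, HasLaw (fun ω => (R n ω, ()))
      ((gaussianMatrix ι (Fin (q n))).prod (Measure.dirac ())) P := fun n =>
    HasLaw.fun_comp (Y := fun x => (x, ())) ⟨by fun_prop, (Measure.prod_dirac ()).symm⟩ (hlaw n)
  filter_upwards [ae_tendsto_scaledGram (by positivity) one_pos hbound hpair
    (L := fun _ _ _ => 1) (fun _ _ => measurable_const) (fun _ _ _ => abs_one.le)] with ω hω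
  exact hω l (by simpa using hq)

end ScaledGram

namespace BlockModel

variable {k : ℕ} {γ : ℝ} {p : ℕ → ℕ} {Ω : Type*} [MeasurableSpace Ω] {P : Measure Ω}
  {μ : Fin k → ℝ}

/-- The rows of `E_{n,12}` followed by the columns of `E_{n,21}`: the `2k` Gaussian vectors that
interact with `Λ_n` in `T_n`. -/
def noiseRows (M : BlockModel k γ p Ω P μ) (n : ℕ) (ω : Ω) :
    Matrix (Fin k ⊕ Fin k) (Fin (p n - k)) ℝ :=
  fromRows (M.E12 n ω) (M.E21 n ω)ᵀ

lemma hasLaw_noiseRows_W [IsProbabilityMeasure P] (M : BlockModel k γ p Ω P μ) (n : ℕ) :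
    HasLaw (fun ω => (M.noiseRows n ω, M.W n ω))
      ((gaussianMatrix (Fin k ⊕ Fin k) (Fin (p n - k))).prod
        (gaussianMatrix (Fin (n - k)) (Fin (p n - k))) :
          Measure ((Fin k ⊕ Fin k → Fin (p n - k) → ℝ) × (Fin (n - k) → Fin (p n - k) → ℝ))) P := by
  have hE21W := (indepFun_iff_hasLaw_prodMk_prod (M.E21gauss n).hasLaw_matrix
    (M.Wgauss n).hasLaw_matrix).mp ((M.indep4 n).comp measurable_id measurable_snd)
  have hjoint := (indepFun_iff_hasLaw_prodMk_prod (M.E12gauss n).hasLaw_matrix hE21W).mp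
    ((M.indep3 n).comp measurable_id
      (measurable_fst.prodMk (measurable_snd.comp measurable_snd)))
  have hstack := (measurePreserving_sumPiEquivProdPi_symm
      (fun _ : Fin k ⊕ Fin k => gaussianVector (Fin (p n - k)))).comp
    ((MeasurePreserving.id _).prod
      (measurePreserving_transpose_gaussianMatrix (Fin (p n - k)) (Fin k)))
  have h := ((hstack.prod (.id _)).comp (measurePreserving_prodAssoc _ _ _).symm).fun_comp_hasLaw
    hjoint
  refine h.congr (Eventually.of_forall fun ω => Prod.ext ?_ rfl)
  funext i
  cases i <;> rfl

lemma ae_tendsto_scaledGram_noiseRows [IsProbabilityMeasure P] (M : BlockModel k γ p Ω P μ)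
    (hγ : 1 ≤ γ) {B : ℝ} (hB : bGamma γ < B) {f : ℝ → ℝ} (hf : Measurable f)
    (hfB : ContinuousOn f (Set.Icc 0 B)) :
    ∀ᵐ ω ∂P, Tendsto (fun n => scaledGram n (M.noiseRows n ω) fun α => f (M.lam n ω α)) atTop
      (𝓝 ((γ⁻¹ * ∫ x, f x ∂(mpMeasure γ)) • 1)) := by
  obtain ⟨K, hK⟩ := isCompact_Icc.exists_bound_of_continuousOn hfB
  set weight : ∀ n, (Fin (n - k) → Fin (p n - k) → ℝ) → Fin (p n - k) → ℝ := fun n V α =>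
    (Set.Icc 0 B).indicator f (ithEigDesc ((of V)ᵀ * of V) α / n) with hweight
  have hmeas : ∀ n α, Measurable fun V => weight n V α := fun n α =>
    (hf.indicator measurableSet_Icc).comp
      ((measurable_ithEigDesc_transpose_mul_self α).div_const (n : ℝ))
  have hbound : ∀ n V α, |weight n V α| ≤ max K 1 := fun n V α => by
    rw [hweight]
    simp only [Set.indicator_apply]
    split_ifs with h
    · exact (hK _ h).trans (le_max_left _ _)
    · simp
  filter_upwards [ae_tendsto_scaledGram two_pos (by positivity) (M.eventually_natCast_p_sub_le hγ)
    (Z := fun n => Fin (n - k) → Fin (p n - k) → ℝ) M.hasLaw_noiseRows_W hmeas hbound,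
    M.ae_eventually_lam_mem_Icc (by linarith) hB,
    M.ae_tendsto_spectral_average hγ hB] with ω hgram hmem haverage
  have hagree : ∀ᶠ n in atTop, weight n (M.W n ω) = fun α => f (M.lam n ω α) := by
    filter_upwards [hmem, eventually_gt_atTop 0] with n hn hn0
    funext α
    have hα := hn α
    rw [M.lam_eq hn0] at hα ⊢
    exact Set.indicator_of_mem hα f
  refine (hgram _ ((haverage f hfB).congr' ?_)).congr' ?_
  · filter_upwards [hagree] with n hn
    rw [hn]
  · filter_upwards [hagree] with n hn
    rw [hn]

lemma ae_tendsto_scaledGram_transpose_E31 (M : BlockModel k γ p Ω P μ) (hγ : 1 ≤ γ) :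
    ∀ᵐ ω ∂P, Tendsto (fun n => scaledGram n (M.E31 n ω)ᵀ 1) atTop (𝓝 ((1 - γ⁻¹) • 1)) :=
  ae_tendsto_scaledGram_one (M.tendsto_natCast_sub_p_div hγ) fun n =>
    (measurePreserving_transpose_gaussianMatrix _ _).fun_comp_hasLaw (M.E31gauss n).hasLaw_matrix

lemma ae_tendsto_E11_div_sqrt (M : BlockModel k γ p Ω P μ) :
    ∀ᵐ ω ∂P, Tendsto (fun n : ℕ => (1 / √(n : ℝ)) • M.E11 n ω) atTop (𝓝 0) := by
  filter_upwards [ae_tendsto_scaledGram_one (tendsto_const_div_atTop_nhds_zero_nat (k : ℝ))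
    fun n => (M.E11gauss n).hasLaw_matrix] with ω hω
  refine tendsto_matrix_iff.mpr fun a b => ?_
  have hdiag : Tendsto (fun n => scaledGram n (M.E11 n ω) 1 a a) atTop (𝓝 0) := by
    simpa using tendsto_matrix_iff.mp hω a a
  have hsqrt := (Real.continuous_sqrt.tendsto 0).comp hdiag
  rw [Real.sqrt_zero] at hsqrt
  refine squeeze_zero_norm (fun n => Real.abs_le_sqrt ?_) hsqrt
  rw [scaledGram_apply, Matrix.smul_apply, smul_eq_mul, mul_pow, div_pow, one_pow,
    Real.sq_sqrt (Nat.cast_nonneg n), div_mul_eq_mul_div, one_mul]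
  gcongr
  simp only [Pi.one_apply, one_mul, ← sq]
  exact Finset.single_le_sum (f := fun α => M.E11 n ω a α ^ 2) (fun α _ => sq_nonneg _)
    (Finset.mem_univ b)

end BlockModel

/-! ### The quadratic forms at the random spectral parameter -/

lemma abs_scaledGram_apply_sub_le {ι κ : Type*} [Fintype κ] [DecidableEq κ] (n : ℕ)
    (R : Matrix ι κ ℝ) {w w' : κ → ℝ} {ε : ℝ} (hw : ∀ α, |w α - w' α| ≤ ε) (a b : ι) :
    |scaledGram n R w a b - scaledGram n R w' a b|
      ≤ ε * (scaledGram n R 1 a a + scaledGram n R 1 b b) := by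
  simp only [scaledGram_apply, Pi.one_apply, one_mul]
  rw [← sub_div, ← Finset.sum_sub_distrib, ← add_div, ← Finset.sum_add_distrib, ← mul_div_assoc,
    Finset.mul_sum, abs_div, Nat.abs_cast]
  gcongr
  refine (Finset.abs_sum_le_sum_abs _ _).trans (Finset.sum_le_sum fun α _ => ?_)
  have hamgm : |R a α * R b α| ≤ R a α * R a α + R b α * R b α := by
    rw [abs_le]
    constructor <;> nlinarith [sq_nonneg (R a α + R b α), sq_nonneg (R a α - R b α)]
  rw [← sub_mul, abs_mul]
  exact mul_le_mul (hw α) hamgm (abs_nonneg _) ((abs_nonneg _).trans (hw α))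

lemma tendsto_scaledGram_of_tendstoUniformlyOn {ι : Type*} {κ : ℕ → Type*} [∀ n, Fintype (κ n)]
    [∀ n, DecidableEq (κ n)] {R : ∀ n, Matrix ι (κ n) ℝ} {lam : ∀ n, κ n → ℝ} {s : Set ℝ}
    {f : ℝ → ℝ} {F : ℕ → ℝ → ℝ} {G L : Matrix ι ι ℝ}
    (hlam : ∀ᶠ n in atTop, ∀ α, lam n α ∈ s) (hF : TendstoUniformlyOn F f atTop s)
    (hG : Tendsto (fun n => scaledGram n (R n) 1) atTop (𝓝 G))
    (hL : Tendsto (fun n => scaledGram n (R n) fun α => f (lam n α)) atTop (𝓝 L)) :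
    Tendsto (fun n => scaledGram n (R n) fun α => F n (lam n α)) atTop (𝓝 L) := by
  rw [tendsto_matrix_iff] at hG hL ⊢
  intro a b
  have hsum : ∀ᶠ n in atTop,
      scaledGram n (R n) 1 a a + scaledGram n (R n) 1 b b < |G a a + G b b| + 1 :=
    ((hG a a).add (hG b b)).eventually_lt_const ((le_abs_self _).trans_lt (lt_add_one _))
  refine (hL a b).congr_dist (Metric.tendsto_nhds.mpr fun ε hε => ?_)
  have hδ : 0 < ε / (|G a a + G b b| + 1) := by positivity
  filter_upwards [hlam, hsum, Metric.tendstoUniformlyOn_iff.mp hF _ hδ] with n hn hsum_n hFn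
  rw [dist_zero_right, Real.norm_of_nonneg dist_nonneg, Real.dist_eq]
  calc _ ≤ ε / (|G a a + G b b| + 1) * (scaledGram n (R n) 1 a a + scaledGram n (R n) 1 b b) :=
        abs_scaledGram_apply_sub_le n (R n) (fun α => (hFn _ (hn α)).le) a b
    _ < ε / (|G a a + G b b| + 1) * (|G a a + G b b| + 1) := by gcongr
    _ = ε := div_mul_cancel₀ _ (by positivity)

lemma tendstoUniformlyOn_mul_sub_inv {B b : ℝ} (hb : B < b) {h : ℝ → ℝ}
    (hh : ContinuousOn h (Set.Icc 0 B)) {z : ℕ → ℝ} (hz : Tendsto z atTop (𝓝 b)) :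
    TendstoUniformlyOn (fun n x => h x * (x - z n)⁻¹) (fun x => h x * (x - b)⁻¹) atTop
      (Set.Icc 0 B) := by
  have hcont : ContinuousOn (Function.uncurry fun w x : ℝ => h x * (x - w)⁻¹)
      (Set.Ioi B ×ˢ Set.Icc 0 B) := by
    refine (hh.comp continuousOn_snd fun w hw => hw.2).mul
      ((continuousOn_snd.sub continuousOn_fst).inv₀ fun w hw => ?_)
    exact sub_ne_zero.mpr (hw.2.2.trans_lt hw.1).ne
  intro u hu
  obtain ⟨v, hv, hvu⟩ := isCompact_Icc.mem_uniformity_of_prod hcont (Set.mem_Ioi.mpr hb)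
    (symm_le_uniformity hu)
  rw [nhdsWithin_eq_nhds.mpr (Ioi_mem_nhds hb)] at hv
  filter_upwards [hz hv] with n hn x hx
  exact hvu (z n) hn x hx

namespace BlockModel

variable {k : ℕ} {γ : ℝ} {p : ℕ → ℕ} {Ω : Type*} [MeasurableSpace Ω] {P : Measure Ω}
  {μ : Fin k → ℝ}

/-- The matrix `n⁻¹ N h(Λ)(Λ - z)⁻¹ Nᵀ` of quadratic forms of the noise rows `N`. Its blocks give
`n⁻¹ E₁₂ (Λ - z)⁻¹ E₁₂ᵀ` and `n⁻¹ E₂₁ᵀ (Λ - z)⁻¹ E₂₁` when `h = 1`, and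
`n⁻¹ E₁₂ (Λ - z)⁻¹ Λ^{1/2} E₂₁` when `h = √·`. -/
def resolventForm (M : BlockModel k γ p Ω P μ) (h : ℝ → ℝ) (n : ℕ) (ω : Ω) (z : ℝ) :
    Matrix (Fin k ⊕ Fin k) (Fin k ⊕ Fin k) ℝ :=
  scaledGram n (M.noiseRows n ω) fun α => h (M.lam n ω α) * (M.lam n ω α - z)⁻¹

lemma ae_tendsto_resolventForm [IsProbabilityMeasure P] (M : BlockModel k γ p Ω P μ)
    (hγ : 1 ≤ γ) {h : ℝ → ℝ} (hh : Continuous h) {b : ℝ} (hb : bGamma γ < b) {z : ℕ → Ω → ℝ}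
    (hz : ∀ᵐ ω ∂P, Tendsto (fun n => z n ω) atTop (𝓝 b)) :
    ∀ᵐ ω ∂P, Tendsto (fun n => M.resolventForm h n ω (z n ω)) atTop
      (𝓝 ((γ⁻¹ * ∫ x, h x * (x - b)⁻¹ ∂(mpMeasure γ)) • 1)) := by
  obtain ⟨B, hγB, hBb⟩ := exists_between hb
  have hcont : ContinuousOn (fun x => h x * (x - b)⁻¹) (Set.Icc 0 B) :=
    hh.continuousOn.mul ((continuousOn_id.sub continuousOn_const).inv₀ fun x hx =>
      sub_ne_zero.mpr (hx.2.trans_lt hBb).ne)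
  filter_upwards [hz, M.ae_eventually_lam_mem_Icc (by linarith) hγB,
    M.ae_tendsto_scaledGram_noiseRows hγ hγB (f := fun _ => 1) measurable_const continuousOn_const,
    M.ae_tendsto_scaledGram_noiseRows hγ hγB (f := fun x => h x * (x - b)⁻¹)
      (hh.measurable.mul (measurable_id.sub_const b).inv) hcont] with ω hzω hlam hone hlim
  exact tendsto_scaledGram_of_tendstoUniformlyOn (R := fun n => M.noiseRows n ω)
    (lam := fun n => M.lam n ω) (f := fun x => h x * (x - b)⁻¹)
    (F := fun n x => h x * (x - z n ω)⁻¹) hlam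
    (tendstoUniformlyOn_mul_sub_inv hBb hh.continuousOn hzω) hone hlim

end BlockModel

/-! ### The Schur complement -/

section Woodbury

variable {ι κ l m 𝕜 : Type*} [Fintype ι] [DecidableEq ι] [Fintype κ] [DecidableEq κ] [CommRing 𝕜]
  {Λ : Matrix κ κ 𝕜} {F : Matrix ι κ 𝕜} {F' : Matrix κ ι 𝕜}

lemma mul_inv_one_add {Q : Matrix ι ι 𝕜} (hQ : IsUnit (1 + Q)) :
    Q * (1 + Q)⁻¹ = 1 - (1 + Q)⁻¹ := by
  have h := mul_nonsing_inv _ ((isUnit_iff_isUnit_det _).mp hQ)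
  rw [Matrix.add_mul, Matrix.one_mul] at h
  exact eq_sub_of_add_eq' h

lemma inv_one_add_mul {Q : Matrix ι ι 𝕜} (hQ : IsUnit (1 + Q)) :
    (1 + Q)⁻¹ * Q = 1 - (1 + Q)⁻¹ := by
  have h := nonsing_inv_mul _ ((isUnit_iff_isUnit_det _).mp hQ)
  rw [Matrix.mul_add, Matrix.mul_one] at h
  exact eq_sub_of_add_eq' h

lemma inv_add_mul_eq_sub (hΛ : IsUnit Λ) (hF : IsUnit (1 + F * Λ⁻¹ * F')) :
    (Λ + F' * F)⁻¹ = Λ⁻¹ - Λ⁻¹ * F' * (1 + F * Λ⁻¹ * F')⁻¹ * F * Λ⁻¹ := by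
  simpa using Matrix.add_mul_mul_inv_eq_sub Λ F' 1 F hΛ isUnit_one (by simpa using hF)

lemma mul_inv_add_mul (hΛ : IsUnit Λ) (hF : IsUnit (1 + F * Λ⁻¹ * F')) :
    F * (Λ + F' * F)⁻¹ = (1 + F * Λ⁻¹ * F')⁻¹ * F * Λ⁻¹ := by
  calc F * (Λ + F' * F)⁻¹
      = F * Λ⁻¹ - F * Λ⁻¹ * F' * (1 + F * Λ⁻¹ * F')⁻¹ * F * Λ⁻¹ := by
        simp only [inv_add_mul_eq_sub hΛ hF, Matrix.mul_sub, Matrix.mul_assoc]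
    _ = (1 + F * Λ⁻¹ * F')⁻¹ * F * Λ⁻¹ := by
        rw [mul_inv_one_add hF]
        simp only [Matrix.sub_mul, Matrix.one_mul, sub_sub_cancel]

lemma inv_add_mul_mul (hΛ : IsUnit Λ) (hF : IsUnit (1 + F * Λ⁻¹ * F')) :
    (Λ + F' * F)⁻¹ * F' = Λ⁻¹ * F' * (1 + F * Λ⁻¹ * F')⁻¹ := by
  calc (Λ + F' * F)⁻¹ * F'
      = Λ⁻¹ * F' - Λ⁻¹ * F' * ((1 + F * Λ⁻¹ * F')⁻¹ * (F * Λ⁻¹ * F')) := by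
        simp only [inv_add_mul_eq_sub hΛ hF, Matrix.sub_mul, Matrix.mul_assoc]
    _ = Λ⁻¹ * F' * (1 + F * Λ⁻¹ * F')⁻¹ := by
        rw [inv_one_add_mul hF, Matrix.mul_sub, Matrix.mul_one, sub_sub_cancel]

/-- The Woodbury identity reduces a Schur complement of the low-rank update `Λ + F'F` to the
matrices `FΛ⁻¹F'`, `FΛ⁻¹H`, `H'Λ⁻¹F'` and `H'Λ⁻¹H` of the small size. -/
lemma mul_sub_mul_inv_add_mul_mul (hΛ : IsUnit Λ) (hF : IsUnit (1 + F * Λ⁻¹ * F'))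
    (A : Matrix ι m 𝕜) (A' : Matrix l ι 𝕜) (H : Matrix κ m 𝕜) (H' : Matrix l κ 𝕜) :
    A' * A - (A' * F + H') * (Λ + F' * F)⁻¹ * (F' * A + H)
      = (A' - H' * Λ⁻¹ * F') * (1 + F * Λ⁻¹ * F')⁻¹ * (A - F * Λ⁻¹ * H) - H' * Λ⁻¹ * H := by
  have hFF : F * (Λ + F' * F)⁻¹ * F' = 1 - (1 + F * Λ⁻¹ * F')⁻¹ := by
    rw [mul_inv_add_mul hΛ hF, Matrix.mul_assoc, Matrix.mul_assoc, ← Matrix.mul_assoc F,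
      inv_one_add_mul hF]
  calc A' * A - (A' * F + H') * (Λ + F' * F)⁻¹ * (F' * A + H)
      = A' * A - A' * (F * (Λ + F' * F)⁻¹ * F') * A - A' * (F * (Λ + F' * F)⁻¹) * H
          - H' * ((Λ + F' * F)⁻¹ * F') * A - H' * (Λ + F' * F)⁻¹ * H := by
        simp only [Matrix.add_mul, Matrix.mul_add, Matrix.mul_assoc]
        abel
    _ = (A' - H' * Λ⁻¹ * F') * (1 + F * Λ⁻¹ * F')⁻¹ * (A - F * Λ⁻¹ * H) - H' * Λ⁻¹ * H := by
        rw [hFF, mul_inv_add_mul hΛ hF, inv_add_mul_mul hΛ hF, inv_add_mul_eq_sub hΛ hF]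
        simp only [Matrix.sub_mul, Matrix.mul_sub, Matrix.mul_one, Matrix.mul_assoc]
        abel

end Woodbury

namespace BlockModel

variable {k : ℕ} {γ : ℝ} {p : ℕ → ℕ} {Ω : Type*} [MeasurableSpace Ω] {P : Measure Ω}
  {μ : Fin k → ℝ}

lemma resolventForm_eq_fromBlocks (M : BlockModel k γ p Ω P μ) (h : ℝ → ℝ) (n : ℕ) (ω : Ω) (z : ℝ)
    (D : Matrix (Fin (p n - k)) (Fin (p n - k)) ℝ)
    (hD : D = diagonal fun α => h (M.lam n ω α) * (M.lam n ω α - z)⁻¹) :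
    M.resolventForm h n ω z = fromBlocks
      ((n : ℝ)⁻¹ • (M.E12 n ω * D * (M.E12 n ω)ᵀ)) ((n : ℝ)⁻¹ • (M.E12 n ω * D * M.E21 n ω))
      ((n : ℝ)⁻¹ • ((M.E21 n ω)ᵀ * D * (M.E12 n ω)ᵀ))
      ((n : ℝ)⁻¹ • ((M.E21 n ω)ᵀ * D * M.E21 n ω)) := by
  rw [resolventForm, scaledGram, noiseRows, ← hD, transpose_fromRows, fromRows_mul,
    fromRows_mul_fromCols, fromBlocks_smul, transpose_transpose]

/-- `D_n + n^{-1/2} E₁₁`, the perturbed signal block of `n^{-1/2} X̃_n`. -/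
def signalBlock (M : BlockModel k γ p Ω P μ) (n : ℕ) (ω : Ω) : Matrix (Fin k) (Fin k) ℝ :=
  diagonal (M.d n ω) + (1 / √(n : ℝ)) • M.E11 n ω

section Blocks

variable (M : BlockModel k γ p Ω P μ) {n : ℕ} (ω : Ω)

lemma one_div_sqrt_smul_smul {E : Type*} [AddCommGroup E] [Module ℝ E] (n : ℕ) (x : E) :
    (1 / √(n : ℝ)) • (1 / √(n : ℝ)) • x = (1 / (n : ℝ)) • x := by
  rw [smul_smul, div_mul_div_comm, one_mul, Real.mul_self_sqrt (Nat.cast_nonneg n)]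

lemma S11_eq : M.S11 n ω = (M.signalBlock n ω)ᵀ * M.signalBlock n ω
    + (1 / (n : ℝ)) • ((M.E21 n ω)ᵀ * M.E21 n ω + (M.E31 n ω)ᵀ * M.E31 n ω) := by
  simp only [S11, signalBlock, transpose_add, transpose_smul, diagonal_transpose, Matrix.add_mul,
    Matrix.mul_add, Matrix.smul_mul, Matrix.mul_smul, smul_add, one_div_sqrt_smul_smul,
    diagonal_mul_diagonal, sq]
  abel

lemma S12_eq : M.S12 n ω = (M.signalBlock n ω)ᵀ * ((1 / √(n : ℝ)) • M.E12 n ω)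
    + (1 / √(n : ℝ)) • ((M.E21 n ω)ᵀ * diagonal fun α => √(M.lam n ω α)) := by
  simp only [S12, signalBlock, transpose_add, transpose_smul, diagonal_transpose, Matrix.add_mul,
    Matrix.smul_mul, Matrix.mul_smul, smul_add, one_div_sqrt_smul_smul]
  abel

lemma S21_eq : M.S21 n ω = ((1 / √(n : ℝ)) • M.E12 n ω)ᵀ * M.signalBlock n ω
    + (1 / √(n : ℝ)) • ((diagonal fun α => √(M.lam n ω α)) * M.E21 n ω) := by
  simp only [S21, signalBlock, transpose_smul, Matrix.mul_add, Matrix.smul_mul, Matrix.mul_smul,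
    smul_add, one_div_sqrt_smul_smul]
  abel

lemma S22_sub_smul_one_eq (z : ℝ) : M.S22 n ω - z • 1 = (diagonal fun α => M.lam n ω α - z)
    + ((1 / √(n : ℝ)) • M.E12 n ω)ᵀ * ((1 / √(n : ℝ)) • M.E12 n ω) := by
  have hdiag : (diagonal fun α => M.lam n ω α - z) = diagonal (M.lam n ω) - z • 1 := by
    rw [smul_one_eq_diagonal, diagonal_sub]
  simp only [S22, hdiag, transpose_smul, Matrix.smul_mul, Matrix.mul_smul, one_div_sqrt_smul_smul]
  abel

section Resolvent

variable {z : ℝ} (hz : ∀ α, M.lam n ω α ≠ z)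
include hz

lemma diagonal_lam_sub_mul_inv :
    (diagonal fun α => M.lam n ω α - z) * (diagonal fun α => (M.lam n ω α - z)⁻¹) = 1 := by
  rw [diagonal_mul_diagonal, ← diagonal_one]
  congr with α
  exact mul_inv_cancel₀ (sub_ne_zero.mpr (hz α))

lemma inv_diagonal_lam_sub :
    (diagonal fun α => M.lam n ω α - z)⁻¹ = diagonal fun α => (M.lam n ω α - z)⁻¹ :=
  inv_eq_right_inv (M.diagonal_lam_sub_mul_inv ω hz)

lemma toBlocks₁₁_resolventForm_one : (M.resolventForm 1 n ω z).toBlocks₁₁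
    = ((1 / √(n : ℝ)) • M.E12 n ω) * (diagonal fun α => M.lam n ω α - z)⁻¹
      * ((1 / √(n : ℝ)) • M.E12 n ω)ᵀ := by
  rw [M.resolventForm_eq_fromBlocks 1 n ω z ((diagonal fun α => M.lam n ω α - z)⁻¹)
      (by simp [M.inv_diagonal_lam_sub ω hz]),
    toBlocks_fromBlocks₁₁]
  simp only [transpose_smul, Matrix.smul_mul, Matrix.mul_smul, one_div_sqrt_smul_smul, ← one_div]

lemma toBlocks₁₂_resolventForm_sqrt : (M.resolventForm (√·) n ω z).toBlocks₁₂
    = ((1 / √(n : ℝ)) • M.E12 n ω) * (diagonal fun α => M.lam n ω α - z)⁻¹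
      * ((1 / √(n : ℝ)) • ((diagonal fun α => √(M.lam n ω α)) * M.E21 n ω)) := by
  rw [M.resolventForm_eq_fromBlocks (√·) n ω z ((diagonal fun α => M.lam n ω α - z)⁻¹
      * diagonal fun α => √(M.lam n ω α)) (by
        rw [M.inv_diagonal_lam_sub ω hz, diagonal_mul_diagonal]
        simp only [mul_comm]), toBlocks_fromBlocks₁₂]
  simp only [Matrix.smul_mul, Matrix.mul_smul, one_div_sqrt_smul_smul, ← one_div, Matrix.mul_assoc]

/-- Entrywise this is `1 - λ / (λ - z) = -z / (λ - z)`. -/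
lemma gram_E21_sub_eq_smul_toBlocks₂₂ (hlam : ∀ α, 0 ≤ M.lam n ω α) :
    (1 / (n : ℝ)) • ((M.E21 n ω)ᵀ * M.E21 n ω)
      - ((1 / √(n : ℝ)) • ((M.E21 n ω)ᵀ * diagonal fun α => √(M.lam n ω α)))
        * (diagonal fun α => M.lam n ω α - z)⁻¹
        * ((1 / √(n : ℝ)) • ((diagonal fun α => √(M.lam n ω α)) * M.E21 n ω))
      = -(z • (M.resolventForm 1 n ω z).toBlocks₂₂) := by
  have hmid : (1 : Matrix (Fin (p n - k)) (Fin (p n - k)) ℝ)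
      - (diagonal fun α => √(M.lam n ω α)) * (diagonal fun α => M.lam n ω α - z)⁻¹
        * (diagonal fun α => √(M.lam n ω α))
      = -(z • (diagonal fun α => M.lam n ω α - z)⁻¹) := by
    rw [M.inv_diagonal_lam_sub ω hz, diagonal_mul_diagonal, diagonal_mul_diagonal, ← diagonal_one,
      diagonal_sub, ← diagonal_smul, diagonal_neg]
    congr with α
    have hne := sub_ne_zero.mpr (hz α)
    simp only [Pi.smul_apply, smul_eq_mul]
    field_simp
    rw [Real.sq_sqrt (hlam α)]
    ring
  rw [M.resolventForm_eq_fromBlocks 1 n ω z ((diagonal fun α => M.lam n ω α - z)⁻¹)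
      (by simp [M.inv_diagonal_lam_sub ω hz]),
    toBlocks_fromBlocks₂₂, smul_comm, ← smul_neg, ← one_div (n : ℝ)]
  have hsandwich : -(z • ((M.E21 n ω)ᵀ * (diagonal fun α => M.lam n ω α - z)⁻¹ * M.E21 n ω))
      = (M.E21 n ω)ᵀ * (1 - (diagonal fun α => √(M.lam n ω α))
        * (diagonal fun α => M.lam n ω α - z)⁻¹ * (diagonal fun α => √(M.lam n ω α)))
        * M.E21 n ω := by
    rw [hmid]
    simp only [Matrix.mul_neg, Matrix.neg_mul, Matrix.mul_smul, Matrix.smul_mul]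
  rw [hsandwich]
  simp only [Matrix.smul_mul, Matrix.mul_smul, one_div_sqrt_smul_smul, Matrix.mul_sub,
    Matrix.sub_mul, Matrix.mul_one, smul_sub, Matrix.mul_assoc]

lemma T_eq (hlam : ∀ α, 0 ≤ M.lam n ω α)
    (hu : IsUnit (1 + (M.resolventForm 1 n ω z).toBlocks₁₁)) :
    M.T n ω z
      = (M.signalBlock n ω - (M.resolventForm (√·) n ω z).toBlocks₁₂)ᵀ
          * (1 + (M.resolventForm 1 n ω z).toBlocks₁₁)⁻¹
          * (M.signalBlock n ω - (M.resolventForm (√·) n ω z).toBlocks₁₂)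
        + (scaledGram n (M.E31 n ω)ᵀ 1 - z • 1 - z • (M.resolventForm 1 n ω z).toBlocks₂₂) := by
  have hΛ : IsUnit (diagonal fun α => M.lam n ω α - z) :=
    IsUnit.of_mul_eq_one _ (M.diagonal_lam_sub_mul_inv ω hz)
  rw [M.toBlocks₁₁_resolventForm_one ω hz] at hu ⊢
  have hschur := mul_sub_mul_inv_add_mul_mul hΛ hu (M.signalBlock n ω) (M.signalBlock n ω)ᵀ
    ((1 / √(n : ℝ)) • ((diagonal fun α => √(M.lam n ω α)) * M.E21 n ω))
    ((1 / √(n : ℝ)) • ((M.E21 n ω)ᵀ * diagonal fun α => √(M.lam n ω α)))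
  have hcross : ((M.resolventForm (√·) n ω z).toBlocks₁₂)ᵀ
      = ((1 / √(n : ℝ)) • ((M.E21 n ω)ᵀ * diagonal fun α => √(M.lam n ω α)))
        * (diagonal fun α => M.lam n ω α - z)⁻¹ * ((1 / √(n : ℝ)) • M.E12 n ω)ᵀ := by
    rw [M.toBlocks₁₂_resolventForm_sqrt ω hz, M.inv_diagonal_lam_sub ω hz]
    simp only [transpose_mul, transpose_smul, diagonal_transpose, Matrix.mul_assoc,
      Matrix.smul_mul, Matrix.mul_smul]
  rw [← hcross, ← M.toBlocks₁₂_resolventForm_sqrt ω hz, ← transpose_sub] at hschur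
  have hE31 : scaledGram n (M.E31 n ω)ᵀ 1 = (1 / (n : ℝ)) • ((M.E31 n ω)ᵀ * M.E31 n ω) := by
    rw [scaledGram, show (1 : Fin (n - p n) → ℝ) = fun _ => 1 from rfl, diagonal_one,
      Matrix.mul_one, transpose_transpose, one_div]
  calc M.T n ω z
      = (M.signalBlock n ω)ᵀ * M.signalBlock n ω - M.S12 n ω * (M.S22 n ω - z • 1)⁻¹ * M.S21 n ω
          + ((1 / (n : ℝ)) • ((M.E21 n ω)ᵀ * M.E21 n ω) + scaledGram n (M.E31 n ω)ᵀ 1 - z • 1) := by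
        rw [T, S11_eq, smul_add, hE31]
        abel
    _ = _ := by
        rw [S12_eq, S21_eq, S22_sub_smul_one_eq, hschur, ← sub_eq_zero]
        have hE21 := M.gram_E21_sub_eq_smul_toBlocks₂₂ ω hz hlam
        rw [sub_eq_iff_eq_add] at hE21
        rw [hE21]
        abel

end Resolvent

end Blocks

end BlockModel

/-! ### The limit of the secular matrix -/

lemma one_add_smul_one {R A : Type*} [Semiring R] [Semiring A] [Module R A] (c : R) :
    1 + c • (1 : A) = (1 + c) • (1 : A) := by
  rw [add_smul, one_smul]

section MPStieltjes

variable {γ b : ℝ}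

lemma mpStieltjes_ne_zero (hγ : 1 ≤ γ) (hb : bGamma γ < b) : mpStieltjes γ b ≠ 0 := fun h => by
  have hquad := mpStieltjes_quadratic hγ (Or.inr hb)
  simp [h] at hquad

lemma one_add_inv_mul_mpStieltjes_ne_zero (hγ : 1 ≤ γ) (hb : bGamma γ < b) :
    1 + γ⁻¹ * mpStieltjes γ b ≠ 0 := fun h => by
  have hγ0 : γ ≠ 0 := by positivity
  have hm : mpStieltjes γ b = -γ := by
    field_simp at h
    linarith
  have hquad := mpStieltjes_quadratic hγ (Or.inr hb)
  rw [hm] at hquad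
  field_simp at hquad
  exact hγ0 (by linarith)

/-- The Marchenko–Pastur equation identifies the scalar part of the limit with `m(b)⁻¹`. -/
lemma one_sub_inv_sub_eq_inv_mpStieltjes (hγ : 1 ≤ γ) (hb : bGamma γ < b) :
    1 - γ⁻¹ - b - b * (γ⁻¹ * mpStieltjes γ b) = (mpStieltjes γ b)⁻¹ := by
  have hm := mpStieltjes_ne_zero hγ hb
  refine mul_left_cancel₀ hm ?_
  rw [mul_inv_cancel₀ hm]
  linear_combination -mpStieltjes_quadratic hγ (Or.inr hb)

lemma T0lim_eq {k : ℕ} {μ : Fin k → ℝ} (hγ : 1 ≤ γ) (hμ : ∀ j, 0 ≤ μ j) (hb : bGamma γ < b) :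
    (diagonal fun j => √(μ j))ᵀ * (1 + (γ⁻¹ * mpStieltjes γ b) • (1 : Matrix (Fin k) (Fin k) ℝ))⁻¹
        * (diagonal fun j => √(μ j))
      + ((1 - γ⁻¹) • 1 - b • 1 - b • (γ⁻¹ * mpStieltjes γ b) • 1) = T0lim γ μ b := by
  have hinv : (1 + (γ⁻¹ * mpStieltjes γ b) • (1 : Matrix (Fin k) (Fin k) ℝ))⁻¹
      = (1 + γ⁻¹ * mpStieltjes γ b)⁻¹ • 1 := by
    refine inv_eq_right_inv ?_
    rw [one_add_smul_one, smul_mul_smul_comm,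
      mul_inv_cancel₀ (one_add_inv_mul_mpStieltjes_ne_zero hγ hb), one_smul, Matrix.one_mul]
  have hsqrt : (diagonal fun j => √(μ j)) * (diagonal fun j => √(μ j)) = diagonal μ := by
    simp only [diagonal_mul_diagonal, Real.mul_self_sqrt (hμ _)]
  rw [hinv, T0lim, diagonal_transpose, Matrix.mul_smul, Matrix.mul_one, Matrix.smul_mul, hsqrt,
    smul_smul, ← sub_smul, ← sub_smul, one_sub_inv_sub_eq_inv_mpStieltjes hγ hb]

end MPStieltjes

namespace BlockModel

variable {k : ℕ} {γ : ℝ} {p : ℕ → ℕ} {Ω : Type*} [MeasurableSpace Ω] {P : Measure Ω}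
  {μ : Fin k → ℝ}

lemma ae_tendsto_signalBlock (M : BlockModel k γ p Ω P μ) :
    ∀ᵐ ω ∂P, Tendsto (fun n => M.signalBlock n ω) atTop (𝓝 (diagonal fun j => √(μ j))) := by
  filter_upwards [M.dconv, M.ae_tendsto_E11_div_sqrt] with ω hd hE
  have hdiag : Tendsto (fun n => diagonal (M.d n ω)) atTop (𝓝 (diagonal fun j => √(μ j))) :=
    (continuous_id.matrix_diagonal.tendsto _).comp (tendsto_pi_nhds.mpr hd)
  simpa only [signalBlock, add_zero] using hdiag.add hE

lemma ae_tendsto_toBlocks_resolventForm [IsProbabilityMeasure P] (M : BlockModel k γ p Ω P μ)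
    (hγ : 1 ≤ γ) {b : ℝ} (hb : bGamma γ < b) {z : ℕ → Ω → ℝ}
    (hz : ∀ᵐ ω ∂P, Tendsto (fun n => z n ω) atTop (𝓝 b)) :
    ∀ᵐ ω ∂P,
      Tendsto (fun n => (M.resolventForm 1 n ω (z n ω)).toBlocks₁₁) atTop
        (𝓝 ((γ⁻¹ * mpStieltjes γ b) • 1)) ∧
      Tendsto (fun n => (M.resolventForm 1 n ω (z n ω)).toBlocks₂₂) atTop
        (𝓝 ((γ⁻¹ * mpStieltjes γ b) • 1)) ∧
      Tendsto (fun n => (M.resolventForm (√·) n ω (z n ω)).toBlocks₁₂) atTop (𝓝 0) := by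
  filter_upwards [M.ae_tendsto_resolventForm hγ continuous_one hb hz,
    M.ae_tendsto_resolventForm hγ Real.continuous_sqrt hb hz] with ω hone hsqrt
  have hm : (γ⁻¹ * ∫ x, (1 : ℝ → ℝ) x * (x - b)⁻¹ ∂(mpMeasure γ)) = γ⁻¹ * mpStieltjes γ b := by
    simp [mpStieltjes]
  rw [hm] at hone
  refine ⟨?_, ?_, ?_⟩ <;> refine tendsto_matrix_iff.mpr fun i j => ?_
  · simpa [toBlocks₁₁, Matrix.one_apply] using tendsto_matrix_iff.mp hone (Sum.inl i) (Sum.inl j)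
  · simpa [toBlocks₂₂, Matrix.one_apply] using tendsto_matrix_iff.mp hone (Sum.inr i) (Sum.inr j)
  · simpa [toBlocks₁₂] using tendsto_matrix_iff.mp hsqrt (Sum.inl i) (Sum.inr j)

lemma ae_tendsto_T [IsProbabilityMeasure P] (M : BlockModel k γ p Ω P μ) (hγ : 1 ≤ γ)
    (hμ : ∀ j, 0 ≤ μ j) {b : ℝ} (hb : bGamma γ < b) {z : ℕ → Ω → ℝ}
    (hz : ∀ᵐ ω ∂P, Tendsto (fun n => z n ω) atTop (𝓝 b)) :
    ∀ᵐ ω ∂P, Tendsto (fun n => M.T n ω (z n ω)) atTop (𝓝 (T0lim γ μ b)) := by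
  obtain ⟨B, hγB, hBb⟩ := exists_between hb
  filter_upwards [hz, M.ae_eventually_lam_mem_Icc (by linarith) hγB, M.ae_tendsto_signalBlock,
    M.ae_tendsto_scaledGram_transpose_E31 hγ, M.ae_tendsto_toBlocks_resolventForm hγ hb hz]
    with ω hzω hlam hA hE ⟨hQ₁₁, hQ₂₂, hQ₁₂⟩
  have hdet : ((1 : Matrix (Fin k) (Fin k) ℝ) + (γ⁻¹ * mpStieltjes γ b) • 1).det ≠ 0 := by
    rw [one_add_smul_one, det_smul, det_one, mul_one]
    exact pow_ne_zero _ (one_add_inv_mul_mpStieltjes_ne_zero hγ hb)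
  have hinv := (continuousAt_matrix_inv _ (by
    rw [Ring.inverse_eq_inv']; exact continuousAt_inv₀ hdet)).tendsto.comp (hQ₁₁.const_add 1)
  have hunit : ∀ᶠ n in atTop, IsUnit (1 + (M.resolventForm 1 n ω (z n ω)).toBlocks₁₁) := by
    filter_upwards [((continuous_id.matrix_det.tendsto _).comp (hQ₁₁.const_add 1)).eventually_ne
      hdet] with n hn
    exact (isUnit_iff_isUnit_det _).mpr hn.isUnit
  have hdiff := hA.sub hQ₁₂
  have hlim := (((continuous_id.matrix_transpose.tendsto _).comp hdiff).mul hinv).mul hdiff |>.add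
    ((hE.sub (hzω.smul_const 1)).sub (hzω.smul hQ₂₂))
  rw [sub_zero, id, T0lim_eq hγ hμ hb] at hlim
  refine hlim.congr' ?_
  filter_upwards [hunit, hlam, hzω.eventually (lt_mem_nhds hBb)] with n hu hlam_n hzn
  exact (M.T_eq ω (fun α => ((hlam_n α).2.trans_lt hzn).ne) (fun α => (hlam_n α).1) hu).symm

end BlockModel

/-! ### Kernels of convergent matrices -/

section Kernel

variable {ι : Type*} [Fintype ι]

lemma tendsto_mulVec_zero_of_tendsto {κ : Type*} {T : ℕ → Matrix κ ι ℝ} {A : Matrix κ ι ℝ}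
    (hT : Tendsto T atTop (𝓝 A)) {x : ℕ → ι → ℝ} {C : ℝ} (hx : ∀ n j, |x n j| ≤ C)
    (hsol : ∀ n, T n *ᵥ x n = 0) : Tendsto (fun n => A *ᵥ x n) atTop (𝓝 0) := by
  refine tendsto_pi_nhds.mpr fun i => ?_
  have hbound : Tendsto (fun n => ∑ j, |A i j - T n i j| * C) atTop (𝓝 0) := by
    simpa using tendsto_finsetSum Finset.univ fun j _ =>
      (((tendsto_matrix_iff.mp hT i j).const_sub (A i j)).abs).mul_const C
  refine squeeze_zero_norm (fun n => ?_) hbound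
  calc ‖(A *ᵥ x n) i‖ = ‖((A - T n) *ᵥ x n) i‖ := by rw [sub_mulVec, hsol n, sub_zero]
    _ = |∑ j, (A i j - T n i j) * x n j| := rfl
    _ ≤ ∑ j, |(A i j - T n i j) * x n j| := Finset.abs_sum_le_sum_abs _ _
    _ ≤ ∑ j, |A i j - T n i j| * C := Finset.sum_le_sum fun j _ => by
        rw [abs_mul]
        gcongr
        exact hx n j

variable [DecidableEq ι]

/-- Once the `i`-th entry carries more than half of the squared norm it is the entry of largest
modulus, so the sign convention makes it positive. -/
lemma tendsto_single_of_tendsto_zero_of_ne {x : ℕ → ι → ℝ} {i : ι}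
    (hoff : ∀ j, j ≠ i → Tendsto (fun n => x n j) atTop (𝓝 0)) (hnorm : ∀ n, ∑ j, x n j ^ 2 = 1)
    (hsign : ∀ n, ∃ i₀, ∀ j, |x n j| ≤ x n i₀) : Tendsto x atTop (𝓝 (Pi.single i 1)) := by
  have hrest : Tendsto (fun n => ∑ j ∈ Finset.univ.erase i, x n j ^ 2) atTop (𝓝 0) := by
    simpa using tendsto_finsetSum (Finset.univ.erase i) fun j hj =>
      (hoff j (Finset.ne_of_mem_erase hj)).pow 2
  have hsq : ∀ n, x n i ^ 2 = 1 - ∑ j ∈ Finset.univ.erase i, x n j ^ 2 := fun n => by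
    rw [← hnorm n, ← Finset.add_sum_erase _ _ (Finset.mem_univ i)]
    ring
  have hpos : ∀ᶠ n in atTop, √(x n i ^ 2) = x n i := by
    filter_upwards [hrest.eventually_lt_const one_half_pos] with n hn
    obtain ⟨i₀, hi₀⟩ := hsign n
    obtain rfl : i₀ = i := by
      by_contra hne
      have hle : x n i₀ ^ 2 ≤ ∑ j ∈ Finset.univ.erase i, x n j ^ 2 :=
        Finset.single_le_sum (f := fun j => x n j ^ 2) (fun j _ => sq_nonneg _)
          (Finset.mem_erase.mpr ⟨hne, Finset.mem_univ _⟩)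
      have hmax : x n i ^ 2 ≤ x n i₀ ^ 2 := sq_le_sq.mpr ((hi₀ i).trans (le_abs_self _))
      linarith [hsq n]
    exact Real.sqrt_sq ((abs_nonneg _).trans (hi₀ i₀))
  refine tendsto_pi_nhds.mpr fun j => ?_
  rcases ne_or_eq j i with hj | rfl
  · simpa [Pi.single_eq_of_ne hj] using hoff j hj
  · have hlim := (hrest.const_sub 1).sqrt
    rw [sub_zero, Real.sqrt_one] at hlim
    rw [Pi.single_eq_same]
    exact hlim.congr' (hpos.mono fun n hn => by rw [← hsq, hn])

lemma tendsto_single_of_mulVec_eq_zero {T : ℕ → Matrix ι ι ℝ} {τ : ι → ℝ} {i : ι}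
    (hT : Tendsto T atTop (𝓝 (diagonal τ))) (hτ : ∀ j, j ≠ i → τ j ≠ 0) {x : ℕ → ι → ℝ}
    (hsol : ∀ n, T n *ᵥ x n = 0) (hnorm : ∀ n, ∑ j, x n j ^ 2 = 1)
    (hsign : ∀ n, ∃ i₀, ∀ j, |x n j| ≤ x n i₀) : Tendsto x atTop (𝓝 (Pi.single i 1)) := by
  have hbound : ∀ n j, |x n j| ≤ 1 := fun n j => (sq_le_one_iff_abs_le_one _).mp <|
    hnorm n ▸ Finset.single_le_sum (f := fun j => x n j ^ 2) (fun l _ => sq_nonneg _)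
      (Finset.mem_univ j)
  refine tendsto_single_of_tendsto_zero_of_ne (fun j hj => ?_) hnorm hsign
  have hlim := (tendsto_pi_nhds.mp (tendsto_mulVec_zero_of_tendsto hT hbound hsol) j).const_mul
    (τ j)⁻¹
  simpa [mulVec_diagonal, inv_mul_cancel_left₀ (hτ j hj)] using hlim

end Kernel

lemma T0lim_eq_diagonal {k : ℕ} (γ : ℝ) (μ : Fin k → ℝ) (z : ℝ) :
    T0lim γ μ z
      = diagonal fun j => (1 + γ⁻¹ * mpStieltjes γ z)⁻¹ * μ j + (mpStieltjes γ z)⁻¹ := by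
  rw [T0lim, smul_one_eq_diagonal, ← diagonal_smul, diagonal_add]
  rfl

/-- With `m = -(a + γ⁻¹)⁻¹`, the diagonal entry `(1 + γ⁻¹ m)⁻¹ c + m⁻¹` of `T0lim` equals
`(a + γ⁻¹) (c / a - 1)`. -/
lemma T0lim_entry_ne_zero {γ a c m : ℝ} (hγ : 0 < γ) (ha : 0 < a) (hm : m = -(a + γ⁻¹)⁻¹)
    (hc : c ≠ a) : (1 + γ⁻¹ * m)⁻¹ * c + m⁻¹ ≠ 0 := by
  have hfactor : (1 + γ⁻¹ * m)⁻¹ * c + m⁻¹ = (a + γ⁻¹) * a⁻¹ * (c - a) := by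
    have hα : 1 + γ⁻¹ * m = (a + γ⁻¹)⁻¹ * a := by
      rw [hm]
      field_simp
      ring
    rw [hα, hm]
    field_simp
    ring
  rw [hfactor]
  exact mul_ne_zero (by positivity) (sub_ne_zero.mpr hc)

theorem secular_solution_vector_converges_general
    {k : ℕ} {γ : ℝ} (hγ : 1 ≤ γ)
    {p : ℕ → ℕ} {Ω : Type*} [MeasurableSpace Ω] {P : Measure Ω} [IsProbabilityMeasure P]
    {μ : Fin k → ℝ} (M : BlockModel k γ p Ω P μ) (hμ : ∀ j, 0 ≤ μ j)
    (i : Fin k) (hdistinct : ∀ j, j ≠ i → μ j ≠ μ i)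
    (μbar : ℝ) (hμbar₁ : bGamma γ < μbar)
    (hμbar₂ : mpStieltjes γ μbar = -(μ i + γ⁻¹)⁻¹)
    (z : ℕ → Ω → ℝ) (x : ℕ → Ω → Fin k → ℝ)
    (hsol : ∀ n ω, M.T n ω (z n ω) *ᵥ x n ω = 0)
    (hnorm : ∀ n ω, ∑ j, x n ω j ^ 2 = 1)
    (hid : ∀ n ω, ∃ i₀, ∀ j, |x n ω j| ≤ x n ω i₀)
    (hz : ∀ᵐ ω ∂P, Tendsto (fun n => z n ω) atTop (𝓝 μbar)) :
    ∀ᵐ ω ∂P, ∀ j, Tendsto (fun n => x n ω j) atTop (𝓝 ((Pi.single i 1 : Fin k → ℝ) j)) := by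
  have hμi : 0 < μ i := (hμ i).lt_of_ne' fun h =>
    one_add_inv_mul_mpStieltjes_ne_zero hγ hμbar₁ (by
      rw [hμbar₂, h]
      field_simp
      simp)
  filter_upwards [M.ae_tendsto_T hγ hμ hμbar₁ hz] with ω hT
  rw [T0lim_eq_diagonal] at hT
  refine tendsto_pi_nhds.mp (tendsto_single_of_mulVec_eq_zero hT (fun j hj => ?_)
    (fun n => hsol n ω) (fun n => hnorm n ω) fun n => hid n ω)
  exact T0lim_entry_ne_zero (by linarith) hμi hμbar₂ (hdistinct j hj)

/-- Fix `i` with `μ_i > γ^{-1/2}` and `μ_i ≠ μ_j` for `j ≠ i`. If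
`(z_{n,i}, x_{n,i})` solve the secular equation `T_n(z_{n,i}) x_{n,i} = 0` with
`‖x_{n,i}‖₂ = 1` and the sign-identifiability condition `max_j x_j = max_j |x_j|`, and
`z_{n,i} → μ̄_i` almost surely, then `x_{n,i} → e_i` almost surely. -/
theorem secular_solution_vector_converges
    {k : ℕ} (hk : 1 ≤ k) {γ : ℝ} (hγ : 1 ≤ γ)
    {p : ℕ → ℕ} {Ω : Type*} [MeasurableSpace Ω] {P : Measure Ω} [IsProbabilityMeasure P]
    {μ : Fin k → ℝ} (M : BlockModel k γ p Ω P μ)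
    (hd : ∀ n ω, StrictAnti (M.d n ω))
    (hμanti : StrictAnti μ) (hμpos : ∀ i, 0 < μ i)
    (i : Fin k) (hi : 1 / Real.sqrt γ < μ i)
    (hdistinct : ∀ j, j ≠ i → μ j ≠ μ i)
    (μbar : ℝ) (hμbar₁ : bGamma γ < μbar)
    (hμbar₂ : mpStieltjes γ μbar = -(μ i + γ⁻¹)⁻¹)
    (z : ℕ → Ω → ℝ) (x : ℕ → Ω → Fin k → ℝ)
    (hsol : ∀ n ω, M.T n ω (z n ω) *ᵥ x n ω = 0)
    (hnorm : ∀ n ω, ∑ j, x n ω j ^ 2 = 1)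
    (hid : ∀ n ω, ∃ i₀, ∀ j, |x n ω j| ≤ x n ω i₀)
    (hz : ∀ᵐ ω ∂P, Tendsto (fun n => z n ω) atTop (𝓝 μbar)) :
    ∀ᵐ ω ∂P, ∀ j, Tendsto (fun n => x n ω j) atTop (𝓝 ((Pi.single i 1 : Fin k → ℝ) j)) := by
  exact secular_solution_vector_converges_general hγ M (fun j => (hμpos j).le) i hdistinct μbar
    hμbar₁ hμbar₂ z x hsol hnorm hid hz
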